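/- arXiv:1309.7833 — 3 statements merged into one kernel-verified Lean document; each statement's English description precedes it below -/
import Mathlib

section
/- Fix T > 0, S₀ > 0, t ∈ [0,T], j ∈ {0,1}, and y, z ∈ ℂ with Re y = Re z = R. With κ, κ̄, η as defined, put ρ_j(λ; y, z) := η(λ,y) + η(λ,z) − j·κ(λ,1)²/κ̄(λ;1,1), β(λ; y, z) := κ̄(λ;y,z) − κ̄(λ;y,1)·κ̄(λ;z,1)/κ̄(λ;1,1), and J_j(λ) := S₀^{y+z}·β(λ;y,z)·e^{κ(λ,y+z)t + ρ_j(λ;y,z)(T−t)}. Then λ ↦ J_j(λ) is twice differentiable on [0,1], J_j(0) = 0, J_j'(0) = 0, and J_j''(0) = ½σ⁴·(s₄ − s₃²)·e^{−j·((μ+½σ²)²/σ²)·(T−t)}·S₀^{y+z}·e^{κ(0,y+z)t}·e^{½σ²(y(y−1)+z(z−1))(T−t)}·y(y−1)z(z−1), where s₃ := (∫x³K(dx))/σ³ and s₄ := (∫x⁴K(dx))/σ⁴. -/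
open MeasureTheory Complex Set

/-- Cumulant generating function `κ(λ, z)` of the interpolating family. -/
noncomputable def kappa (μ c : ℝ) (K : Measure ℝ) (lam : ℝ) (z : ℂ) : ℂ :=
  if lam = 0 then (μ : ℂ) * z + (((c + ∫ x : ℝ, x ^ 2 ∂K) : ℝ) : ℂ) / 2 * z ^ 2
  else (μ : ℂ) * z + (c : ℂ) / 2 * z ^ 2 +
    ((lam : ℂ) ^ 2)⁻¹ *
      ∫ x : ℝ, (Complex.exp ((lam : ℂ) * z * (x : ℂ)) - 1 - (lam : ℂ) * z * (x : ℂ)) ∂K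

noncomputable def kbar (μ c : ℝ) (K : Measure ℝ) (lam : ℝ) (y z : ℂ) : ℂ :=
  kappa μ c K lam (y + z) - kappa μ c K lam y - kappa μ c K lam z

noncomputable def gamLK (μ c : ℝ) (K : Measure ℝ) (lam : ℝ) (z : ℂ) : ℂ :=
  kbar μ c K lam z 1 / kbar μ c K lam 1 1

noncomputable def etaLK (μ c : ℝ) (K : Measure ℝ) (lam : ℝ) (z : ℂ) : ℂ :=
  kappa μ c K lam z - kappa μ c K lam 1 * gamLK μ c K lam z

noncomputable def cpowR (s : ℝ) (z : ℂ) : ℂ := Complex.exp (z * Real.log s)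

open Filter Topology

lemma aux_exp1 (w : ℂ) : ‖Complex.exp w - 1‖ ≤ ‖w‖ * (1 + Real.exp w.re) := by
  have h := norm_image_sub_le_of_norm_deriv_le_segment_01' (f := fun t : ℝ => Complex.exp (t * w))
    (f' := fun t : ℝ => Complex.exp (t * w) * w) (C := ‖w‖ * (1 + Real.exp w.re)) ?_ ?_
  · simpa using h
  · intro t _
    have h1 : HasDerivAt (fun u : ℂ => Complex.exp (u * w)) (Complex.exp ((t : ℂ) * w) * (1 * w)) (t : ℂ) :=
      ((hasDerivAt_id (t : ℂ)).mul_const w).cexp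
    rw [one_mul] at h1
    exact h1.comp_ofReal.hasDerivWithinAt
  · intro t ht
    rw [norm_mul, Complex.norm_exp, mul_comm]
    gcongr
    simp only [Complex.re_ofReal_mul]
    rcases le_total w.re 0 with h | h
    · have : Real.exp (t * w.re) ≤ 1 := by
        rw [Real.exp_le_one_iff]; exact mul_nonpos_of_nonneg_of_nonpos ht.1 h
      linarith [Real.exp_pos w.re]
    · have : Real.exp (t * w.re) ≤ Real.exp w.re := by
        rw [Real.exp_le_exp]; nlinarith [ht.2]
      linarith

lemma aux_exp2 (w : ℂ) : ‖Complex.exp w - 1 - w‖ ≤ ‖w‖ ^ 2 * (2 + Real.exp w.re) := by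
  have h := norm_image_sub_le_of_norm_deriv_le_segment_01'
    (f := fun t : ℝ => Complex.exp (t * w) - t * w)
    (f' := fun t : ℝ => Complex.exp (t * w) * w - w) (C := ‖w‖ ^ 2 * (2 + Real.exp w.re)) ?_ ?_
  · have e : Complex.exp w - 1 - w = Complex.exp w - w - 1 := by ring
    rw [e]
    simpa using h
  · intro t _
    have h1 : HasDerivAt (fun u : ℂ => Complex.exp (u * w) - u * w)
        (Complex.exp ((t : ℂ) * w) * (1 * w) - 1 * w) (t : ℂ) :=
      ((hasDerivAt_id (t : ℂ)).mul_const w).cexp.sub ((hasDerivAt_id (t : ℂ)).mul_const w)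
    rw [one_mul] at h1
    exact h1.comp_ofReal.hasDerivWithinAt
  · intro t ht
    have e : Complex.exp (t * w) * w - w = w * (Complex.exp (t * w) - 1) := by ring
    rw [e, norm_mul, pow_two, mul_assoc]
    gcongr
    refine (aux_exp1 _).trans ?_
    rw [norm_mul, Complex.norm_real, Real.norm_eq_abs, abs_of_nonneg ht.1]
    simp only [Complex.re_ofReal_mul]
    have h3 : Real.exp (t * w.re) ≤ 1 + Real.exp w.re := by
      rcases le_total w.re 0 with h | h
      · have : Real.exp (t * w.re) ≤ 1 := by
          rw [Real.exp_le_one_iff]; exact mul_nonpos_of_nonneg_of_nonpos ht.1 h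
        linarith [Real.exp_pos w.re]
      · have : Real.exp (t * w.re) ≤ Real.exp w.re := by
          rw [Real.exp_le_exp]; nlinarith [ht.2]
        linarith
    have h4 : t * ‖w‖ ≤ ‖w‖ := by nlinarith [ht.2, norm_nonneg w]
    have := Real.exp_pos (t * w.re)
    exact mul_le_mul h4 (by linarith) (by positivity) (norm_nonneg _)

lemma aux_int (K : Measure ℝ) (a b : ℝ)
    (hKmin : ∫⁻ x : ℝ, ENNReal.ofReal (min 1 (x ^ 2)) ∂K ≠ ⊤)
    (hKexp : ∀ s ∈ Set.Ioo a b,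
      ∫⁻ x in {x : ℝ | 1 ≤ |x|}, ENNReal.ofReal (Real.exp (s * x)) ∂K ≠ ⊤)
    (s : ℝ) (hs : s ∈ Set.Ioo a b) : Integrable (fun x : ℝ => x ^ 2 * Real.exp (s * x)) K := by
  have hA : Integrable (fun x : ℝ => min 1 (x ^ 2)) K := by
    refine ⟨by fun_prop, ?_⟩
    rw [hasFiniteIntegral_iff_ofReal (Eventually.of_forall fun x => by positivity)]
    exact lt_top_iff_ne_top.2 hKmin
  have hm : MeasurableSet {x : ℝ | 1 ≤ |x|} := measurableSet_le measurable_const (by fun_prop)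
  have hB : ∀ s ∈ Set.Ioo a b, Integrable
      (fun x : ℝ => Set.indicator {x : ℝ | 1 ≤ |x|} (fun x => Real.exp (s * x)) x) K := by
    intro s hs
    rw [integrable_indicator_iff hm]
    refine ⟨by fun_prop, ?_⟩
    rw [hasFiniteIntegral_iff_ofReal (Eventually.of_forall fun x => by positivity)]
    exact lt_top_iff_ne_top.2 (hKexp s hs)
  obtain ⟨ε, hε, h1, h2⟩ : ∃ ε > 0, s + ε ∈ Set.Ioo a b ∧ s - ε ∈ Set.Ioo a b := by
    refine ⟨min (s - a) (b - s) / 2, ?_, ?_, ?_⟩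
    · have := lt_min (sub_pos.2 hs.1) (sub_pos.2 hs.2); positivity
    all_goals
      have h1 := lt_min (sub_pos.2 hs.1) (sub_pos.2 hs.2)
      have h2 := min_le_left (s - a) (b - s)
      have h3 := min_le_right (s - a) (b - s)
      constructor <;> linarith [hs.1, hs.2]
  refine Integrable.mono' ((hA.const_mul (Real.exp |s|)).add
    (((hB _ h1).add (hB _ h2)).const_mul (2 / ε ^ 2))) (by fun_prop) (Eventually.of_forall fun x => ?_)
  rw [Real.norm_eq_abs, abs_of_nonneg (by positivity)]
  simp only [Pi.add_apply]
  by_cases hx : 1 ≤ |x|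
  · have hx' : x ∈ {x : ℝ | 1 ≤ |x|} := hx
    rw [Set.indicator_of_mem hx', Set.indicator_of_mem hx']
    have e1 : Real.exp ((s + ε) * x) = Real.exp (s * x) * Real.exp (ε * x) := by
      rw [← Real.exp_add]; ring_nf
    have e2 : Real.exp ((s - ε) * x) = Real.exp (s * x) * Real.exp (- (ε * x)) := by
      rw [← Real.exp_add]; ring_nf
    rw [e1, e2]
    have key : (ε * x) ^ 2 / 2 ≤ Real.exp (ε * x) + Real.exp (-(ε * x)) := by
      rcases le_total 0 (ε * x) with h | h
      · have := Real.quadratic_le_exp_of_nonneg h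
        have := Real.exp_pos (-(ε * x)); linarith
      · have := Real.quadratic_le_exp_of_nonneg (neg_nonneg.2 h)
        have := Real.exp_pos ((ε * x)); nlinarith
    have h3 : x ^ 2 ≤ 2 / ε ^ 2 * (Real.exp (ε * x) + Real.exp (-(ε * x))) := by
      calc x ^ 2 = 2 / ε ^ 2 * ((ε * x) ^ 2 / 2) := by field_simp
        _ ≤ _ := by gcongr
    have h4 : 0 ≤ Real.exp |s| * min 1 (x ^ 2) := by positivity
    nlinarith [mul_le_mul_of_nonneg_right h3 (Real.exp_pos (s * x)).le]
  · have hx' : x ∉ {x : ℝ | 1 ≤ |x|} := hx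
    rw [Set.indicator_of_notMem hx', Set.indicator_of_notMem hx']
    push Not at hx
    have hx2 : x ^ 2 ≤ 1 := by rw [← sq_abs]; nlinarith [abs_nonneg x]
    rw [min_eq_right hx2]
    have : Real.exp (s * x) ≤ Real.exp |s| := by
      rw [Real.exp_le_exp]
      calc s * x ≤ |s * x| := le_abs_self _
        _ = |s| * |x| := abs_mul _ _
        _ ≤ |s| := by nlinarith [abs_nonneg s]
    nlinarith [sq_nonneg x]

/-- the exponential integral -/
noncomputable def Hfun (K : Measure ℝ) (w : ℂ) : ℂ :=
  ∫ x : ℝ, (Complex.exp (w * (x : ℂ)) - 1 - w * (x : ℂ)) ∂K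

noncomputable def Mfun (K : Measure ℝ) (n : ℕ) (w : ℂ) : ℂ :=
  ∫ x : ℝ, ((x ^ 2 : ℝ) : ℂ) * ((x : ℂ) ^ n * Complex.exp (w * (x : ℂ))) ∂K

lemma Mfun_deriv (K : Measure ℝ) (a b : ℝ)
    (hE : ∀ s ∈ Set.Ioo a b, Integrable (fun x : ℝ => x ^ 2 * Real.exp (s * x)) K)
    (n : ℕ) (w : ℂ) (hw : w.re ∈ Set.Ioo a b) :
    HasDerivAt (Mfun K n) (Mfun K (n + 1) w) w := by
  have hmeas : Measurable (fun x : ℝ => ENNReal.ofReal (x ^ 2)) := by fun_prop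
  have hlt : ∀ᵐ x : ℝ ∂K, ENNReal.ofReal (x ^ 2) < ⊤ :=
    Eventually.of_forall fun x => ENNReal.ofReal_lt_top
  have hI : w.re ∈ interior (ProbabilityTheory.integrableExpSet (fun x : ℝ => x)
      (K.withDensity fun x => ENNReal.ofReal (x ^ 2))) := by
    rw [mem_interior]
    refine ⟨Set.Ioo a b, fun s hs => ?_, isOpen_Ioo, hw⟩
    change Integrable _ _
    rw [integrable_withDensity_iff_integrable_smul' hmeas hlt]
    refine (hE s hs).congr (Eventually.of_forall fun x => ?_)
    simp [ENNReal.toReal_ofReal (sq_nonneg x)]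
  have e : ∀ k (u : ℂ), ∫ x : ℝ, ((x : ℂ) ^ k * Complex.exp (u * (x : ℂ)))
      ∂(K.withDensity fun x => ENNReal.ofReal (x ^ 2)) = Mfun K k u := by
    intro k u
    rw [integral_withDensity_eq_integral_toReal_smul hmeas hlt, Mfun]
    refine integral_congr_ae (Eventually.of_forall fun x => ?_)
    simp [ENNReal.toReal_ofReal (sq_nonneg x)]
  have h := ProbabilityTheory.hasDerivAt_integral_pow_mul_exp hI n
  simp only [e] at h
  exact h

lemma Hfun_integrable (K : Measure ℝ) (a b : ℝ) (h0 : (0 : ℝ) ∈ Set.Ioo a b)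
    (hE : ∀ s ∈ Set.Ioo a b, Integrable (fun x : ℝ => x ^ 2 * Real.exp (s * x)) K)
    (w : ℂ) (hw : w.re ∈ Set.Ioo a b) :
    Integrable (fun x : ℝ => Complex.exp (w * (x : ℂ)) - 1 - w * (x : ℂ)) K := by
  refine Integrable.mono' (((hE 0 h0).const_mul (2 * ‖w‖ ^ 2)).add ((hE _ hw).const_mul (‖w‖ ^ 2)))
    (by fun_prop) (Eventually.of_forall fun x => ?_)
  refine (aux_exp2 _).trans (le_of_eq ?_)
  simp [mul_pow]
  ring

lemma Hfun_deriv (K : Measure ℝ) (a b : ℝ) (h0 : (0 : ℝ) ∈ Set.Ioo a b)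
    (hE : ∀ s ∈ Set.Ioo a b, Integrable (fun x : ℝ => x ^ 2 * Real.exp (s * x)) K)
    (w : ℂ) (hw : w.re ∈ Set.Ioo a b) :
    HasDerivAt (Hfun K) (∫ x : ℝ, (x : ℂ) * (Complex.exp (w * x) - 1) ∂K) w ∧
    HasDerivAt (fun w : ℂ => ∫ x : ℝ, (x : ℂ) * (Complex.exp (w * x) - 1) ∂K) (Mfun K 0 w) w := by
  obtain ⟨ε, hε, h1, h2⟩ : ∃ ε > 0, w.re + ε ∈ Set.Ioo a b ∧ w.re - ε ∈ Set.Ioo a b := by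
    refine ⟨min (w.re - a) (b - w.re) / 2, ?_, ?_, ?_⟩
    · have := lt_min (sub_pos.2 hw.1) (sub_pos.2 hw.2); positivity
    all_goals
      have h1 := lt_min (sub_pos.2 hw.1) (sub_pos.2 hw.2)
      have h2 := min_le_left (w.re - a) (b - w.re)
      have h3 := min_le_right (w.re - a) (b - w.re)
      constructor <;> linarith [hw.1, hw.2]
  have hexp : ∀ v ∈ Metric.ball w ε, ∀ x : ℝ, Real.exp (v.re * x) ≤
      Real.exp ((w.re + ε) * x) + Real.exp ((w.re - ε) * x) := by
    intro v hv x
    have h3 : |v.re - w.re| ≤ ε := by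
      have := Complex.abs_re_le_norm (v - w)
      rw [Complex.sub_re] at this
      rw [Metric.mem_ball, dist_eq_norm] at hv
      linarith
    rw [abs_le] at h3
    rcases le_total 0 x with h | h
    · have : Real.exp (v.re * x) ≤ Real.exp ((w.re + ε) * x) := by
        rw [Real.exp_le_exp]; nlinarith
      linarith [Real.exp_pos ((w.re - ε) * x)]
    · have : Real.exp (v.re * x) ≤ Real.exp ((w.re - ε) * x) := by
        rw [Real.exp_le_exp]; nlinarith
      linarith [Real.exp_pos ((w.re + ε) * x)]
  have hnorm : ∀ v ∈ Metric.ball w ε, ‖v‖ ≤ ‖w‖ + ε := by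
    intro v hv
    rw [Metric.mem_ball, dist_eq_norm] at hv
    have := norm_le_norm_add_norm_sub' v w
    linarith
  have hsum := (hE _ h1).add (hE _ h2)
  have hbig := ((hE _ h0).add hsum).const_mul (‖w‖ + ε)
  have hb1 : ∀ v ∈ Metric.ball w ε, ∀ x : ℝ, ‖(x : ℂ) * (Complex.exp (v * x) - 1)‖ ≤
      (‖w‖ + ε) * ((x ^ 2 * Real.exp (0 * x)) +
      (x ^ 2 * Real.exp ((w.re + ε) * x) + x ^ 2 * Real.exp ((w.re - ε) * x))) := by
    intro v hv x
    rw [norm_mul]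
    have h3 := aux_exp1 (v * x)
    rw [norm_mul, Complex.re_mul_ofReal, Complex.norm_real, Real.norm_eq_abs] at h3
    have h4 := hexp v hv x
    have h5 := hnorm v hv
    rw [Complex.norm_real, Real.norm_eq_abs]
    calc |x| * ‖Complex.exp (v * x) - 1‖ ≤ |x| * (‖v‖ * |x| * (1 + Real.exp (v.re * x))) := by gcongr
      _ = ‖v‖ * (x ^ 2 * (1 + Real.exp (v.re * x))) := by rw [← sq_abs x]; ring
      _ ≤ (‖w‖ + ε) * (x ^ 2 * (1 + (Real.exp ((w.re + ε) * x) + Real.exp ((w.re - ε) * x)))) := by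
        gcongr
      _ = _ := by rw [zero_mul, Real.exp_zero]; ring
  have hd1 : ∀ x : ℝ, ∀ v : ℂ, HasDerivAt (fun v : ℂ => Complex.exp (v * x))
      (Complex.exp (v * x) * x) v := by
    intro x v
    simpa using ((hasDerivAt_id v).mul_const (x : ℂ)).cexp
  have hwb : w ∈ Metric.ball w ε := Metric.mem_ball_self hε
  constructor
  · refine (hasDerivAt_integral_of_dominated_loc_of_deriv_le (Metric.ball_mem_nhds w hε)
      (F := fun v (x : ℝ) => Complex.exp (v * (x : ℂ)) - 1 - v * (x : ℂ)) (μ := K)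
      (Eventually.of_forall fun v => by fun_prop) (Hfun_integrable K a b h0 hE w hw)
      (F' := fun v (x : ℝ) => (x : ℂ) * (Complex.exp (v * x) - 1))
      (by fun_prop) (Eventually.of_forall fun x v hv => hb1 v hv x) hbig
      (Eventually.of_forall fun x v hv => ?_)).2
    have := ((hd1 x v).sub_const 1).sub ((hasDerivAt_id v).mul_const (x : ℂ))
    convert! this using 1
    ring
  · have := (hasDerivAt_integral_of_dominated_loc_of_deriv_le (Metric.ball_mem_nhds w hε)
      (F := fun v (x : ℝ) => (x : ℂ) * (Complex.exp (v * x) - 1)) (μ := K)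
      (Eventually.of_forall fun v => by fun_prop)
      (hbig.mono' (by fun_prop) (Eventually.of_forall fun x => hb1 w hwb x))
      (F' := fun v x => ((x ^ 2 : ℝ) : ℂ) * ((x : ℂ) ^ 0 * Complex.exp (v * (x : ℂ))))
      (by fun_prop) (Eventually.of_forall fun x v hv => ?_) hsum
      (Eventually.of_forall fun x v hv => ?_)).2
    · exact this
    · rw [norm_mul, norm_mul, Complex.norm_exp, Complex.norm_real, Complex.re_mul_ofReal]
      have := mul_le_mul_of_nonneg_left (hexp v hv x) (sq_nonneg x)
      simp only [Pi.add_apply]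
      simpa [mul_add] using this
    · have := ((hd1 x v).sub_const 1).const_mul (x : ℂ)
      convert! this using 1
      push_cast
      ring

lemma Phi_exists (K : Measure ℝ) (a b : ℝ) (h0 : (0 : ℝ) ∈ Set.Ioo a b)
    (hE : ∀ s ∈ Set.Ioo a b, Integrable (fun x : ℝ => x ^ 2 * Real.exp (s * x)) K) :
    ∃ Φ : ℂ → ℂ, DifferentiableOn ℂ Φ {w | w.re ∈ Set.Ioo a b} ∧
      (∀ w : ℂ, w.re ∈ Set.Ioo a b → Hfun K w = w ^ 2 * Φ w) ∧
      Φ 0 = ((∫ x : ℝ, x ^ 2 ∂K : ℝ) : ℂ) / 2 ∧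
      deriv Φ 0 = ((∫ x : ℝ, x ^ 3 ∂K : ℝ) : ℂ) / 6 ∧
      deriv (deriv Φ) 0 = ((∫ x : ℝ, x ^ 4 ∂K : ℝ) : ℂ) / 12 := by
  set U : Set ℂ := {w | w.re ∈ Set.Ioo a b} with hU
  have hUo : IsOpen U := isOpen_Ioo.preimage Complex.continuous_re
  have h0U : (0 : ℂ) ∈ U := by simpa [hU] using h0
  have hUn : U ∈ 𝓝 (0 : ℂ) := hUo.mem_nhds h0U
  have hH := fun w (hw : w ∈ U) => Hfun_deriv K a b h0 hE w hw
  set H1 : ℂ → ℂ := fun w => ∫ x : ℝ, (x : ℂ) * (Complex.exp (w * x) - 1) ∂K with hH1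
  have hH0 : Hfun K 0 = 0 := by simp [Hfun]
  have hH10 : H1 0 = 0 := by simp [hH1]
  have hHd : DifferentiableOn ℂ (Hfun K) U := fun w hw => (hH w hw).1.differentiableAt.differentiableWithinAt
  set Φ := dslope (dslope (Hfun K) 0) 0 with hΦ
  have hΦd : DifferentiableOn ℂ Φ U :=
    (Complex.differentiableOn_dslope hUn).2 ((Complex.differentiableOn_dslope hUn).2 hHd)
  have hs0 : dslope (Hfun K) 0 0 = 0 := by
    rw [dslope_same, (hH 0 h0U).1.deriv]; exact hH10
  have hfac : ∀ w, Hfun K w = w ^ 2 * Φ w := by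
    intro w
    have e1 := sub_smul_dslope (Hfun K) 0 w
    have e2 := sub_smul_dslope (dslope (Hfun K) 0) 0 w
    rw [hs0] at e2
    rw [hH0] at e1
    simp only [sub_zero, smul_eq_mul] at e1 e2
    rw [← e1, ← e2]; ring
  have hdd : ∀ f : ℂ → ℂ, DifferentiableOn ℂ f U → ∀ w ∈ U, HasDerivAt f (deriv f w) w :=
    fun f hf w hw => (hf.differentiableAt (hUo.mem_nhds hw)).hasDerivAt
  have hΦ1 : DifferentiableOn ℂ (deriv Φ) U := hΦd.deriv hUo
  have hΦ2 : DifferentiableOn ℂ (deriv (deriv Φ)) U := hΦ1.deriv hUo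
  have hΦ3 : DifferentiableOn ℂ (deriv (deriv (deriv Φ))) U := hΦ2.deriv hUo
  have transfer : ∀ (f g f' : ℂ → ℂ) (w g' : ℂ), w ∈ U → (∀ u ∈ U, f u = g u) →
      HasDerivAt f (f' w) w → HasDerivAt g g' w → f' w = g' := by
    intro f g f' w g' hw hfg hf hg
    refine hf.unique (hg.congr_of_eventuallyEq ?_)
    filter_upwards [hUo.mem_nhds hw] with u hu using hfg u hu
  have s1 : ∀ w ∈ U, H1 w = 2 * w * Φ w + w ^ 2 * deriv Φ w := by
    intro w hw
    refine transfer _ (fun w => w ^ 2 * Φ w) H1 w _ hw (fun u _ => hfac u) (hH w hw).1 ?_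
    have := (hasDerivAt_pow 2 w).mul (hdd _ hΦd w hw)
    convert! this using 1
    simp
  have s2 : ∀ w ∈ U, Mfun K 0 w = 2 * Φ w + 4 * w * deriv Φ w + w ^ 2 * deriv (deriv Φ) w := by
    intro w hw
    refine transfer _ _ (Mfun K 0) w _ hw s1 (hH w hw).2 ?_
    have := (((hasDerivAt_id w).const_mul 2).mul (hdd _ hΦd w hw)).add
      ((hasDerivAt_pow 2 w).mul (hdd _ hΦ1 w hw))
    convert! this using 1
    simp
    ring
  have s3 : ∀ w ∈ U, Mfun K 1 w = 6 * deriv Φ w + 6 * w * deriv (deriv Φ) w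
      + w ^ 2 * deriv (deriv (deriv Φ)) w := by
    intro w hw
    refine transfer _ _ (Mfun K 1) w _ hw s2 (Mfun_deriv K a b hE 0 w hw) ?_
    have := (((hdd _ hΦd w hw).const_mul 2).add
      (((hasDerivAt_id w).const_mul 4).mul (hdd _ hΦ1 w hw))).add
      ((hasDerivAt_pow 2 w).mul (hdd _ hΦ2 w hw))
    convert! this using 1
    simp
    ring
  have s4 : ∀ w ∈ U, Mfun K 2 w = 12 * deriv (deriv Φ) w + 8 * w * deriv (deriv (deriv Φ)) w
      + w ^ 2 * deriv (deriv (deriv (deriv Φ))) w := by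
    intro w hw
    refine transfer _ _ (Mfun K 2) w _ hw s3 (Mfun_deriv K a b hE 1 w hw) ?_
    have := (((hdd _ hΦ1 w hw).const_mul 6).add
      (((hasDerivAt_id w).const_mul 6).mul (hdd _ hΦ2 w hw))).add
      ((hasDerivAt_pow 2 w).mul (hdd _ hΦ3 w hw))
    convert! this using 1
    simp
    ring
  have hM : ∀ n, Mfun K n 0 = ((∫ x : ℝ, x ^ (n + 2) ∂K : ℝ) : ℂ) := by
    intro n
    rw [Mfun, ← integral_complex_ofReal]
    refine integral_congr_ae (Eventually.of_forall fun x => ?_)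
    simp
    ring
  refine ⟨Φ, hΦd, fun w _ => hfac w, ?_, ?_, ?_⟩
  · have := s2 0 h0U
    rw [hM] at this; rw [this]; ring
  · have := s3 0 h0U
    rw [hM] at this; rw [this]; ring
  · have := s4 0 h0U
    rw [hM] at this; rw [this]; ring

/-- second order jet at zero -/
def IsJet (f : ℝ → ℂ) (f0 f1 f2 : ℂ) : Prop :=
  f 0 = f0 ∧ ∃ f' : ℝ → ℂ, (∀ᶠ x in 𝓝 (0 : ℝ), HasDerivAt f (f' x) x) ∧ f' 0 = f1 ∧
    HasDerivAt f' f2 0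

lemma IsJet.sub {f g : ℝ → ℂ} {f0 f1 f2 g0 g1 g2 : ℂ} (hf : IsJet f f0 f1 f2)
    (hg : IsJet g g0 g1 g2) : IsJet (fun x => f x - g x) (f0 - g0) (f1 - g1) (f2 - g2) := by
  obtain ⟨a0, f', a1, a2, a3⟩ := hf
  obtain ⟨b0, g', b1, b2, b3⟩ := hg
  refine ⟨by simp only [a0, b0], fun x => f' x - g' x, ?_, by simp only [a2, b2], a3.sub b3⟩
  filter_upwards [a1, b1] with x h1 h2 using h1.sub h2

lemma IsJet.mul {f g : ℝ → ℂ} {f0 f1 f2 g0 g1 g2 : ℂ} (hf : IsJet f f0 f1 f2)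
    (hg : IsJet g g0 g1 g2) : IsJet (fun x => f x * g x) (f0 * g0) (f1 * g0 + f0 * g1)
      (f2 * g0 + 2 * f1 * g1 + f0 * g2) := by
  obtain ⟨a0, f', a1, a2, a3⟩ := hf
  obtain ⟨b0, g', b1, b2, b3⟩ := hg
  refine ⟨by simp only [a0, b0], fun x => f' x * g x + f x * g' x, ?_, by simp only [a2, b2, a0, b0], ?_⟩
  · filter_upwards [a1, b1] with x h1 h2 using h1.mul h2
  · have := (a3.mul b1.self_of_nhds).add (a1.self_of_nhds.mul b3)
    convert! this using 1
    simp only [a2, b2, a0, b0]; ring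

lemma contDiffAt_deriv_diff {f : ℝ → ℂ} {x : ℝ} (hf : ContDiffAt ℝ 2 f x) :
    DifferentiableAt ℝ (deriv f) x := by
  have h1 : ContDiffAt ℝ 1 (fderiv ℝ f) x := hf.fderiv_right (by norm_num)
  have h2 : ContDiffAt ℝ 1 (fun x => fderiv ℝ f x 1) x := h1.clm_apply contDiffAt_const
  simp only [fderiv_apply_one_eq_deriv] at h2
  exact h2.differentiableAt (by norm_num)

lemma IsJet.of_contDiffAt {f : ℝ → ℂ} (hf : ContDiffAt ℝ 2 f 0) :
    IsJet f (f 0) (deriv f 0) (deriv (deriv f) 0) := by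
  refine ⟨rfl, deriv f, ?_, rfl, ?_⟩
  · filter_upwards [hf.eventually (by simp)] with x hx
    exact (hx.differentiableAt (by norm_num)).hasDerivAt
  · exact (contDiffAt_deriv_diff hf).hasDerivAt

lemma IsJet.congr {f g : ℝ → ℂ} {f0 f1 f2 : ℂ} (hf : IsJet f f0 f1 f2) (h : g =ᶠ[𝓝 0] f) :
    IsJet g f0 f1 f2 := by
  obtain ⟨a0, f', a1, a2, a3⟩ := hf
  refine ⟨h.self_of_nhds.trans a0, f', ?_, a2, a3⟩
  filter_upwards [a1, h.eventually_nhds] with x h1 h2 using h1.congr_of_eventuallyEq h2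

lemma IsJet.deriv_eq {f : ℝ → ℂ} {f0 f1 f2 : ℂ} (hf : IsJet f f0 f1 f2) :
    f 0 = f0 ∧ deriv f 0 = f1 ∧ deriv (deriv f) 0 = f2 := by
  obtain ⟨a0, f', a1, a2, a3⟩ := hf
  refine ⟨a0, by rw [a1.self_of_nhds.deriv, a2], ?_⟩
  have : deriv f =ᶠ[𝓝 0] f' := by filter_upwards [a1] with x hx using hx.deriv
  rw [this.deriv_eq, a3.deriv]

section
variable (μ c : ℝ) (K : Measure ℝ) (a b : ℝ) (Φ : ℂ → ℂ)

lemma kappa_eq 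
    (hfac : ∀ w : ℂ, w.re ∈ Set.Ioo a b → Hfun K w = w ^ 2 * Φ w)
    (hΦ0 : Φ 0 = ((∫ x : ℝ, x ^ 2 ∂K : ℝ) : ℂ) / 2) (lam : ℝ) (z : ℂ)
    (h : ((lam : ℂ) * z).re ∈ Set.Ioo a b) :
    kappa μ c K lam z = μ * z + c / 2 * z ^ 2 + z ^ 2 * Φ (lam * z) := by
  unfold kappa
  split_ifs with h1
  · subst h1
    rw [Complex.ofReal_zero, zero_mul, hΦ0]; push_cast; ring
  · have := hfac _ h
    rw [Hfun] at this
    rw [this]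
    have : (lam : ℂ) ≠ 0 := by exact_mod_cast h1
    field_simp

lemma scale_mem {a b : ℝ} (h0 : (0 : ℝ) ∈ Set.Ioo a b) {r l : ℝ} (hr : r ∈ Set.Ioo a b)
    (hl : l ∈ Set.Icc (0 : ℝ) 1) : l * r ∈ Set.Ioo a b := by
  have := (convex_Ioo a b).smul_mem_of_zero_mem h0 hr hl
  simpa using this

lemma kappa_ev
    (hfac : ∀ w : ℂ, w.re ∈ Set.Ioo a b → Hfun K w = w ^ 2 * Φ w)
    (hΦ0 : Φ 0 = ((∫ x : ℝ, x ^ 2 ∂K : ℝ) : ℂ) / 2) (h0 : (0 : ℝ) ∈ Set.Ioo a b)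
    (lam : ℝ) (z : ℂ) (hl : lam ∈ Set.Icc (0 : ℝ) 1) (hz : z.re ∈ Set.Ioo a b) :
    ∀ᶠ l : ℝ in 𝓝 lam, ((l : ℂ) * z).re ∈ Set.Ioo a b ∧ 
    kappa μ c K l z = μ * z + c / 2 * z ^ 2 + z ^ 2 * Φ (l * z) := by
  have h1 : ((lam : ℂ) * z).re ∈ Set.Ioo a b := by
    rw [Complex.re_ofReal_mul]; exact scale_mem h0 hz hl
  have hc : Continuous (fun l : ℝ => ((l : ℂ) * z).re) := by fun_prop
  filter_upwards [hc.continuousAt.eventually (isOpen_Ioo.mem_nhds h1)] with l hl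
  exact ⟨hl, kappa_eq μ c K a b Φ hfac hΦ0 l z hl⟩

lemma kappa_contDiffAt (hd : DifferentiableOn ℂ Φ {w | w.re ∈ Set.Ioo a b})
    (hfac : ∀ w : ℂ, w.re ∈ Set.Ioo a b → Hfun K w = w ^ 2 * Φ w)
    (hΦ0 : Φ 0 = ((∫ x : ℝ, x ^ 2 ∂K : ℝ) : ℂ) / 2) (h0 : (0 : ℝ) ∈ Set.Ioo a b)
    (lam : ℝ) (z : ℂ) (hl : lam ∈ Set.Icc (0 : ℝ) 1) (hz : z.re ∈ Set.Ioo a b) :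
    ContDiffAt ℝ 2 (fun l => kappa μ c K l z) lam := by
  have ev := kappa_ev μ c K a b Φ hfac hΦ0 h0 lam z hl hz
  refine ContDiffAt.congr_of_eventuallyEq ?_ (ev.mono fun l h => h.2)
  have hUo : IsOpen {w : ℂ | w.re ∈ Set.Ioo a b} := isOpen_Ioo.preimage Complex.continuous_re
  have hA : ContDiffAt ℂ 2 Φ ((lam : ℂ) * z) :=
    (hd.analyticAt (hUo.mem_nhds ev.self_of_nhds.1)).contDiffAt
  have hA' : ContDiffAt ℝ 2 Φ ((lam : ℂ) * z) := hA.restrict_scalars ℝ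
  have hlin : ContDiffAt ℝ 2 (fun l : ℝ => (l : ℂ) * z) lam :=
    (Complex.ofRealCLM.contDiff.contDiffAt).mul contDiffAt_const
  have := ContDiffAt.comp lam hA' hlin
  exact contDiffAt_const.add (contDiffAt_const.mul this)

lemma kappa_jet (hd : DifferentiableOn ℂ Φ {w | w.re ∈ Set.Ioo a b})
    (hfac : ∀ w : ℂ, w.re ∈ Set.Ioo a b → Hfun K w = w ^ 2 * Φ w)
    (hΦ0 : Φ 0 = ((∫ x : ℝ, x ^ 2 ∂K : ℝ) : ℂ) / 2) (h0 : (0 : ℝ) ∈ Set.Ioo a b)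
    (z : ℂ) (hz : z.re ∈ Set.Ioo a b) :
    IsJet (fun l => kappa μ c K l z)
      (μ * z + ((c + ∫ x : ℝ, x ^ 2 ∂K : ℝ) : ℂ) / 2 * z ^ 2)
      (z ^ 3 * deriv Φ 0) (z ^ 4 * deriv (deriv Φ) 0) := by
  have ev := kappa_ev μ c K a b Φ hfac hΦ0 h0 0 z (by simp) hz
  have hUo : IsOpen {w : ℂ | w.re ∈ Set.Ioo a b} := isOpen_Ioo.preimage Complex.continuous_re
  have h0U : (0 : ℂ) ∈ {w : ℂ | w.re ∈ Set.Ioo a b} := by simpa using h0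
  have hd1 := hd.deriv hUo
  have hlin : ∀ l : ℝ, HasDerivAt (fun l : ℝ => (l : ℂ) * z) z l := by
    intro l
    have := ((hasDerivAt_id (l : ℂ)).mul_const z).comp_ofReal
    simpa using this
  refine ⟨by simp [kappa], fun l => z ^ 3 * deriv Φ (l * z), ?_, by simp, ?_⟩
  · filter_upwards [ev.eventually_nhds] with l hl
    have h1 : HasDerivAt Φ (deriv Φ (l * z)) (l * z) :=
      (hd.differentiableAt (hUo.mem_nhds hl.self_of_nhds.1)).hasDerivAt
    have h2 := ((HasDerivAt.comp l h1 (hlin l)).const_mul (z ^ 2)).const_add (μ * z + c / 2 * z ^ 2)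
    refine HasDerivAt.congr_of_eventuallyEq ?_ (hl.mono fun x h => h.2)
    convert! h2 using 1
    ring
  · have h1 : HasDerivAt (deriv Φ) (deriv (deriv Φ) 0) (((0 : ℝ) : ℂ) * z) := by
      rw [Complex.ofReal_zero, zero_mul]
      exact (hd1.differentiableAt (hUo.mem_nhds h0U)).hasDerivAt
    have h2 := (HasDerivAt.comp (0 : ℝ) h1 (hlin 0)).const_mul (z ^ 3)
    convert! h2 using 1
    ring

lemma kbar_ne_zero (hc : 0 ≤ c) (h0 : (0 : ℝ) ∈ Set.Ioo a b) (h2 : (2 : ℝ) ∈ Set.Ioo a b)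
    (hE : ∀ s ∈ Set.Ioo a b, Integrable (fun x : ℝ => x ^ 2 * Real.exp (s * x)) K)
    (hpos : 0 < c + ∫ x : ℝ, x ^ 2 ∂K) (lam : ℝ) (hl : lam ∈ Set.Icc (0 : ℝ) 1) :
    kbar μ c K lam 1 1 ≠ 0 := by
  by_cases h : lam = 0
  · subst h
    have e : kbar μ c K 0 1 1 = ((c + ∫ x : ℝ, x ^ 2 ∂K : ℝ) : ℂ) := by
      simp only [kbar, kappa, if_true]
      ring
    rw [e]
    exact_mod_cast hpos.ne'
  · have hl2 : lam * 2 ∈ Set.Ioo a b := scale_mem h0 h2 hl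
    have hl1 : lam * 1 ∈ Set.Ioo a b := 
      scale_mem h0 ((convex_Ioo a b).ordConnected.out h0 h2 ⟨by norm_num, by norm_num⟩) hl
    have i2 := Hfun_integrable K a b h0 hE ((lam : ℂ) * (1 + 1)) (by
      rw [Complex.re_ofReal_mul]; norm_num; exact hl2)
    have i1 := Hfun_integrable K a b h0 hE ((lam : ℂ) * 1) (by
      rw [Complex.re_ofReal_mul]; simpa using hl1)
    have i3 := (i2.sub i1).sub i1
    have efun : ∀ x : ℝ, (Complex.exp ((lam : ℂ) * (1 + 1) * x) - 1 - (lam : ℂ) * (1 + 1) * x)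
       - (Complex.exp ((lam : ℂ) * 1 * x) - 1 - (lam : ℂ) * 1 * x)
       - (Complex.exp ((lam : ℂ) * 1 * x) - 1 - (lam : ℂ) * 1 * x) =
       (((Real.exp (lam * x) - 1) ^ 2 : ℝ) : ℂ) := by
      intro x
      have : Complex.exp ((lam : ℂ) * (1 + 1) * x) = Complex.exp (lam * x) ^ 2 := by
        rw [← Complex.exp_nat_mul]; congr 1; push_cast; ring
      rw [this]; push_cast; ring_nf
    have hIntg : Integrable (fun x : ℝ => (Real.exp (lam * x) - 1) ^ 2) K := by
      have := i3.re
      refine this.congr (Eventually.of_forall fun x => ?_)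
      have e := efun x
      simp only [Pi.sub_apply]
      rw [e]
      simp only [RCLike.re_to_complex, Complex.ofReal_re]
    have eI : (∫ x : ℝ, (Complex.exp ((lam : ℂ) * (1 + 1) * x) - 1 - (lam : ℂ) * (1 + 1) * x) ∂K)
       - (∫ x : ℝ, (Complex.exp ((lam : ℂ) * 1 * x) - 1 - (lam : ℂ) * 1 * x) ∂K)
       - (∫ x : ℝ, (Complex.exp ((lam : ℂ) * 1 * x) - 1 - (lam : ℂ) * 1 * x) ∂K)
       = ((∫ x : ℝ, (Real.exp (lam * x) - 1) ^ 2 ∂K : ℝ) : ℂ) := by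
      rw [← integral_complex_ofReal, ← integral_sub i2 i1]
      refine (integral_sub (i2.sub i1) i1).symm.trans ?_
      exact integral_congr_ae (Eventually.of_forall efun)
    have e : kbar μ c K lam 1 1 =
        ((c + (lam ^ 2)⁻¹ * ∫ x : ℝ, (Real.exp (lam * x) - 1) ^ 2 ∂K : ℝ) : ℂ) := by
      simp only [kbar, kappa, if_neg h]
      push_cast
      rw [← eI]
      ring
    rw [e]
    intro hz
    have hz' : c + (lam ^ 2)⁻¹ * ∫ x : ℝ, (Real.exp (lam * x) - 1) ^ 2 ∂K = 0 := by exact_mod_cast hz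
    have hn : 0 ≤ ∫ x : ℝ, (Real.exp (lam * x) - 1) ^ 2 ∂K := integral_nonneg fun x => sq_nonneg _
    have hlp : 0 < (lam ^ 2)⁻¹ := by positivity
    have hn' : 0 ≤ (lam ^ 2)⁻¹ * ∫ x : ℝ, (Real.exp (lam * x) - 1) ^ 2 ∂K := by positivity
    have hc0 : c = 0 := by linarith
    have hI0 : ∫ x : ℝ, (Real.exp (lam * x) - 1) ^ 2 ∂K = 0 := by
      have : (lam ^ 2)⁻¹ * ∫ x : ℝ, (Real.exp (lam * x) - 1) ^ 2 ∂K = 0 := by linarith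
      rcases mul_eq_zero.1 this with h | h
      · exact absurd h hlp.ne'
      · exact h
    rw [integral_eq_zero_iff_of_nonneg (fun x => sq_nonneg _) hIntg] at hI0
    have : ∫ x : ℝ, x ^ 2 ∂K = 0 := by
      rw [← integral_zero ℝ ℝ (μ := K)]
      refine integral_congr_ae ?_
      filter_upwards [hI0] with x hx
      have : Real.exp (lam * x) = 1 := by
        have := pow_eq_zero_iff (two_ne_zero) |>.1 hx
        linarith
      rw [Real.exp_eq_one_iff] at this
      have : x = 0 := by
        rcases mul_eq_zero.1 this with h' | h'
        · exact absurd h' h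
        · exact h'
      simp [this]
    rw [hc0, this] at hpos
    simp at hpos

end
/-- second-order expansion of the integrand `J_j(λ; t, y, z)` of the
mean squared hedging error (key computation in the proof of Theorems `errVOapprox`
and `errPureapprox`). -/
theorem hedging_error_integrand_expansion
    (μ c : ℝ) (hc : 0 ≤ c) (K : MeasureTheory.Measure ℝ)
    (hK0 : K {0} = 0)
    (hKmin : ∫⁻ x : ℝ, ENNReal.ofReal (min 1 (x ^ 2)) ∂K ≠ ⊤)
    (R : ℝ) (hR : R ≠ 0) (a b : ℝ)
    (h0 : (0 : ℝ) ∈ Set.Ioo a b) (h2 : (2 : ℝ) ∈ Set.Ioo a b)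
    (h2R : 2 * R ∈ Set.Ioo a b)
    (hK5 : ∫⁻ x in {x : ℝ | 1 ≤ |x|}, ENNReal.ofReal (|x| ^ 5) ∂K ≠ ⊤)
    (hKexp : ∀ s ∈ Set.Ioo a b,
      ∫⁻ x in {x : ℝ | 1 ≤ |x|}, ENNReal.ofReal (Real.exp (s * x)) ∂K ≠ ⊤)
    (σ2 : ℝ) (hσ2 : σ2 = c + ∫ x : ℝ, x ^ 2 ∂K) (hσ2pos : 0 < σ2)
    (σ m s3 s4 : ℝ) (hσ : σ = Real.sqrt σ2) (hm : m = (μ + σ2 / 2) / σ2)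
    (hs3 : s3 = (∫ x : ℝ, x ^ 3 ∂K) / σ ^ 3) (hs4 : s4 = (∫ x : ℝ, x ^ 4 ∂K) / σ ^ 4)
    (T t S₀ : ℝ) (hT : 0 < T) (ht : t ∈ Set.Icc 0 T) (hS₀ : 0 < S₀)
    (j : ℕ) (hj : j ∈ ({0, 1} : Set ℕ))
    (y z : ℂ) (hy : y.re = R) (hz : z.re = R)
    (Jf : ℝ → ℂ)
    (hJf : ∀ lam : ℝ, Jf lam =
      cpowR S₀ (y + z) *
        (kbar μ c K lam y z - kbar μ c K lam y 1 * kbar μ c K lam z 1 / kbar μ c K lam 1 1) *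
        Complex.exp (kappa μ c K lam (y + z) * (t : ℂ) +
          (etaLK μ c K lam y + etaLK μ c K lam z -
            (j : ℂ) * kappa μ c K lam 1 ^ 2 / kbar μ c K lam 1 1) * ((T : ℂ) - (t : ℂ)))) :
    (∀ lam ∈ Set.Icc (0 : ℝ) 1,
      DifferentiableWithinAt ℝ Jf (Set.Icc 0 1) lam ∧
      DifferentiableWithinAt ℝ (derivWithin Jf (Set.Icc 0 1)) (Set.Icc 0 1) lam) ∧
    Jf 0 = 0 ∧
    derivWithin Jf (Set.Icc 0 1) 0 = 0 ∧
    iteratedDerivWithin 2 Jf (Set.Icc 0 1) 0 =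
      (1 / 2 : ℂ) * (σ : ℂ) ^ 4 * ((s4 : ℂ) - (s3 : ℂ) ^ 2) *
        Complex.exp (-(j : ℂ) * (((μ + σ2 / 2) ^ 2 / σ2 : ℝ) : ℂ) * ((T : ℂ) - (t : ℂ))) *
        cpowR S₀ (y + z) * Complex.exp (kappa μ c K 0 (y + z) * (t : ℂ)) *
        Complex.exp (((σ2 : ℝ) : ℂ) / 2 * (y * (y - 1) + z * (z - 1)) * ((T : ℂ) - (t : ℂ))) *
        (y * (y - 1)) * (z * (z - 1)) := by
  have hE := aux_int K a b hKmin hKexp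
  obtain ⟨Φ, hd, hfac, hΦ0, hΦ1, hΦ2⟩ := Phi_exists K a b h0 hE
  have hσ2c : ((c + ∫ x : ℝ, x ^ 2 ∂K : ℝ) : ℂ) = (σ2 : ℂ) := by rw [hσ2]
  have m1 : (1 : ℂ).re ∈ Set.Ioo a b := by
    rw [Complex.one_re]; exact ⟨by linarith [h0.1], by linarith [h2.2]⟩
  have m2 : (1 + 1 : ℂ).re ∈ Set.Ioo a b := by
    have : (1 + 1 : ℂ).re = 2 := by norm_num
    rw [this]; exact h2
  have mR : ∀ w : ℂ, w.re = R → w.re ∈ Set.Ioo a b := by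
    intro w hw; rw [hw]; exact ⟨by linarith [h0.1, h2R.1], by linarith [h0.2, h2R.2]⟩
  have mR1 : ∀ w : ℂ, w.re = R → (w + 1).re ∈ Set.Ioo a b := by
    intro w hw
    rw [Complex.add_re, hw, Complex.one_re]
    exact ⟨by linarith [h2.1, h2R.1], by linarith [h2.2, h2R.2]⟩
  have myz : (y + z).re ∈ Set.Ioo a b := by
    rw [Complex.add_re, hy, hz, ← two_mul]; exact h2R
  have cd := kappa_contDiffAt μ c K a b Φ hd hfac hΦ0 h0
  have jt := kappa_jet μ c K a b Φ hd hfac hΦ0 h0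
  have hD := kbar_ne_zero μ c K a b hc h0 h2 hE (hσ2 ▸ hσ2pos)
  rw [hσ2c] at jt
  have cdb : ∀ u v : ℂ, u.re ∈ Set.Ioo a b → v.re ∈ Set.Ioo a b → (u + v).re ∈ Set.Ioo a b →
      ∀ l ∈ Set.Icc (0 : ℝ) 1, ContDiffAt ℝ 2 (fun l => kbar μ c K l u v) l :=
    fun u v hu hv huv l hl => ((cd l _ hl huv).sub (cd l _ hl hu)).sub (cd l _ hl hv)
  have jtb : ∀ u v : ℂ, u.re ∈ Set.Ioo a b → v.re ∈ Set.Ioo a b → (u + v).re ∈ Set.Ioo a b →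
      IsJet (fun l => kbar μ c K l u v) _ _ _ :=
    fun u v hu hv huv => ((jt _ huv).sub (jt _ hu)).sub (jt _ hv)
  have cD := cdb 1 1 m1 m1 m2
  -- the exponential factor over the denominator
  set E : ℝ → ℂ := fun lam => Complex.exp (kappa μ c K lam (y + z) * (t : ℂ) +
          (etaLK μ c K lam y + etaLK μ c K lam z -
            (j : ℂ) * kappa μ c K lam 1 ^ 2 / kbar μ c K lam 1 1) * ((T : ℂ) - (t : ℂ))) with hEdef
  set G : ℝ → ℂ := fun lam => cpowR S₀ (y + z) * E lam * (kbar μ c K lam 1 1)⁻¹ with hG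
  set N : ℝ → ℂ := fun lam => kbar μ c K lam y z * kbar μ c K lam 1 1 -
    kbar μ c K lam y 1 * kbar μ c K lam z 1 with hN
  have cinv : ∀ l ∈ Set.Icc (0 : ℝ) 1, ContDiffAt ℝ 2 (fun l => (kbar μ c K l 1 1)⁻¹) l :=
    fun l hl => (cD l hl).inv (hD l hl)
  have ceta : ∀ w : ℂ, w.re = R → ∀ l ∈ Set.Icc (0 : ℝ) 1,
      ContDiffAt ℝ 2 (fun l => etaLK μ c K l w) l := by
    intro w hw l hl
    have := (cd l w hl (mR w hw)).sub ((cd l 1 hl m1).mul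
      ((cdb w 1 (mR w hw) m1 (mR1 w hw) l hl).mul (cinv l hl)))
    simpa only [etaLK, gamLK, div_eq_mul_inv] using this
  have cE : ∀ l ∈ Set.Icc (0 : ℝ) 1, ContDiffAt ℝ 2 E l := by
    intro l hl
    have := (((cd l _ hl myz).mul (contDiffAt_const (c := (t : ℂ)))).add
      ((((ceta y hy l hl).add (ceta z hz l hl)).sub
      (((contDiffAt_const (c := (j : ℂ))).mul ((cd l 1 hl m1).pow 2)).mul (cinv l hl))).mul
      (contDiffAt_const (c := (T : ℂ) - (t : ℂ))))).cexp
    simpa only [hEdef, div_eq_mul_inv] using this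
  have cG : ∀ l ∈ Set.Icc (0 : ℝ) 1, ContDiffAt ℝ 2 G l :=
    fun l hl => (contDiffAt_const.mul (cE l hl)).mul (cinv l hl)
  have cN : ∀ l ∈ Set.Icc (0 : ℝ) 1, ContDiffAt ℝ 2 N l := fun l hl =>
    ((cdb y z (mR y hy) (mR z hz) myz l hl).mul (cD l hl)).sub
      ((cdb y 1 (mR y hy) m1 (mR1 y hy) l hl).mul (cdb z 1 (mR z hz) m1 (mR1 z hz) l hl))
  have hev : ∀ l ∈ Set.Icc (0 : ℝ) 1, Jf =ᶠ[𝓝 l] fun x => N x * G x := by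
    intro l hl
    filter_upwards [(cD l hl).continuousAt.eventually_ne (hD l hl)] with x hx
    rw [hJf x]
    simp only [hN, hG, hEdef]
    field_simp
  have cJ : ∀ l ∈ Set.Icc (0 : ℝ) 1, ContDiffAt ℝ 2 Jf l := fun l hl =>
    ((cN l hl).mul (cG l hl)).congr_of_eventuallyEq (hev l hl)
  have z01 : (0 : ℝ) ∈ Set.Icc (0 : ℝ) 1 := by simp
  have jN := ((jtb y z (mR y hy) (mR z hz) myz).mul (jtb 1 1 m1 m1 m2)).sub
      ((jtb y 1 (mR y hy) m1 (mR1 y hy)).mul (jtb z 1 (mR z hz) m1 (mR1 z hz)))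
  have jJ := (jN.mul (IsJet.of_contDiffAt (cG 0 z01))).congr (hev 0 z01)
  obtain ⟨q0, q1, q2⟩ := jJ.deriv_eq
  have uD := uniqueDiffOn_Icc (zero_lt_one (α := ℝ))
  have dW : ∀ l ∈ Set.Icc (0 : ℝ) 1, derivWithin Jf (Set.Icc 0 1) l = deriv Jf l := fun l hl =>
    ((cJ l hl).differentiableAt (by norm_num)).derivWithin (uD l hl)
  refine ⟨fun l hl => ⟨((cJ l hl).differentiableAt (by norm_num)).differentiableWithinAt, ?_⟩,
    ?_, ?_, ?_⟩
  · exact (contDiffAt_deriv_diff (cJ l hl)).differentiableWithinAt.congr dW (dW l hl)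
  · rw [q0]; ring
  · rw [dW 0 z01, q1]; ring
  · have e2 : iteratedDerivWithin 2 Jf (Set.Icc 0 1) 0 = deriv (deriv Jf) 0 := by
      rw [iteratedDerivWithin_succ, iteratedDerivWithin_one]
      rw [derivWithin_congr dW (dW 0 z01)]
      exact (contDiffAt_deriv_diff (cJ 0 z01)).derivWithin (uD 0 z01)
    have hs : (σ2 : ℂ) ≠ 0 := by exact_mod_cast hσ2pos.ne'
    have hk : ∀ w : ℂ, kappa μ c K 0 w = μ * w + σ2 / 2 * w ^ 2 := by
      intro w; rw [← hσ2c]; simp [kappa]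
    have hb : ∀ u v : ℂ, kbar μ c K 0 u v = σ2 * u * v := by
      intro u v; simp only [kbar, hk]; ring
    have het : ∀ w : ℂ, etaLK μ c K 0 w = σ2 / 2 * (w * (w - 1)) := by
      intro w; simp only [etaLK, gamLK, hb, hk]; field_simp; ring
    have hE0 : E 0 = Complex.exp (-(j : ℂ) * (((μ + σ2 / 2) ^ 2 / σ2 : ℝ) : ℂ) * ((T : ℂ) - (t : ℂ)))
        * Complex.exp (kappa μ c K 0 (y + z) * (t : ℂ)) *
        Complex.exp (((σ2 : ℝ) : ℂ) / 2 * (y * (y - 1) + z * (z - 1)) * ((T : ℂ) - (t : ℂ))) := by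
      rw [← Complex.exp_add, ← Complex.exp_add]
      simp only [hEdef]
      congr 1
      rw [het, het, hb, hk 1]
      push_cast
      field_simp
      ring
    have hsq : σ ^ 2 = σ2 := by rw [hσ, Real.sq_sqrt hσ2pos.le]
    have hσ0 : σ ≠ 0 := by rintro h; rw [h] at hsq; norm_num at hsq; linarith
    have hcoef : (σ : ℂ) ^ 4 * ((s4 : ℂ) - (s3 : ℂ) ^ 2) =
        ((∫ x : ℝ, x ^ 4 ∂K : ℝ) : ℂ) - ((∫ x : ℝ, x ^ 3 ∂K : ℝ) : ℂ) ^ 2 / (σ2 : ℂ) := by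
      have : σ ^ 4 * (s4 - s3 ^ 2) = (∫ x : ℝ, x ^ 4 ∂K) - (∫ x : ℝ, x ^ 3 ∂K) ^ 2 / σ2 := by
        rw [hs3, hs4, ← hsq]; field_simp
      exact_mod_cast this
    rw [e2, q2, mul_assoc (1 / 2 : ℂ), hcoef]
    generalize deriv (deriv G) 0 = g1
    generalize deriv G 0 = g2
    simp only [hG, hE0, hb, hΦ1, hΦ2]
    generalize Complex.exp (-(j : ℂ) * (((μ + σ2 / 2) ^ 2 / σ2 : ℝ) : ℂ) * ((T : ℂ) - (t : ℂ))) = e1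
    generalize Complex.exp (kappa μ c K 0 (y + z) * (t : ℂ)) = e2
    generalize Complex.exp (((σ2 : ℝ) : ℂ) / 2 * (y * (y - 1) + z * (z - 1)) * ((T : ℂ) - (t : ℂ))) = e3
    generalize ((∫ x : ℝ, x ^ 4 ∂K : ℝ) : ℂ) = M4
    generalize ((∫ x : ℝ, x ^ 3 ∂K : ℝ) : ℂ) = M3
    field_simp
    ring
end

section
/- Fix μ ∈ ℝ, σ > 0, T > 0, S₀ > 0, and let the payoff data (f, R, l, l̂, p, z_y) be as defined. Then ∫_ℝ∫_ℝ∫₀ᵀ S₀^{z_u+z_v}·e^{(μ(z_u+z_v)+½σ²(z_u+z_v)²)t}·e^{½σ²(z_u(z_u−1)+z_v(z_v−1))(T−t)}·z_u(z_u−1)·z_v(z_v−1)·p(z_u)p(z_v) dt du dv = ∫₀ᵀ ∫_ℝ D₂(t, S₀e^{μt+x})² dγ_{σ²t}(x) dt, where D₂(t,s) := ∫_ℝ z_y(z_y−1)·s^{z_y}·e^{½σ²z_y(z_y−1)(T−t)}·p(z_y) dy and γ_v denotes the Gaussian measure on ℝ with mean 0 and variance v (the Dirac measure at 0 for v = 0);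 in particular all integrals above are well defined. -/
open MeasureTheory ProbabilityTheory Complex Set

noncomputable def zLine (R y : ℝ) : ℂ := (R : ℂ) + (y : ℂ) * Complex.I

/-- Fourier transform `l̂(y) = ∫ l(x) e^{-ixy} dx`. -/
noncomputable def lhat (l : ℝ → ℝ) (y : ℝ) : ℂ :=
  ∫ x : ℝ, (l x : ℂ) * Complex.exp (-(Complex.I * (x : ℂ) * (y : ℂ)))

noncomputable def pCoef (l : ℝ → ℝ) (y : ℝ) : ℂ := lhat l y / (2 * (Real.pi : ℂ))

/-- Black-Scholes cash greek `D_n(t,s)` in integral form (with `C = D_0`). -/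
noncomputable def cashGreek (σ2 T R : ℝ) (l : ℝ → ℝ) (n : ℕ) (t s : ℝ) : ℂ :=
  ∫ y : ℝ, (∏ k ∈ Finset.range n, (zLine R y - (k : ℂ))) * cpowR s (zLine R y) *
    Complex.exp (((σ2 : ℂ) / 2) * zLine R y * (zLine R y - 1) * ((T : ℂ) - (t : ℂ))) * pCoef l y

lemma lhat_eq_fourier (l : ℝ → ℝ) (y : ℝ) :
    lhat l y = FourierTransform.fourier (fun x => (l x : ℂ)) (y / (2 * Real.pi)) := by
  rw [Real.fourier_real_eq_integral_exp_smul, lhat]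
  congr 1
  ext x
  rw [smul_eq_mul, mul_comm]
  congr 2
  have : (Real.pi : ℂ) ≠ 0 := by exact_mod_cast Real.pi_ne_zero
  push_cast
  field_simp

lemma iteratedDeriv_ofReal_comp (l : ℝ → ℝ) (hc : ContDiff ℝ (⊤ : ℕ∞) l) (n : ℕ) :
    iteratedDeriv n (fun x => (l x : ℂ)) = fun x => ((iteratedDeriv n l x : ℝ) : ℂ) := by
  induction n with
  | zero => ext x; simp
  | succ n ih =>
    ext x
    rw [iteratedDeriv_succ, ih, iteratedDeriv_succ]
    have hd : DifferentiableAt ℝ (iteratedDeriv n l) x :=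
      (hc.differentiable_iteratedDeriv n (by exact_mod_cast WithTop.coe_lt_top n)) x
    exact hd.hasDerivAt.ofReal_comp.deriv

lemma norm_fourier_le' (g : ℝ → ℂ) (w : ℝ) :
    ‖FourierTransform.fourier g w‖ ≤ ∫ v, ‖g v‖ :=
  VectorFourier.norm_fourierIntegral_le_integral_norm _ _ _ _ _

lemma lhat_bound (l : ℝ → ℝ) (hc : ContDiff ℝ (⊤ : ℕ∞) l)
    (hlint : ∀ n : ℕ, Integrable (iteratedDeriv n l)) (n : ℕ) :
    ∃ C : ℝ, ∀ y : ℝ, |y| ^ n * ‖lhat l y‖ ≤ C := by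
  refine ⟨∫ v, ‖iteratedDeriv n (fun x => (l x : ℂ)) v‖, fun y => ?_⟩
  have h := Real.fourier_iteratedDeriv (f := fun x => (l x : ℂ)) (N := ⊤) (n := n)
    (Complex.ofRealCLM.contDiff.comp hc)
    (fun m _ => by rw [iteratedDeriv_ofReal_comp l hc]; exact (hlint m).ofReal) le_top
  have h2 := norm_fourier_le' (iteratedDeriv n (fun x => (l x : ℂ))) (y / (2 * Real.pi))
  rw [h] at h2
  beta_reduce at h2
  rw [← lhat_eq_fourier, norm_smul, norm_pow] at h2
  convert h2 using 3
  have : (Real.pi : ℂ) ≠ 0 := by exact_mod_cast Real.pi_ne_zero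
  have e : (2 * (Real.pi : ℂ) * I * ((y / (2 * Real.pi) : ℝ) : ℂ)) = I * y := by
    push_cast
    field_simp
  rw [e]
  simp

lemma continuous_lhat (l : ℝ → ℝ) (hi : Integrable l) : Continuous (lhat l) := by
  have h : Continuous (FourierTransform.fourier (fun x => (l x : ℂ))) :=
    VectorFourier.fourierIntegral_continuous Real.continuous_fourierChar
      (by exact continuous_inner) hi.ofReal
  have e : lhat l = fun y => FourierTransform.fourier (fun x => (l x : ℂ)) (y / (2 * Real.pi)) :=
    funext (lhat_eq_fourier l)
  rw [e]
  exact h.comp (by fun_prop)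

noncomputable def ampl (R : ℝ) (l : ℝ → ℝ) (y : ℝ) : ℂ :=
  zLine R y * (zLine R y - 1) * pCoef l y

lemma continuous_zLine (R : ℝ) : Continuous (zLine R) := by
  unfold zLine
  fun_prop

lemma continuous_ampl (R : ℝ) (l : ℝ → ℝ) (hi : Integrable l) : Continuous (ampl R l) := by
  have h1 := continuous_zLine R
  have h2 := continuous_lhat l hi
  unfold ampl pCoef
  fun_prop

lemma integrable_ampl (R : ℝ) (l : ℝ → ℝ) (hc : ContDiff ℝ (⊤ : ℕ∞) l)
    (hlint : ∀ n : ℕ, Integrable (iteratedDeriv n l)) : Integrable (ampl R l) := by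
  have hi : Integrable l := by simpa using hlint 0
  obtain ⟨C0, h0⟩ := lhat_bound l hc hlint 0
  obtain ⟨C4, h4⟩ := lhat_bound l hc hlint 4
  refine Integrable.mono' (integrable_inv_one_add_sq.const_mul
    ((|R| + 1) ^ 2 * 4 * (C0 + C4))) (continuous_ampl R l hi).aestronglyMeasurable
    (Filter.Eventually.of_forall fun y => ?_)
  have hp : ‖pCoef l y‖ ≤ ‖lhat l y‖ := by
    unfold pCoef
    rw [norm_div]
    apply div_le_self (norm_nonneg _)
    have := Real.pi_gt_three
    simp only [norm_mul, Complex.norm_real, Complex.norm_ofNat, Real.norm_eq_abs,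
      abs_of_pos Real.pi_pos]
    linarith
  have hz : ‖zLine R y‖ ≤ |R| + |y| := by
    unfold zLine
    refine (norm_add_le _ _).trans ?_
    simp
  have hz1 : ‖zLine R y - 1‖ ≤ |R| + |y| + 1 := by
    refine (norm_sub_le _ _).trans ?_
    simpa using hz
  have a0 := abs_nonneg R
  have b0 := abs_nonneg y
  have hzz : ‖zLine R y‖ * ‖zLine R y - 1‖ ≤ (|R| + 1) ^ 2 * 2 * (1 + y ^ 2) := by
    calc _ ≤ (|R| + |y|) * (|R| + |y| + 1) := by gcongr
      _ ≤ ((|R| + 1) * (1 + |y|)) ^ 2 := by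
        rw [sq]
        gcongr <;> nlinarith [mul_nonneg a0 b0]
      _ = (|R| + 1) ^ 2 * (1 + |y|) ^ 2 := by ring
      _ ≤ (|R| + 1) ^ 2 * (2 * (1 + y ^ 2)) := by
        gcongr
        nlinarith [sq_abs y, sq_nonneg (1 - |y|)]
      _ = _ := by ring
  have H0 := h0 y
  have H4 := h4 y
  have e4 : |y| ^ 4 = y ^ 4 := by rw [pow_abs, abs_of_nonneg (by positivity)]
  rw [e4] at H4
  simp only [pow_zero, one_mul] at H0
  have hl2 : (1 + y ^ 2) ^ 2 * ‖lhat l y‖ ≤ 2 * (C0 + C4) := by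
    have : (1 + y ^ 2) ^ 2 ≤ 2 * (1 + y ^ 4) := by nlinarith [sq_nonneg (1 - y ^ 2)]
    calc _ ≤ 2 * (1 + y ^ 4) * ‖lhat l y‖ := by gcongr
      _ ≤ _ := by linarith
  rw [← div_eq_mul_inv, le_div_iff₀ (by positivity), ampl, norm_mul, norm_mul]
  calc ‖zLine R y‖ * ‖zLine R y - 1‖ * ‖pCoef l y‖ * (1 + y ^ 2)
      ≤ (|R| + 1) ^ 2 * 2 * (1 + y ^ 2) * ‖lhat l y‖ * (1 + y ^ 2) := by gcongr
    _ = (|R| + 1) ^ 2 * 2 * ((1 + y ^ 2) ^ 2 * ‖lhat l y‖) := by ring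
    _ ≤ (|R| + 1) ^ 2 * 2 * (2 * (C0 + C4)) := by gcongr
    _ = _ := by ring

/-- exponent of the cash-greek integrand -/
noncomputable def expo (R a k x y : ℝ) : ℂ :=
  zLine R y * ((a + x : ℝ) : ℂ) + (k : ℂ) * (zLine R y * (zLine R y - 1))

lemma zLine_re (R y : ℝ) : (zLine R y).re = R := by simp [zLine]

lemma zLine_im (R y : ℝ) : (zLine R y).im = y := by simp [zLine]

lemma expo_re_le (R a k x y : ℝ) (hk : 0 ≤ k) :
    (expo R a k x y).re ≤ R * (a + x) + k * (R * (R - 1)) := by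
  unfold expo
  simp only [add_re, mul_re, sub_re, sub_im, mul_im, ofReal_re, ofReal_im, zLine_re, zLine_im,
    one_re, one_im]
  nlinarith [mul_nonneg hk (sq_nonneg y)]

lemma cashGreek_eq (μ σ T S₀ R : ℝ) (hS₀ : 0 < S₀) (l : ℝ → ℝ) (t x : ℝ) :
    cashGreek (σ ^ 2) T R l 2 t (S₀ * Real.exp (μ * t + x)) =
      ∫ y, ampl R l y * cexp (expo R (Real.log S₀ + μ * t) (σ ^ 2 / 2 * (T - t)) x y) := by
  unfold cashGreek
  congr 1
  ext y
  have hlog : Real.log (S₀ * Real.exp (μ * t + x)) = Real.log S₀ + μ * t + x := by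
    rw [Real.log_mul hS₀.ne' (Real.exp_pos _).ne', Real.log_exp]
    ring
  rw [cpowR, hlog, expo, Complex.exp_add, ampl]
  simp only [Finset.prod_range_succ, Finset.prod_range_zero]
  push_cast
  ring_nf

lemma integrable_W (R a k : ℝ) (hk : 0 ≤ k) (l : ℝ → ℝ) (hi : Integrable l)
    (hA : Integrable (ampl R l)) (v : NNReal) :
    Integrable (fun q : ℝ × ℝ × ℝ =>
      (ampl R l q.2.1 * cexp (expo R a k q.1 q.2.1)) *
      (ampl R l q.2.2 * cexp (expo R a k q.1 q.2.2)))
      ((gaussianReal 0 v).prod ((volume : Measure ℝ).prod (volume : Measure ℝ))) := by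
  have hcA := continuous_ampl R l hi
  have hcz := continuous_zLine R
  have hB := ((integrable_exp_mul_gaussianReal (μ := 0) (v := v) (2 * R)).mul_prod
    (hA.norm.mul_prod hA.norm)).const_mul (Real.exp (2 * (R * a + k * (R * (R - 1)))))
  refine hB.mono' ?_ (Filter.Eventually.of_forall fun q => ?_)
  · apply Continuous.aestronglyMeasurable
    unfold expo
    fun_prop
  · obtain ⟨x, u, w⟩ := q
    simp only [norm_mul, Complex.norm_exp]
    have h1 := Real.exp_le_exp.2 (expo_re_le R a k x u hk)
    have h2 := Real.exp_le_exp.2 (expo_re_le R a k x w hk)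
    calc _ ≤ (‖ampl R l u‖ * Real.exp (R * (a + x) + k * (R * (R - 1)))) *
          (‖ampl R l w‖ * Real.exp (R * (a + x) + k * (R * (R - 1)))) := by gcongr
      _ = ‖ampl R l u‖ * ‖ampl R l w‖ * (Real.exp (R * (a + x) + k * (R * (R - 1))) *
          Real.exp (R * (a + x) + k * (R * (R - 1)))) := by ring
      _ = ‖ampl R l u‖ * ‖ampl R l w‖ * (Real.exp (2 * (R * a + k * (R * (R - 1)))) *
          Real.exp (2 * R * x)) := by
        rw [← Real.exp_add, ← Real.exp_add]
        ring_nf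
      _ = _ := by ring

/-- closed form of the triple integrand -/
noncomputable def Gform (μ σ T S₀ R : ℝ) (l : ℝ → ℝ) (u w t : ℝ) : ℂ :=
  ampl R l u * ampl R l w *
    cexp (expo R (Real.log S₀ + μ * t) (σ ^ 2 / 2 * (T - t)) 0 u +
      expo R (Real.log S₀ + μ * t) (σ ^ 2 / 2 * (T - t)) 0 w +
      ((σ ^ 2 * t : ℝ) : ℂ) * (zLine R u + zLine R w) ^ 2 / 2)

lemma sq_cashGreek_integral (μ σ T S₀ R : ℝ) (hS₀ : 0 < S₀) (l : ℝ → ℝ)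
    (hi : Integrable l) (hA : Integrable (ampl R l)) (t : ℝ) (ht : t ∈ Set.Icc (0 : ℝ) T) :
    Integrable (fun x : ℝ => (cashGreek (σ ^ 2) T R l 2 t (S₀ * Real.exp (μ * t + x))) ^ 2)
        (gaussianReal 0 (Real.toNNReal (σ ^ 2 * t))) ∧
    ∫ x : ℝ, (cashGreek (σ ^ 2) T R l 2 t (S₀ * Real.exp (μ * t + x))) ^ 2
        ∂(gaussianReal 0 (Real.toNNReal (σ ^ 2 * t))) =
      ∫ q : ℝ × ℝ, Gform μ σ T S₀ R l q.1 q.2 t := by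
  have hk : 0 ≤ σ ^ 2 / 2 * (T - t) := mul_nonneg (by positivity) (by linarith [ht.2])
  have hW := integrable_W R (Real.log S₀ + μ * t) (σ ^ 2 / 2 * (T - t)) hk l hi hA
    (Real.toNNReal (σ ^ 2 * t))
  have e : (fun x : ℝ => (cashGreek (σ ^ 2) T R l 2 t (S₀ * Real.exp (μ * t + x))) ^ 2) =
      fun x => ∫ q : ℝ × ℝ,
        (ampl R l q.1 * cexp (expo R (Real.log S₀ + μ * t) (σ ^ 2 / 2 * (T - t)) x q.1)) *
        (ampl R l q.2 * cexp (expo R (Real.log S₀ + μ * t) (σ ^ 2 / 2 * (T - t)) x q.2)) := by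
    ext x
    rw [cashGreek_eq μ σ T S₀ R hS₀, sq, ← integral_prod_mul]
    rfl
  rw [e]
  refine ⟨hW.integral_prod_left, ?_⟩
  refine (integral_integral_swap (f := fun x (q : ℝ × ℝ) =>
        (ampl R l q.1 * cexp (expo R (Real.log S₀ + μ * t) (σ ^ 2 / 2 * (T - t)) x q.1)) *
        (ampl R l q.2 * cexp (expo R (Real.log S₀ + μ * t) (σ ^ 2 / 2 * (T - t)) x q.2))) hW).trans ?_
  refine integral_congr_ae (Filter.Eventually.of_forall ?_)
  rintro ⟨u, w⟩
  have hm := complexMGF_id_gaussianReal (μ := 0) (v := Real.toNNReal (σ ^ 2 * t))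
    (zLine R u + zLine R w)
  rw [complexMGF, Real.coe_toNNReal _ (mul_nonneg (sq_nonneg σ) ht.1)] at hm
  simp only [id, ofReal_zero, mul_zero, zero_add] at hm
  simp only [Gform]
  rw [Complex.exp_add _ (_ / 2), ← hm, ← mul_assoc, ← integral_const_mul]
  congr 1
  ext x
  have : ∀ y, expo R (Real.log S₀ + μ * t) (σ ^ 2 / 2 * (T - t)) x y =
      expo R (Real.log S₀ + μ * t) (σ ^ 2 / 2 * (T - t)) 0 y + zLine R y * x := by
    intro y
    unfold expo
    push_cast
    ring
  simp only [this, add_mul, Complex.exp_add]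
  ring

lemma integrable_Gform (μ σ T S₀ R : ℝ) (l : ℝ → ℝ)
    (hi : Integrable l) (hA : Integrable (ampl R l)) :
    Integrable (fun q : (ℝ × ℝ) × ℝ => Gform μ σ T S₀ R l q.1.1 q.1.2 q.2)
      (((volume : Measure ℝ).prod (volume : Measure ℝ)).prod
        ((volume : Measure ℝ).restrict (Set.Ioc 0 T))) := by
  have hcA := continuous_ampl R l hi
  have hcz := continuous_zLine R
  let b : ℝ → ℝ := fun t => Real.exp (2 * (R * (Real.log S₀ + μ * t) +
    σ ^ 2 / 2 * (T - t) * (R * (R - 1))) + σ ^ 2 * t * (2 * R ^ 2))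
  have hb : Integrable b ((volume : Measure ℝ).restrict (Set.Ioc 0 T)) := by
    have : Continuous b := by fun_prop
    exact (this.integrableOn_Icc (a := 0) (b := T)).mono_set Set.Ioc_subset_Icc_self
  have hB := (hA.norm.mul_prod hA.norm).mul_prod hb
  refine hB.mono' ?_ ?_
  · apply Continuous.aestronglyMeasurable
    unfold Gform expo
    fun_prop
  · have hae : ∀ᵐ q : (ℝ × ℝ) × ℝ ∂(((volume : Measure ℝ).prod (volume : Measure ℝ)).prod
        ((volume : Measure ℝ).restrict (Set.Ioc 0 T))), q.2 ∈ Set.Ioc 0 T :=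
      Measure.quasiMeasurePreserving_snd.ae (ae_restrict_mem measurableSet_Ioc)
    filter_upwards [hae] with q hq
    obtain ⟨⟨u, w⟩, t⟩ := q
    simp only at hq
    unfold Gform
    rw [norm_mul, norm_mul, Complex.norm_exp]
    have hk : 0 ≤ σ ^ 2 / 2 * (T - t) := mul_nonneg (by positivity) (by linarith [hq.2])
    have h1 := expo_re_le R (Real.log S₀ + μ * t) _ 0 u hk
    have h2 := expo_re_le R (Real.log S₀ + μ * t) _ 0 w hk
    have h3 : (((σ ^ 2 * t : ℝ) : ℂ) * (zLine R u + zLine R w) ^ 2 / 2).re ≤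
        σ ^ 2 * t * (2 * R ^ 2) := by
      have e : (((σ ^ 2 * t : ℝ) : ℂ) * (zLine R u + zLine R w) ^ 2 / 2) =
          ((σ ^ 2 * t / 2 : ℝ) : ℂ) * (zLine R u + zLine R w) ^ 2 := by
        push_cast
        ring
      rw [e, Complex.re_ofReal_mul, sq (zLine R u + zLine R w), mul_re, add_re, add_im]
      simp only [zLine_re, zLine_im]
      have : 0 ≤ σ ^ 2 * t := mul_nonneg (sq_nonneg σ) hq.1.le
      nlinarith [mul_nonneg this (sq_nonneg (u + w))]
    have h4 : _ ≤ b t := Real.exp_le_exp.2 (show (expo R (Real.log S₀ + μ * t)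
      (σ ^ 2 / 2 * (T - t)) 0 u + expo R (Real.log S₀ + μ * t) (σ ^ 2 / 2 * (T - t)) 0 w +
      ((σ ^ 2 * t : ℝ) : ℂ) * (zLine R u + zLine R w) ^ 2 / 2).re ≤ _ by
        rw [add_re, add_re]
        linarith)
    gcongr

/-- Fubini-type identity expressing the triple integral appearing in the
second derivative of the hedging error as an expected time-integral of the squared
cash gamma (final computation in the proof of Theorems `errVOapprox`, `errPureapprox`). -/
theorem triple_integral_equals_expected_squared_cash_gamma
    (μ σ T S₀ : ℝ) (hσ : 0 < σ) (hT : 0 < T) (hS₀ : 0 < S₀)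
    (R : ℝ) (hR : R ≠ 0)
    (f : ℝ → ℝ) (hf : ContDiffOn ℝ (⊤ : ℕ∞) f (Set.Ioi 0))
    (l : ℝ → ℝ) (hl : l = fun x => f (Real.exp x) * Real.exp (-R * x))
    (hlint : ∀ n : ℕ, Integrable (iteratedDeriv n l))
    (G : ℝ → ℝ → ℝ → ℂ)
    (hG : ∀ u v t : ℝ, G u v t =
      cpowR S₀ (zLine R u + zLine R v) *
        Complex.exp (((μ : ℂ) * (zLine R u + zLine R v) +
          ((σ ^ 2 : ℝ) : ℂ) / 2 * (zLine R u + zLine R v) ^ 2) * (t : ℂ)) *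
        Complex.exp (((σ ^ 2 : ℝ) : ℂ) / 2 *
          (zLine R u * (zLine R u - 1) + zLine R v * (zLine R v - 1)) * ((T : ℂ) - (t : ℂ))) *
        (zLine R u * (zLine R u - 1)) * (zLine R v * (zLine R v - 1)) *
        pCoef l u * pCoef l v) :
    Integrable (fun q : ℝ × ℝ × ℝ => G q.1 q.2.1 q.2.2)
      ((volume : Measure ℝ).prod
        ((volume : Measure ℝ).prod ((volume : Measure ℝ).restrict (Set.Ioc 0 T)))) ∧
    (∀ t ∈ Set.Icc (0 : ℝ) T,
      Integrable (fun x : ℝ => (cashGreek (σ ^ 2) T R l 2 t (S₀ * Real.exp (μ * t + x))) ^ 2)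
        (gaussianReal 0 (Real.toNNReal (σ ^ 2 * t)))) ∧
    IntervalIntegrable
      (fun t : ℝ => ∫ x : ℝ, (cashGreek (σ ^ 2) T R l 2 t (S₀ * Real.exp (μ * t + x))) ^ 2
        ∂(gaussianReal 0 (Real.toNNReal (σ ^ 2 * t)))) volume 0 T ∧
    (∫ u : ℝ, ∫ v : ℝ, ∫ t in (0 : ℝ)..T, G u v t) =
      ∫ t in (0 : ℝ)..T, ∫ x : ℝ,
        (cashGreek (σ ^ 2) T R l 2 t (S₀ * Real.exp (μ * t + x))) ^ 2
          ∂(gaussianReal 0 (Real.toNNReal (σ ^ 2 * t))) := by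
  have hc : ContDiff ℝ (⊤ : ℕ∞) l := by
    rw [hl]
    refine ContDiff.mul ?_ ?_
    · exact hf.comp_contDiff Real.contDiff_exp (fun x => Real.exp_pos x)
    · exact Real.contDiff_exp.comp (contDiff_const.mul contDiff_id)
  have hi : Integrable l := by simpa using hlint 0
  have hA := integrable_ampl R l hc hlint
  have hGG : ∀ u v t, G u v t = Gform μ σ T S₀ R l u v t := by
    intro u v t
    rw [hG, cpowR, Gform, ampl, ampl]
    have : expo R (Real.log S₀ + μ * t) (σ ^ 2 / 2 * (T - t)) 0 u +
      expo R (Real.log S₀ + μ * t) (σ ^ 2 / 2 * (T - t)) 0 v +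
      ((σ ^ 2 * t : ℝ) : ℂ) * (zLine R u + zLine R v) ^ 2 / 2 =
      (zLine R u + zLine R v) * Real.log S₀ +
      ((μ : ℂ) * (zLine R u + zLine R v) +
          ((σ ^ 2 : ℝ) : ℂ) / 2 * (zLine R u + zLine R v) ^ 2) * (t : ℂ) +
      ((σ ^ 2 : ℝ) : ℂ) / 2 *
          (zLine R u * (zLine R u - 1) + zLine R v * (zLine R v - 1)) * ((T : ℂ) - (t : ℂ)) := by
      unfold expo
      push_cast
      ring
    rw [this, Complex.exp_add, Complex.exp_add]
    ring
  have hG' : G = Gform μ σ T S₀ R l := by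
    funext u v t
    exact hGG u v t
  subst hG'
  clear hG hGG
  have hI := integrable_Gform μ σ T S₀ R l hi hA
  have hmp := measurePreserving_prodAssoc (volume : Measure ℝ) (volume : Measure ℝ)
    ((volume : Measure ℝ).restrict (Set.Ioc 0 T))
  have hI3 : Integrable (fun q : ℝ × ℝ × ℝ => Gform μ σ T S₀ R l q.1 q.2.1 q.2.2)
      ((volume : Measure ℝ).prod
        ((volume : Measure ℝ).prod ((volume : Measure ℝ).restrict (Set.Ioc 0 T)))) :=
    (hmp.integrable_comp_emb MeasurableEquiv.prodAssoc.measurableEmbedding).1 hI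
  have hS := fun t ht => sq_cashGreek_integral μ σ T S₀ R hS₀ l hi hA t ht
  have hEq : Set.EqOn (fun t : ℝ => ∫ q : ℝ × ℝ, Gform μ σ T S₀ R l q.1 q.2 t)
      (fun t : ℝ => ∫ x : ℝ, (cashGreek (σ ^ 2) T R l 2 t (S₀ * Real.exp (μ * t + x))) ^ 2
        ∂(gaussianReal 0 (Real.toNNReal (σ ^ 2 * t)))) (Set.Ioc 0 T) :=
    fun t ht => ((hS t (Set.Ioc_subset_Icc_self ht)).2).symm
  refine ⟨hI3, fun t ht => (hS t ht).1, ?_, ?_⟩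
  · rw [intervalIntegrable_iff_integrableOn_Ioc_of_le hT.le]
    exact IntegrableOn.congr_fun hI.integral_prod_right hEq measurableSet_Ioc
  · simp only [intervalIntegral.integral_of_le hT.le]
    rw [← setIntegral_congr_fun measurableSet_Ioc hEq]
    have h1 : ∫ t in Set.Ioc 0 T, ∫ q : ℝ × ℝ, Gform μ σ T S₀ R l q.1 q.2 t =
        ∫ q : ℝ × ℝ, ∫ t in Set.Ioc 0 T, Gform μ σ T S₀ R l q.1 q.2 t :=
      (integral_integral_swap
        (f := fun (q : ℝ × ℝ) (t : ℝ) => Gform μ σ T S₀ R l q.1 q.2 t) hI).symm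
    rw [h1]
    exact (integral_prod (fun q : ℝ × ℝ => ∫ t in Set.Ioc 0 T, Gform μ σ T S₀ R l q.1 q.2 t)
      hI.integral_prod_left).symm
end

section
/- Fix T > 0 and S₀ > 0. With κ, κ̄, η, the payoff data, and J₀(λ; t, y, z) := S₀^{y+z}·(κ̄(λ;y,z) − κ̄(λ;y,1)κ̄(λ;z,1)/κ̄(λ;1,1))·e^{κ(λ,y+z)t + (η(λ,y)+η(λ,z))(T−t)} as defined, let ε₀²(λ) := ∫_ℝ∫_ℝ∫₀ᵀ J₀(λ; t, z_u, z_v)·p(z_u)p(z_v) dt du dv for λ ∈ [0,1]. Then λ ↦ ε₀²(λ) is twice continuously differentiable on [0,1], ε₀²(0) = 0, (ε₀²)'(0) = 0, and ½·(ε₀²)''(0) = ¼σ⁴·(s₄ − s₃²)·∫₀ᵀ ∫_ℝ D₂(t, S₀e^{μt+x})² dγ_{σ²t}(x) dt, where s₃ := (∫x³K(dx))/σ³, s₄ := (∫x⁴K(dx))/σ⁴, D₂ is the Black–Scholes cash greek of order 2, and γ_v denotes the Gaussian measure on ℝ with mean 0 and variance v. -/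
open MeasureTheory ProbabilityTheory Complex Set

open MeasureTheory ProbabilityTheory Complex Set

namespace PHE
open scoped NNReal ENNReal

/-- the measure `x² K(dx)` -/
noncomputable def nu (K : Measure ℝ) : Measure ℝ :=
  K.withDensity (fun x => ((Real.toNNReal (x ^ 2) : ℝ≥0) : ℝ≥0∞))

/-- the measure `(1-s) ds` on `(0,1]` -/
noncomputable def wt : Measure ℝ :=
  (volume.restrict (Ioc (0:ℝ) 1)).withDensity (fun s => ((Real.toNNReal (1 - s) : ℝ≥0) : ℝ≥0∞))

noncomputable def PK (K : Measure ℝ) : Measure (ℝ × ℝ) := wt.prod (nu K)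

/-- the derivatives of the remainder function -/
noncomputable def G (K : Measure ℝ) (n : ℕ) (w : ℂ) : ℂ :=
  ∫ q : ℝ × ℝ, ((q.1 * q.2 : ℝ) : ℂ) ^ n * Complex.exp (w * ((q.1 * q.2 : ℝ) : ℂ)) ∂(PK K)

structure LK (K : Measure ℝ) (a b : ℝ) : Prop where
  hKmin : ∫⁻ x : ℝ, ENNReal.ofReal (min 1 (x ^ 2)) ∂K ≠ ⊤
  h0 : (0 : ℝ) ∈ Set.Ioo a b
  hKexp : ∀ s ∈ Set.Ioo a b,
      ∫⁻ x in {x : ℝ | 1 ≤ |x|}, ENNReal.ofReal (Real.exp (s * x)) ∂K ≠ ⊤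

lemma integrable_exp2 {K : Measure ℝ} {a b : ℝ} (h : LK K a b) {s : ℝ} (hs : s ∈ Ioo a b) :
    Integrable (fun x : ℝ => x ^ 2 * Real.exp (s * x)) K := by
  have h1 : Integrable (fun x : ℝ => min 1 (x ^ 2)) K := by
    refine ⟨by fun_prop, ?_⟩
    rw [hasFiniteIntegral_iff_ofReal (by filter_upwards with x; positivity)]
    exact lt_top_iff_ne_top.2 h.hKmin
  have hm : MeasurableSet {x : ℝ | 1 ≤ |x|} := measurableSet_le measurable_const (by fun_prop)
  have h2 : ∀ r ∈ Ioo a b,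
      Integrable ({x : ℝ | 1 ≤ |x|}.indicator (fun x => Real.exp (r * x))) K := by
    intro r hr
    rw [integrable_indicator_iff hm]
    refine ⟨by fun_prop, ?_⟩
    rw [hasFiniteIntegral_iff_ofReal (by filter_upwards with x; positivity)]
    exact lt_top_iff_ne_top.2 (h.hKexp r hr)
  obtain ⟨ε, hε, he1, he2⟩ : ∃ ε > 0, s + ε ∈ Ioo a b ∧ s - ε ∈ Ioo a b := by
    refine ⟨min (s - a) (b - s) / 2, ?_, ?_, ?_⟩
    · have := hs.1; have := hs.2
      have : 0 < min (s - a) (b - s) := lt_min (by linarith) (by linarith)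
      positivity
    all_goals
      have := hs.1; have := hs.2
      have h3 : 0 < min (s - a) (b - s) := lt_min (by linarith) (by linarith)
      have := min_le_left (s - a) (b - s)
      have := min_le_right (s - a) (b - s)
      constructor <;> linarith
  refine Integrable.mono' ((h1.mul_const (Real.exp |s|)).add
    (((h2 _ he1).add (h2 _ he2)).const_mul (2 / ε ^ 2))) (by fun_prop) ?_
  filter_upwards with x
  have hn : ‖x ^ 2 * Real.exp (s * x)‖ = x ^ 2 * Real.exp (s * x) := by
    rw [Real.norm_of_nonneg (by positivity)]
  rw [hn]
  by_cases hx : 1 ≤ |x|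
  · simp only [Pi.add_apply, indicator, mem_ofPred_eq, hx, if_true]
    have h4 : (ε * x) ^ 2 / 2 ≤ Real.exp (ε * x) + Real.exp (-(ε * x)) := by
      have := Real.quadratic_le_exp_of_nonneg (abs_nonneg (ε * x))
      rw [sq_abs] at this
      have h5 : Real.exp |ε * x| ≤ Real.exp (ε * x) + Real.exp (-(ε * x)) := by
        rcases abs_cases (ε * x) with h | h <;> rw [h.1]
        · linarith [Real.exp_pos (-(ε * x))]
        · linarith [Real.exp_pos (ε * x)]
      linarith [abs_nonneg (ε * x)]
    have h6 : x ^ 2 ≤ 2 / ε ^ 2 * (Real.exp (ε * x) + Real.exp (-(ε * x))) := by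
      rw [div_mul_eq_mul_div, le_div_iff₀ (by positivity)]
      nlinarith
    have h7 : 0 ≤ min 1 (x ^ 2) * Real.exp |s| := by positivity
    have h8 : Real.exp ((s + ε) * x) = Real.exp (ε * x) * Real.exp (s * x) := by
      rw [← Real.exp_add]; ring_nf
    have h9 : Real.exp ((s - ε) * x) = Real.exp (-(ε * x)) * Real.exp (s * x) := by
      rw [← Real.exp_add]; ring_nf
    rw [h8, h9]
    nlinarith [mul_le_mul_of_nonneg_right h6 (Real.exp_pos (s * x)).le]
  · simp only [Pi.add_apply, indicator, mem_ofPred_eq, hx, if_false]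
    push Not at hx
    have h3 : x ^ 2 ≤ 1 := by rw [← sq_abs]; nlinarith [abs_nonneg x]
    rw [min_eq_right h3]
    have : s * x ≤ |s| := by
      calc s * x ≤ |s * x| := le_abs_self _
        _ = |s| * |x| := abs_mul _ _
        _ ≤ |s| := by nlinarith [abs_nonneg s, abs_nonneg x]
    have := Real.exp_le_exp.2 this
    nlinarith [sq_nonneg x]

lemma nu_integrable_iff {K : Measure ℝ} {E : Type*} [NormedAddCommGroup E] [NormedSpace ℝ E]
    {g : ℝ → E} : Integrable g (nu K) ↔ Integrable (fun x => (x ^ 2 : ℝ) • g x) K := by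
  unfold nu
  rw [integrable_withDensity_iff_integrable_smul (by fun_prop)]
  refine integrable_congr ?_
  filter_upwards with x
  rw [NNReal.smul_def, Real.coe_toNNReal _ (sq_nonneg x)]

lemma nu_integral {K : Measure ℝ} {E : Type*} [NormedAddCommGroup E] [NormedSpace ℝ E]
    (g : ℝ → E) : ∫ x, g x ∂(nu K) = ∫ x, (x ^ 2 : ℝ) • g x ∂K := by
  unfold nu
  rw [integral_withDensity_eq_integral_smul (by fun_prop)]
  refine integral_congr_ae ?_
  filter_upwards with x
  rw [NNReal.smul_def, Real.coe_toNNReal _ (sq_nonneg x)]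

lemma wt_integral {E : Type*} [NormedAddCommGroup E] [NormedSpace ℝ E]
    (g : ℝ → E) : ∫ s, g s ∂wt = ∫ s in (0:ℝ)..1, (1 - s) • g s := by
  unfold wt
  rw [integral_withDensity_eq_integral_smul (by fun_prop), intervalIntegral.integral_of_le (by simp)]
  refine setIntegral_congr_fun measurableSet_Ioc ?_
  intro s hs
  simp only
  rw [NNReal.smul_def, Real.coe_toNNReal _ (by linarith [hs.2])]

lemma finite_nu {K : Measure ℝ} {a b : ℝ} (h : LK K a b) : IsFiniteMeasure (nu K) := by
  have h1 : Integrable (fun _ : ℝ => (1:ℝ)) (nu K) := by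
    rw [nu_integrable_iff]
    simpa using integrable_exp2 h h.h0
  rw [integrable_const_iff] at h1
  simpa using h1

instance finite_wt : IsFiniteMeasure wt := by
  unfold wt
  apply isFiniteMeasure_withDensity_ofReal (f := fun s => 1 - s)
  have : IntegrableOn (fun s : ℝ => 1 - s) (Icc 0 1) := by
    apply ContinuousOn.integrableOn_compact isCompact_Icc; fun_prop
  exact (this.mono_set Ioc_subset_Icc_self).2

instance sfinite_nu {K : Measure ℝ} [IsFiniteMeasure (nu K)] : SFinite (nu K) := inferInstance

lemma ae_wt : ∀ᵐ s ∂wt, s ∈ Icc (0:ℝ) 1 := by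
  unfold wt
  apply (withDensity_absolutelyContinuous _ _).ae_le
  filter_upwards [ae_restrict_mem measurableSet_Ioc] with s hs using Ioc_subset_Icc_self hs

lemma integrable_PK {K : Measure ℝ} {a b : ℝ} (h : LK K a b) {s : ℝ} (hs : s ∈ Ioo a b) :
    Integrable (fun q : ℝ × ℝ => Real.exp (s * (q.1 * q.2))) (PK K) := by
  have := finite_nu h
  have h1 : Integrable (fun x : ℝ => 1 + Real.exp (s * x)) (nu K) := by
    refine (integrable_const _).add ?_
    rw [nu_integrable_iff]
    exact integrable_exp2 h hs
  have h2 : Integrable (fun q : ℝ × ℝ => 1 + Real.exp (s * q.2)) (PK K) := by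
    unfold PK
    exact h1.comp_snd wt
  refine h2.mono' (by fun_prop) ?_
  have h3 : ∀ᵐ q ∂(PK K), q.1 ∈ Icc (0:ℝ) 1 :=
    Measure.quasiMeasurePreserving_fst.ae ae_wt
  filter_upwards [h3] with q hq
  rw [Real.norm_of_nonneg (Real.exp_pos _).le]
  rcases le_total 0 (s * q.2) with h | h
  · have : s * (q.1 * q.2) ≤ s * q.2 := by nlinarith [hq.1, hq.2]
    linarith [Real.exp_le_exp.2 this]
  · have : s * (q.1 * q.2) ≤ 0 := by nlinarith [hq.1, hq.2]
    linarith [Real.exp_le_one_iff.2 this, Real.exp_pos (s * q.2)]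

lemma mem_interior_PK {K : Measure ℝ} {a b : ℝ} (h : LK K a b) {s : ℝ} (hs : s ∈ Ioo a b) :
    s ∈ interior (integrableExpSet (fun q : ℝ × ℝ => q.1 * q.2) (PK K)) := by
  have : Ioo a b ⊆ integrableExpSet (fun q : ℝ × ℝ => q.1 * q.2) (PK K) :=
    fun r hr => integrable_PK h hr
  exact interior_mono this (by rwa [interior_Ioo])

lemma hasDerivAt_G {K : Measure ℝ} {a b : ℝ} (h : LK K a b) {w : ℂ} (hw : w.re ∈ Ioo a b) (n : ℕ) :
    HasDerivAt (G K n) (G K (n + 1) w) w :=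
  hasDerivAt_integral_pow_mul_exp (X := fun q : ℝ × ℝ => q.1 * q.2) (mem_interior_PK h hw) n

lemma G_bound {K : Measure ℝ} {a b : ℝ} (h : LK K a b) {a' b' : ℝ} (ha : a' ∈ Ioo a b)
    (hb : b' ∈ Ioo a b) (n : ℕ) :
    ∃ C, ∀ w : ℂ, w.re ∈ Icc a' b' → ‖G K n w‖ ≤ C := by
  have I1 := integrable_pow_abs_mul_exp_of_mem_interior_integrableExpSet (mem_interior_PK h ha) n
  have I2 := integrable_pow_abs_mul_exp_of_mem_interior_integrableExpSet (mem_interior_PK h hb) n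
  refine ⟨_, fun w hw => norm_integral_le_of_norm_le (I1.add I2) ?_⟩
  filter_upwards with q
  simp only [norm_mul, norm_pow, Complex.norm_real, Real.norm_eq_abs, Complex.norm_exp,
    Pi.add_apply]
  rw [← mul_add]
  have h1 : (w * ((q.1 * q.2 : ℝ) : ℂ)).re = w.re * (q.1 * q.2) := Complex.re_mul_ofReal _ _
  rw [h1]
  have h2 : Real.exp (w.re * (q.1 * q.2)) ≤
      Real.exp (a' * (q.1 * q.2)) + Real.exp (b' * (q.1 * q.2)) := by
    rcases le_total 0 (q.1 * q.2) with h | h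
    · have := Real.exp_le_exp.2 (mul_le_mul_of_nonneg_right hw.2 h)
      linarith [Real.exp_pos (a' * (q.1 * q.2))]
    · have := Real.exp_le_exp.2 (mul_le_mul_of_nonpos_right hw.1 h)
      linarith [Real.exp_pos (b' * (q.1 * q.2))]
  simp only [abs_mul] at *
  gcongr

lemma measurable_G {K : Measure ℝ} {a b : ℝ} (h : LK K a b) (n : ℕ) : Measurable (G K n) := by
  have := finite_nu h
  have h1 : StronglyMeasurable (fun p : ℂ × (ℝ × ℝ) =>
      ((p.2.1 * p.2.2 : ℝ) : ℂ) ^ n * Complex.exp (p.1 * ((p.2.1 * p.2.2 : ℝ) : ℂ))) := by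
    apply Measurable.stronglyMeasurable; fun_prop
  have : SFinite (PK K) := by unfold PK; infer_instance
  exact (h1.integral_prod_right' (ν := PK K)).measurable

lemma phi_id (w : ℂ) (x : ℝ) :
    w ^ 2 * ((x ^ 2 : ℝ) • ∫ s, Complex.exp (w * ((s * x : ℝ) : ℂ)) ∂wt) =
      Complex.exp (w * x) - 1 - w * x := by
  rw [wt_integral]
  have key : ∫ s in (0:ℝ)..1, (w ^ 2 * (x:ℂ) ^ 2) * ((1 - s) • Complex.exp (w * ((s * x : ℝ) : ℂ))) =
      (Complex.exp (w * x) - 1 - w * x) := by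
    have hd : ∀ s ∈ uIcc (0:ℝ) 1, HasDerivAt
        (fun s : ℝ => (w * x * (1 - s) + 1) * Complex.exp (w * ((s * x : ℝ) : ℂ)))
        ((w ^ 2 * (x:ℂ) ^ 2) * ((1 - s) • Complex.exp (w * ((s * x : ℝ) : ℂ)))) s := by
      intro s _
      have e1 : HasDerivAt (fun s : ℝ => (s : ℂ)) 1 s := Complex.ofRealCLM.hasDerivAt
      have e2 : HasDerivAt (fun s : ℝ => w * x * (1 - s) + 1) (w * x * (0 - 1)) s :=
        (((hasDerivAt_const s (1:ℂ)).sub e1).const_mul (w * x)).add_const 1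
      have e3 : HasDerivAt (fun s : ℝ => Complex.exp (w * ((s * x : ℝ) : ℂ)))
          (Complex.exp (w * ((s * x : ℝ) : ℂ)) * (w * (1 * x))) s := by
        have := ((e1.mul_const (x:ℂ)).const_mul w).cexp
        simpa using this
      convert! e2.mul e3 using 1
      rw [Complex.real_smul]; push_cast; ring
    rw [intervalIntegral.integral_eq_sub_of_hasDerivAt hd]
    · simp; ring
    · apply Continuous.intervalIntegrable; fun_prop
  rw [← key, intervalIntegral.integral_const_mul, Complex.real_smul]
  push_cast; ring

lemma integrable_cexp_PK {K : Measure ℝ} {a b : ℝ} (h : LK K a b) {w : ℂ} (hw : w.re ∈ Ioo a b) :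
    Integrable (fun q : ℝ × ℝ => Complex.exp (w * ((q.1 * q.2 : ℝ) : ℂ))) (wt.prod (nu K)) :=
  integrable_cexp_mul_of_re_mem_interior_integrableExpSet
      (X := fun q : ℝ × ℝ => q.1 * q.2) (mem_interior_PK h hw)

lemma integrable_levy {K : Measure ℝ} {a b : ℝ} (h : LK K a b) {w : ℂ} (hw : w.re ∈ Ioo a b) :
    Integrable (fun x : ℝ => Complex.exp (w * x) - 1 - w * x) K := by
  have := finite_nu h
  have h1 := (integrable_cexp_PK h hw).integral_prod_right
  rw [nu_integrable_iff] at h1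
  have h2 := h1.const_mul (w ^ 2)
  refine h2.congr ?_
  filter_upwards with x using phi_id w x

lemma G_zero_mul {K : Measure ℝ} {a b : ℝ} (h : LK K a b) {w : ℂ} (hw : w.re ∈ Ioo a b) :
    w ^ 2 * G K 0 w = ∫ x : ℝ, (Complex.exp (w * x) - 1 - w * x) ∂K := by
  have := finite_nu h
  unfold G PK
  simp only [pow_zero, one_mul]
  rw [integral_prod_symm _ (integrable_cexp_PK h hw), nu_integral, ← integral_const_mul]
  refine integral_congr_ae ?_
  filter_upwards with x using phi_id w x

lemma G_at_zero {K : Measure ℝ} {a b : ℝ} (h : LK K a b) (n : ℕ) :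
    G K n 0 = (((∫ s in (0:ℝ)..1, (1 - s) * s ^ n) * ∫ x : ℝ, x ^ (n + 2) ∂K : ℝ) : ℂ) := by
  have := finite_nu h
  have e1 := wt_integral (fun s : ℝ => s ^ n)
  have e2 := nu_integral (K := K) (fun s : ℝ => s ^ n)
  simp only [smul_eq_mul] at e1 e2
  have e3 : ∀ x : ℝ, x ^ (n + 2) = x ^ 2 * x ^ n := fun x => by ring
  simp_rw [e3]
  rw [← e1, ← e2, ← integral_prod_mul, ← integral_complex_ofReal]
  unfold G PK
  congr 1; ext q; simp [mul_pow]

lemma wt_moment (n : ℕ) : ∫ s in (0:ℝ)..1, (1 - s) * s ^ n = 1 / (n + 1) - 1 / (n + 2) := by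
  have : ∀ s : ℝ, (1 - s) * s ^ n = s ^ n - s ^ (n + 1) := fun s => by ring
  simp_rw [this]
  rw [intervalIntegral.integral_sub (by simp) (by simp), integral_pow, integral_pow]
  simp
  ring

lemma kappa_eq {K : Measure ℝ} {a b : ℝ} (h : LK K a b) (μ c lam : ℝ) (z : ℂ)
    (hz : lam * z.re ∈ Ioo a b) :
    kappa μ c K lam z = μ * z + c / 2 * z ^ 2 + z ^ 2 * G K 0 (lam * z) := by
  unfold kappa
  split_ifs with h0
  · subst h0
    have h1 : ∫ s in (0:ℝ)..1, (1 - s) * s ^ 0 = 1 / 2 := by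
      rw [wt_moment]; norm_num
    simp only [Complex.ofReal_zero, zero_mul]
    rw [G_at_zero h, h1]
    push_cast; ring
  · have h1 : ((lam : ℂ) * z).re ∈ Ioo a b := by simpa using hz
    rw [← G_zero_mul h h1]
    have : (lam : ℂ) ≠ 0 := by exact_mod_cast h0
    field_simp

end PHE

open MeasureTheory ProbabilityTheory Complex Set

namespace PHE
open scoped Topology

variable {X : Type*} [MeasurableSpace X]

/-- polynomial bounds, uniform in the parameter -/
def Bd (I : Set ℝ) (w : X → ℝ) (f : ℝ → X → ℂ) : Prop :=
  ∃ (C : ℝ) (N : ℕ), 0 ≤ C ∧ ∀ l ∈ I, ∀ x, ‖f l x‖ ≤ C * w x ^ N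

lemma Bd.add {I : Set ℝ} {w : X → ℝ} (hw : ∀ x, 1 ≤ w x) {f g : ℝ → X → ℂ}
    (hf : Bd I w f) (hg : Bd I w g) : Bd I w (fun l x => f l x + g l x) := by
  obtain ⟨C, N, hC, h⟩ := hf
  obtain ⟨D, M, hD, h'⟩ := hg
  refine ⟨C + D, N + M, by positivity, fun l hl x => ?_⟩
  have h1 : w x ^ N ≤ w x ^ (N + M) := pow_le_pow_right₀ (hw x) (by omega)
  have h2 : w x ^ M ≤ w x ^ (N + M) := pow_le_pow_right₀ (hw x) (by omega)
  calc _ ≤ ‖f l x‖ + ‖g l x‖ := norm_add_le _ _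
    _ ≤ C * w x ^ N + D * w x ^ M := add_le_add (h l hl x) (h' l hl x)
    _ ≤ C * w x ^ (N + M) + D * w x ^ (N + M) := by gcongr
    _ = _ := by ring

lemma Bd.neg {I : Set ℝ} {w : X → ℝ} {f : ℝ → X → ℂ}
    (hf : Bd I w f) : Bd I w (fun l x => - f l x) := by
  obtain ⟨C, N, hC, h⟩ := hf
  exact ⟨C, N, hC, fun l hl x => by rw [norm_neg]; exact h l hl x⟩

lemma Bd.mul {I : Set ℝ} {w : X → ℝ} (hw : ∀ x, 1 ≤ w x) {f g : ℝ → X → ℂ}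
    (hf : Bd I w f) (hg : Bd I w g) : Bd I w (fun l x => f l x * g l x) := by
  obtain ⟨C, N, hC, h⟩ := hf
  obtain ⟨D, M, hD, h'⟩ := hg
  refine ⟨C * D, N + M, by positivity, fun l hl x => ?_⟩
  have h0 : 0 ≤ w x := zero_le_one.trans (hw x)
  rw [norm_mul]
  calc _ ≤ (C * w x ^ N) * (D * w x ^ M) :=
        mul_le_mul (h l hl x) (h' l hl x) (norm_nonneg _) (by positivity)
    _ = _ := by ring

lemma Bd.const {I : Set ℝ} {w : X → ℝ} {f : ℝ → X → ℂ} {C : ℝ}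
    (h : ∀ l ∈ I, ∀ x, ‖f l x‖ ≤ C) : Bd I w f := by
  refine ⟨max C 0, 0, le_max_right _ _, fun l hl x => ?_⟩
  simpa using Or.inl (h l hl x)

structure Tame (I : Set ℝ) (w : X → ℝ) (f f1 f2 : ℝ → X → ℂ) : Prop where
  d1 : ∀ l ∈ I, ∀ x, HasDerivAt (fun l => f l x) (f1 l x) l
  d2 : ∀ l ∈ I, ∀ x, HasDerivAt (fun l => f1 l x) (f2 l x) l
  c2 : ∀ x, ContinuousOn (fun l => f2 l x) I
  m0 : ∀ l ∈ I, Measurable (f l)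
  m1 : ∀ l ∈ I, Measurable (f1 l)
  m2 : ∀ l ∈ I, Measurable (f2 l)
  b0 : Bd I w f
  b1 : Bd I w f1
  b2 : Bd I w f2

lemma Tame.c0 {I : Set ℝ} {w : X → ℝ} {f f1 f2 : ℝ → X → ℂ} (h : Tame I w f f1 f2) (x : X) :
    ContinuousOn (fun l => f l x) I := fun l hl => (h.d1 l hl x).continuousAt.continuousWithinAt

lemma Tame.c1 {I : Set ℝ} {w : X → ℝ} {f f1 f2 : ℝ → X → ℂ} (h : Tame I w f f1 f2) (x : X) :
    ContinuousOn (fun l => f1 l x) I := fun l hl => (h.d2 l hl x).continuousAt.continuousWithinAt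

lemma Tame.const {I : Set ℝ} {w : X → ℝ} {g : X → ℂ} (hm : Measurable g)
    (hb : Bd I w (fun _ => g)) :
    Tame I w (fun _ x => g x) (fun _ _ => 0) (fun _ _ => 0) where
  d1 l _ x := hasDerivAt_const _ _
  d2 l _ x := hasDerivAt_const _ _
  c2 x := continuousOn_const
  m0 _ _ := hm
  m1 _ _ := measurable_const
  m2 _ _ := measurable_const
  b0 := hb
  b1 := Bd.const (C := 0) (by simp)
  b2 := Bd.const (C := 0) (by simp)

lemma Tame.add {I : Set ℝ} {w : X → ℝ} (hw : ∀ x, 1 ≤ w x) {f f1 f2 g g1 g2 : ℝ → X → ℂ}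
    (hf : Tame I w f f1 f2) (hg : Tame I w g g1 g2) :
    Tame I w (fun l x => f l x + g l x) (fun l x => f1 l x + g1 l x)
      (fun l x => f2 l x + g2 l x) where
  d1 l hl x := (hf.d1 l hl x).add (hg.d1 l hl x)
  d2 l hl x := (hf.d2 l hl x).add (hg.d2 l hl x)
  c2 x := (hf.c2 x).add (hg.c2 x)
  m0 l hl := (hf.m0 l hl).add (hg.m0 l hl)
  m1 l hl := (hf.m1 l hl).add (hg.m1 l hl)
  m2 l hl := (hf.m2 l hl).add (hg.m2 l hl)
  b0 := hf.b0.add hw hg.b0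
  b1 := hf.b1.add hw hg.b1
  b2 := hf.b2.add hw hg.b2

lemma Tame.neg {I : Set ℝ} {w : X → ℝ} {f f1 f2 : ℝ → X → ℂ}
    (hf : Tame I w f f1 f2) :
    Tame I w (fun l x => - f l x) (fun l x => - f1 l x) (fun l x => - f2 l x) where
  d1 l hl x := (hf.d1 l hl x).neg
  d2 l hl x := (hf.d2 l hl x).neg
  c2 x := (hf.c2 x).neg
  m0 l hl := (hf.m0 l hl).neg
  m1 l hl := (hf.m1 l hl).neg
  m2 l hl := (hf.m2 l hl).neg
  b0 := hf.b0.neg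
  b1 := hf.b1.neg
  b2 := hf.b2.neg

lemma Tame.congr {I : Set ℝ} (hI : IsOpen I) {w : X → ℝ} {f g f1 f2 : ℝ → X → ℂ}
    (hf : Tame I w f f1 f2) (h : ∀ l ∈ I, ∀ x, g l x = f l x) : Tame I w g f1 f2 where
  d1 l hl x := by
    refine (hf.d1 l hl x).congr_of_eventuallyEq ?_
    filter_upwards [hI.mem_nhds hl] with k hk using h k hk x
  d2 := hf.d2
  c2 := hf.c2
  m0 l hl := by
    have : g l = f l := funext (h l hl)
    rw [this]; exact hf.m0 l hl
  m1 := hf.m1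
  m2 := hf.m2
  b0 := by
    obtain ⟨C, N, hC, hb⟩ := hf.b0
    exact ⟨C, N, hC, fun l hl x => by rw [h l hl x]; exact hb l hl x⟩
  b1 := hf.b1
  b2 := hf.b2

lemma Tame.sub {I : Set ℝ} (hI : IsOpen I) {w : X → ℝ} (hw : ∀ x, 1 ≤ w x)
    {f f1 f2 g g1 g2 : ℝ → X → ℂ}
    (hf : Tame I w f f1 f2) (hg : Tame I w g g1 g2) :
    Tame I w (fun l x => f l x - g l x) (fun l x => f1 l x + - g1 l x)
      (fun l x => f2 l x + - g2 l x) :=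
  (hf.add hw hg.neg).congr hI (fun l _ x => sub_eq_add_neg _ _)

lemma Tame.mul {I : Set ℝ} {w : X → ℝ} (hw : ∀ x, 1 ≤ w x) {f f1 f2 g g1 g2 : ℝ → X → ℂ}
    (hf : Tame I w f f1 f2) (hg : Tame I w g g1 g2) :
    Tame I w (fun l x => f l x * g l x) (fun l x => f1 l x * g l x + f l x * g1 l x)
      (fun l x => (f2 l x * g l x + f1 l x * g1 l x) + (f1 l x * g1 l x + f l x * g2 l x)) where
  d1 l hl x := (hf.d1 l hl x).mul (hg.d1 l hl x)
  d2 l hl x := ((hf.d2 l hl x).mul (hg.d1 l hl x)).add ((hf.d1 l hl x).mul (hg.d2 l hl x))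
  c2 x := (((hf.c2 x).mul (hg.c0 x)).add ((hf.c1 x).mul (hg.c1 x))).add
    (((hf.c1 x).mul (hg.c1 x)).add ((hf.c0 x).mul (hg.c2 x)))
  m0 l hl := (hf.m0 l hl).mul (hg.m0 l hl)
  m1 l hl := ((hf.m1 l hl).mul (hg.m0 l hl)).add ((hf.m0 l hl).mul (hg.m1 l hl))
  m2 l hl := (((hf.m2 l hl).mul (hg.m0 l hl)).add ((hf.m1 l hl).mul (hg.m1 l hl))).add
    (((hf.m1 l hl).mul (hg.m1 l hl)).add ((hf.m0 l hl).mul (hg.m2 l hl)))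
  b0 := hf.b0.mul hw hg.b0
  b1 := (hf.b1.mul hw hg.b0).add hw (hf.b0.mul hw hg.b1)
  b2 := ((hf.b2.mul hw hg.b0).add hw (hf.b1.mul hw hg.b1)).add hw
    ((hf.b1.mul hw hg.b1).add hw (hf.b0.mul hw hg.b2))

lemma Tame.exp {I : Set ℝ} {w : X → ℝ} (hw : ∀ x, 1 ≤ w x) {g g1 g2 : ℝ → X → ℂ}
    (hg : Tame I w g g1 g2) {B : ℝ} (hB : ∀ l ∈ I, ∀ x, (g l x).re ≤ B) :
    Tame I w (fun l x => Complex.exp (g l x)) (fun l x => Complex.exp (g l x) * g1 l x)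
      (fun l x => Complex.exp (g l x) * g1 l x * g1 l x + Complex.exp (g l x) * g2 l x) := by
  have be : Bd I w (fun l x => Complex.exp (g l x)) := by
    refine Bd.const (C := Real.exp B) fun l hl x => ?_
    rw [Complex.norm_exp]; exact Real.exp_le_exp.2 (hB l hl x)
  have de : ∀ l ∈ I, ∀ x, HasDerivAt (fun l => Complex.exp (g l x))
      (Complex.exp (g l x) * g1 l x) l := fun l hl x => (hg.d1 l hl x).cexp
  have ce : ∀ x, ContinuousOn (fun l => Complex.exp (g l x)) I := fun x => (hg.c0 x).cexp
  have me : ∀ l ∈ I, Measurable (fun x => Complex.exp (g l x)) := fun l hl => (hg.m0 l hl).cexp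
  exact
  { d1 := de
    d2 := fun l hl x => (de l hl x).mul (hg.d2 l hl x)
    c2 := fun x => (((ce x).mul (hg.c1 x)).mul (hg.c1 x)).add ((ce x).mul (hg.c2 x))
    m0 := me
    m1 := fun l hl => (me l hl).mul (hg.m1 l hl)
    m2 := fun l hl => (((me l hl).mul (hg.m1 l hl)).mul (hg.m1 l hl)).add
      ((me l hl).mul (hg.m2 l hl))
    b0 := be
    b1 := be.mul hw hg.b1
    b2 := ((be.mul hw hg.b1).mul hw hg.b1).add hw (be.mul hw hg.b2) }

lemma Tame.inv {I : Set ℝ} {w : X → ℝ} (hw : ∀ x, 1 ≤ w x) {g g1 g2 : ℝ → X → ℂ}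
    (hg : Tame I w g g1 g2) {m : ℝ} (hm : 0 < m) (hB : ∀ l ∈ I, ∀ x, m ≤ ‖g l x‖) :
    Tame I w (fun l x => (g l x)⁻¹) (fun l x => -((g l x)⁻¹ * (g l x)⁻¹ * g1 l x))
      (fun l x => (g l x)⁻¹ * (g l x)⁻¹ * (g l x)⁻¹ * g1 l x * g1 l x * 2
        + -((g l x)⁻¹ * (g l x)⁻¹ * g2 l x)) := by
  have be : Bd I w (fun l x => (g l x)⁻¹) := by
    refine Bd.const (C := m⁻¹) fun l hl x => ?_
    rw [norm_inv]; exact inv_anti₀ hm (hB l hl x)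
  have ne : ∀ l ∈ I, ∀ x, g l x ≠ 0 := fun l hl x h => by
    have := hB l hl x; rw [h, norm_zero] at this; linarith
  have de : ∀ l ∈ I, ∀ x, HasDerivAt (fun l => (g l x)⁻¹)
      (-((g l x)⁻¹ * (g l x)⁻¹ * g1 l x)) l := fun l hl x => by
    convert! (hg.d1 l hl x).inv (ne l hl x) using 1
    have := ne l hl x
    field_simp
  have ce : ∀ x, ContinuousOn (fun l => (g l x)⁻¹) I := fun x l hl =>
    (de l hl x).continuousAt.continuousWithinAt
  have me : ∀ l ∈ I, Measurable (fun x => (g l x)⁻¹) := fun l hl => (hg.m0 l hl).inv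
  have b2' : Bd I w (fun _ _ => (2:ℂ)) := Bd.const (C := 2) (by simp)
  exact
  { d1 := de
    d2 := fun l hl x => by
      convert! (((de l hl x).mul (de l hl x)).mul (hg.d2 l hl x)).neg using 1
      have := ne l hl x
      simp only [Pi.mul_apply]
      field_simp
      ring
    c2 := fun x => ((((((ce x).mul (ce x)).mul (ce x)).mul (hg.c1 x)).mul (hg.c1 x)).mul
      continuousOn_const).add (((ce x).mul (ce x)).mul (hg.c2 x)).neg
    m0 := me
    m1 := fun l hl => (((me l hl).mul (me l hl)).mul (hg.m1 l hl)).neg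
    m2 := fun l hl => ((((((me l hl).mul (me l hl)).mul (me l hl)).mul (hg.m1 l hl)).mul
      (hg.m1 l hl)).mul measurable_const).add (((me l hl).mul (me l hl)).mul (hg.m2 l hl)).neg
    b0 := be
    b1 := ((be.mul hw be).mul hw hg.b1).neg
    b2 := ((((((be.mul hw be).mul hw be).mul hw hg.b1).mul hw hg.b1).mul hw b2').add hw
      ((be.mul hw be).mul hw hg.b2).neg) }

/-- integrability and differentiation under the integral sign -/
lemma Bd.integrable {I : Set ℝ} {w : X → ℝ} {f : ℝ → X → ℂ} (hf : Bd I w f)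
    {M : Measure X} {P : X → ℂ} (hP : Measurable P)
    (hPint : ∀ N : ℕ, Integrable (fun x => w x ^ N * ‖P x‖) M) {l : ℝ} (hl : l ∈ I)
    (hm : Measurable (f l)) : Integrable (fun x => f l x * P x) M := by
  obtain ⟨C, N, hC, hb⟩ := hf
  refine ((hPint N).const_mul C).mono' (hm.mul hP).aestronglyMeasurable ?_
  filter_upwards with x
  rw [norm_mul, ← mul_assoc]
  exact mul_le_mul_of_nonneg_right (hb l hl x) (norm_nonneg _)

lemma deriv_under {I : Set ℝ} (hI : IsOpen I) {w : X → ℝ} {f f1 : ℝ → X → ℂ}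
    {M : Measure X} {P : X → ℂ} (hP : Measurable P)
    (hPint : ∀ N : ℕ, Integrable (fun x => w x ^ N * ‖P x‖) M)
    (d : ∀ l ∈ I, ∀ x, HasDerivAt (fun l => f l x) (f1 l x) l)
    (m0 : ∀ l ∈ I, Measurable (f l)) (m1 : ∀ l ∈ I, Measurable (f1 l))
    (b0 : Bd I w f) (b1 : Bd I w f1) {l : ℝ} (hl : l ∈ I) :
    HasDerivAt (fun l => ∫ x, f l x * P x ∂M) (∫ x, f1 l x * P x ∂M) l := by
  have hi := b0.integrable hP hPint hl (m0 l hl)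
  obtain ⟨C, N, hC, hb⟩ := b1
  refine (hasDerivAt_integral_of_dominated_loc_of_deriv_le (F := fun l x => f l x * P x)
    (F' := fun l x => f1 l x * P x) (s := I) (bound := fun x => C * (w x ^ N * ‖P x‖))
    (hI.mem_nhds hl) ?_ hi ((m1 l hl).mul hP).aestronglyMeasurable ?_
    ((hPint N).const_mul C) ?_).2
  · filter_upwards [hI.mem_nhds hl] with k hk using ((m0 k hk).mul hP).aestronglyMeasurable
  · filter_upwards with x k hk
    rw [norm_mul, ← mul_assoc]
    exact mul_le_mul_of_nonneg_right (hb k hk x) (norm_nonneg _)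
  · filter_upwards with x k hk
    exact (d k hk x).mul_const _

lemma cont_under {I : Set ℝ} (hI : IsOpen I) {w : X → ℝ} {f : ℝ → X → ℂ}
    {M : Measure X} {P : X → ℂ} (hP : Measurable P)
    (hPint : ∀ N : ℕ, Integrable (fun x => w x ^ N * ‖P x‖) M)
    (d : ∀ x, ContinuousOn (fun l => f l x) I)
    (m0 : ∀ l ∈ I, Measurable (f l)) (b0 : Bd I w f) :
    ContinuousOn (fun l => ∫ x, f l x * P x ∂M) I := by
  obtain ⟨C, N, hC, hb⟩ := b0
  intro l hl
  apply ContinuousAt.continuousWithinAt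
  refine continuousAt_of_dominated (bound := fun x => C * (w x ^ N * ‖P x‖)) ?_ ?_
    ((hPint N).const_mul C) ?_
  · filter_upwards [hI.mem_nhds hl] with k hk using ((m0 k hk).mul hP).aestronglyMeasurable
  · filter_upwards [hI.mem_nhds hl] with k hk
    filter_upwards with x
    rw [norm_mul, ← mul_assoc]
    exact mul_le_mul_of_nonneg_right (hb k hk x) (norm_nonneg _)
  · filter_upwards with x
    exact ((d x).continuousAt (hI.mem_nhds hl)).mul continuousAt_const

lemma c2_final {I : Set ℝ} (hI : IsOpen I) (hI01 : Icc (0:ℝ) 1 ⊆ I) {e e1 e2 : ℝ → ℂ}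
    (h1 : ∀ l ∈ I, HasDerivAt e (e1 l) l) (h2 : ∀ l ∈ I, HasDerivAt e1 (e2 l) l)
    (hc : ContinuousOn e2 I) :
    ContDiffOn ℝ 2 e (Icc 0 1) ∧ iteratedDerivWithin 1 e (Icc 0 1) 0 = e1 0 ∧
      iteratedDerivWithin 2 e (Icc 0 1) 0 = e2 0 := by
  have hu : UniqueDiffOn ℝ (Icc (0:ℝ) 1) := uniqueDiffOn_Icc one_pos
  have z : (0:ℝ) ∈ Icc (0:ℝ) 1 := by simp
  have E1 : EqOn (derivWithin e (Icc 0 1)) e1 (Icc 0 1) := fun l hl =>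
    (h1 l (hI01 hl)).hasDerivWithinAt.derivWithin (hu l hl)
  have E2 : EqOn (derivWithin e1 (Icc 0 1)) e2 (Icc 0 1) := fun l hl =>
    (h2 l (hI01 hl)).hasDerivWithinAt.derivWithin (hu l hl)
  refine ⟨?_, ?_, ?_⟩
  · have A : ContDiffOn ℝ 1 e1 (Icc 0 1) := by
      rw [show (1 : WithTop ℕ∞) = 0 + 1 from rfl, contDiffOn_succ_iff_derivWithin hu]
      refine ⟨fun l hl => (h2 l (hI01 hl)).differentiableAt.differentiableWithinAt, by simp, ?_⟩
      rw [contDiffOn_zero]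
      exact (hc.mono hI01).congr E2
    rw [show (2 : WithTop ℕ∞) = 1 + 1 from rfl, contDiffOn_succ_iff_derivWithin hu]
    refine ⟨fun l hl => (h1 l (hI01 hl)).differentiableAt.differentiableWithinAt, by simp, ?_⟩
    exact A.congr E1
  · rw [iteratedDerivWithin_one]; exact E1 z
  · rw [show (2:ℕ) = 1 + 1 from rfl, iteratedDerivWithin_succ, ← E2 z]
    refine derivWithin_congr (fun l hl => ?_) ?_
    · rw [iteratedDerivWithin_one]; exact E1 hl
    · rw [iteratedDerivWithin_one]; exact E1 z

end PHE

open MeasureTheory ProbabilityTheory Complex Set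

namespace PHE
open scoped Topology

lemma tame_kappa {X : Type*} [MeasurableSpace X] {K : Measure ℝ} {a b : ℝ} (h : LK K a b)
    (μ c : ℝ) {I : Set ℝ} (hI : IsOpen I) {w : X → ℝ} (hw : ∀ x, 1 ≤ w x) {a' b' : ℝ}
    (ha : a' ∈ Ioo a b) (hb : b' ∈ Ioo a b) {r : ℝ} (hr : ∀ l ∈ I, l * r ∈ Icc a' b')
    {z : X → ℂ} (hz : Measurable z) (hzr : ∀ x, (z x).re = r) {D : ℝ} (hD : 0 ≤ D)
    (hzD : ∀ x, ‖z x‖ ≤ D * w x) :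
    Tame I w (fun l x => kappa μ c K l (z x)) (fun l x => z x ^ 3 * G K 1 (l * z x))
      (fun l x => z x ^ 4 * G K 2 (l * z x)) := by
  have hre : ∀ l : ℝ, ∀ x, ((l : ℂ) * z x).re = l * r := fun l x => by
    rw [Complex.re_ofReal_mul, hzr]
  have hIcc : ∀ l ∈ I, ∀ x, ((l : ℂ) * z x).re ∈ Icc a' b' := fun l hl x => by
    rw [hre]; exact hr l hl
  have hIoo : ∀ l ∈ I, ∀ x, ((l : ℂ) * z x).re ∈ Ioo a b := fun l hl x =>
    ⟨ha.1.trans_le (hIcc l hl x).1, (hIcc l hl x).2.trans_lt hb.2⟩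
  have hd : ∀ n, ∀ l ∈ I, ∀ x, HasDerivAt (fun l : ℝ => G K n (l * z x))
      (G K (n + 1) (l * z x) * z x) l := by
    intro n l hl x
    have e1 : HasDerivAt (fun s : ℝ => (s : ℂ) * z x) (1 * z x) l :=
      (Complex.ofRealCLM.hasDerivAt (x := l)).mul_const (z x)
    have := (hasDerivAt_G h (hIoo l hl x) n).comp l e1
    rw [one_mul] at this
    exact this
  have hbG : ∀ n, Bd I w (fun l x => G K n (l * z x)) := by
    intro n
    obtain ⟨C, hC⟩ := G_bound h ha hb n
    exact Bd.const (C := C) fun l hl x => hC _ (hIcc l hl x)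
  have hbz : Bd I w (fun _ x => z x) := ⟨D, 1, hD, fun l _ x => by simpa using hzD x⟩
  have hbz2 : ∀ n, Bd I w (fun _ x => z x ^ n) := by
    intro n
    induction n with
    | zero => exact Bd.const (C := 1) (by simp)
    | succ n ih => simpa only [pow_succ] using ih.mul hw hbz
  have hmG : ∀ n l, Measurable (fun x => G K n ((l : ℝ) * z x)) := fun n l =>
    (measurable_G h n).comp (hz.const_mul _)
  have T : Tame I w (fun l x => (μ * z x + c / 2 * z x ^ 2) + z x ^ 2 * G K 0 (l * z x))
      (fun l x => z x ^ 3 * G K 1 (l * z x))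
      (fun l x => z x ^ 4 * G K 2 (l * z x)) :=
  { d1 := fun l hl x => by
      convert! ((hd 0 l hl x).const_mul (z x ^ 2)).const_add (μ * z x + c / 2 * z x ^ 2) using 1
      ring
    d2 := fun l hl x => by
      convert! ((hd 1 l hl x).const_mul (z x ^ 3)) using 1
      ring
    c2 := fun x l hl =>
      ((hd 2 l hl x).const_mul (z x ^ 4)).continuousAt.continuousWithinAt
    m0 := fun l _ => by have := hmG 0 l; fun_prop
    m1 := fun l _ => by have := hmG 1 l; fun_prop
    m2 := fun l _ => by have := hmG 2 l; fun_prop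
    b0 := ((Bd.mul hw (Bd.const (C := ‖(μ:ℂ)‖) (by simp)) hbz).add hw
      (Bd.mul hw (Bd.const (C := ‖(c/2:ℂ)‖) (by intros; rfl)) (hbz2 2))).add hw
        ((hbz2 2).mul hw (hbG 0))
    b1 := (hbz2 3).mul hw (hbG 1)
    b2 := (hbz2 4).mul hw (hbG 2) }
  refine T.congr hI fun l hl x => kappa_eq h μ c l (z x) ?_
  have := hIoo l hl x
  rwa [Complex.re_ofReal_mul] at this

lemma re_levy (l r y x : ℝ) :
    (Complex.exp ((l:ℂ) * (r + y * I) * x) - 1 - (l:ℂ) * (r + y * I) * x).re =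
      Real.exp (l * r * x) * Real.cos (l * y * x) - 1 - l * r * x := by
  have : (l:ℂ) * (r + y * I) * x = ((l * r * x : ℝ) : ℂ) + ((l * y * x : ℝ) : ℂ) * I := by
    push_cast; ring
  rw [this]
  simp [Complex.exp_re]

lemma re_kappa {K : Measure ℝ} {a b : ℝ} (h : LK K a b) (μ c l r : ℝ) (hl : l ≠ 0)
    (hr : l * r ∈ Ioo a b) (y : ℝ) :
    Integrable (fun x => Real.exp (l * r * x) * (1 - Real.cos (l * y * x))) K ∧
    (kappa μ c K l (r + y * I)).re = (kappa μ c K l r).re -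
      (c / 2 * y ^ 2 + (l ^ 2)⁻¹ * ∫ x, Real.exp (l * r * x) * (1 - Real.cos (l * y * x)) ∂K) := by
  have key : ∀ y : ℝ, Integrable
      (fun x : ℝ => Real.exp (l * r * x) * Real.cos (l * y * x) - 1 - l * r * x) K ∧
      (kappa μ c K l (r + y * I)).re = μ * r + c / 2 * (r ^ 2 - y ^ 2) + (l ^ 2)⁻¹ *
        ∫ x, (Real.exp (l * r * x) * Real.cos (l * y * x) - 1 - l * r * x) ∂K := by
    intro y
    have I0 : Integrable (fun x : ℝ =>
        Complex.exp ((l:ℂ) * (r + y * I) * x) - 1 - (l:ℂ) * (r + y * I) * x) K := by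
      apply integrable_levy h
      rw [Complex.re_ofReal_mul]; simpa using hr
    have I1 := I0.re
    have e : ∀ x : ℝ, RCLike.re (Complex.exp ((l:ℂ) * (r + y * I) * x) - 1 -
      (l:ℂ) * (r + y * I) * x) = Real.exp (l * r * x) * Real.cos (l * y * x) - 1 - l * r * x :=
      fun x => re_levy l r y x
    have e2 := integral_re I0
    simp only [e] at I1 e2
    refine ⟨I1, ?_⟩
    rw [e2]
    unfold kappa
    rw [if_neg hl]
    have e3 : ((l:ℂ)^2)⁻¹ = (((l^2)⁻¹ : ℝ) : ℂ) := by push_cast; rfl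
    have e4 : (c:ℂ) / 2 = ((c/2 : ℝ) : ℂ) := by push_cast; rfl
    rw [e3, e4, Complex.add_re, Complex.add_re, Complex.re_ofReal_mul, Complex.re_ofReal_mul,
      Complex.re_ofReal_mul]
    simp [pow_two]
  obtain ⟨i1, k1⟩ := key y
  obtain ⟨i0, k0⟩ := key 0
  simp only [mul_zero, zero_mul, Real.cos_zero, mul_one, Complex.ofReal_zero, add_zero] at i0 k0
  have e : ∀ x, Real.exp (l * r * x) * (1 - Real.cos (l * y * x)) =
    (Real.exp (l * r * x) - 1 - l * r * x) -
    (Real.exp (l * r * x) * Real.cos (l * y * x) - 1 - l * r * x) := fun x => by ring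
  simp_rw [e]
  refine ⟨i0.sub i1, ?_⟩
  rw [integral_sub i0 i1, k1, k0]
  ring

lemma re_kappa0 (K : Measure ℝ) (μ c r y : ℝ) :
    (kappa μ c K 0 (r + y * I)).re = (kappa μ c K 0 r).re - (c + ∫ x, x ^ 2 ∂K) / 2 * y ^ 2 := by
  unfold kappa
  simp only [if_true]
  have e4 : (((c + ∫ x, x ^ 2 ∂K : ℝ)):ℂ) / 2 = (((c + ∫ x, x ^ 2 ∂K)/2 : ℝ) : ℂ) := by
    push_cast; rfl
  rw [e4]
  simp only [Complex.add_re, Complex.re_ofReal_mul]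
  simp [pow_two]
  ring

/-- upper bound for the real part of kappa -/
lemma re_kappa_le {K : Measure ℝ} {a b : ℝ} (h : LK K a b) (μ c l r : ℝ) (hc : 0 ≤ c)
    (hr : l * r ∈ Ioo a b) (y : ℝ) :
    (kappa μ c K l (r + y * I)).re ≤ (kappa μ c K l r).re := by
  by_cases hl : l = 0
  · subst hl
    rw [re_kappa0]
    have : 0 ≤ ∫ x, x ^ 2 ∂K := integral_nonneg fun x => sq_nonneg x
    have : 0 ≤ (c + ∫ x, x ^ 2 ∂K) / 2 * y ^ 2 := by positivity
    linarith
  · rw [(re_kappa h μ c l r hl hr y).2]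
    have : 0 ≤ ∫ x, Real.exp (l * r * x) * (1 - Real.cos (l * y * x)) ∂K :=
      integral_nonneg fun x => mul_nonneg (Real.exp_pos _).le (by linarith [Real.cos_le_one (l * y * x)])
    have : 0 ≤ c / 2 * y ^ 2 + (l ^ 2)⁻¹ *
      ∫ x, Real.exp (l * r * x) * (1 - Real.cos (l * y * x)) ∂K := by positivity
    linarith

lemma pos_part_bound (ρ ρ0 v : ℝ) (hρ : |ρ| ≤ ρ0) :
    ρ * (Real.exp v - 1) - 1 ≤ (4 * ρ0 ^ 2 + ρ0) * (v ^ 2 * (1 + Real.exp v)) := by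
  have h0 : 0 ≤ ρ0 := (abs_nonneg _).trans hρ
  have hE := Real.exp_pos v
  have hab : ρ * (Real.exp v - 1) ≤ ρ0 * |Real.exp v - 1| := by
    calc _ ≤ |ρ * (Real.exp v - 1)| := le_abs_self _
      _ = |ρ| * |Real.exp v - 1| := abs_mul _ _
      _ ≤ _ := by gcongr
  rcases le_total v 1 with hv | hv
  · have h1 : |Real.exp v - 1| ≤ 4 * |v| := by
      have hE3 : Real.exp v ≤ 3 := by
        have := Real.exp_le_exp.2 hv
        linarith [Real.exp_one_lt_d9]
      rcases le_total 0 v with h | h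
      · have h2 : Real.exp v - 1 ≤ v * Real.exp v := by
          have := Real.add_one_le_exp (-v)
          have h3 : Real.exp v * Real.exp (-v) = 1 := by rw [← Real.exp_add]; simp
          nlinarith
        rw [abs_of_nonneg (by linarith [Real.add_one_le_exp v]), abs_of_nonneg h]
        nlinarith
      · rw [abs_of_nonpos (by linarith [Real.exp_le_one_iff.2 h]), abs_of_nonpos h]
        linarith [Real.add_one_le_exp v]
    have h2 : ρ0 * |Real.exp v - 1| ≤ ρ0 * (4 * |v|) := by gcongr
    have h3 : ρ0 * (4 * |v|) - 1 ≤ 4 * ρ0 ^ 2 * v ^ 2 := by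
      rw [← sq_abs v]; nlinarith [sq_nonneg (2 * ρ0 * |v| - 1)]
    have h4 : 0 ≤ ρ0 * (v ^ 2 * (1 + Real.exp v)) := by positivity
    have h5 : 0 ≤ 4 * ρ0 ^ 2 * v ^ 2 * Real.exp v := by positivity
    nlinarith
  · rw [abs_of_nonneg (by linarith [Real.add_one_le_exp v])] at hab
    have h4 : 0 ≤ 4 * ρ0 ^ 2 * (v ^ 2 * (1 + Real.exp v)) := by positivity
    have h5 : Real.exp v ≤ v ^ 2 * (1 + Real.exp v) := by
      have : 1 ≤ v ^ 2 := by nlinarith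
      nlinarith
    nlinarith

lemma eta_bound {K : Measure ℝ} {a b : ℝ} (h : LK K a b) (μ c r : ℝ) (hc : 0 ≤ c)
    {a' b' : ℝ} (ha : a' ∈ Ioo a b) (hb : b' ∈ Ioo a b) (ρ0 : ℝ) :
    ∃ C, ∀ l : ℝ, l * r ∈ Icc a' b' → l * (r + 1) ∈ Icc a' b' → ∀ ρ : ℝ, |ρ| ≤ ρ0 → ∀ y : ℝ,
      (1 + ρ) * (kappa μ c K l (r + y * I)).re - ρ * (kappa μ c K l ((r + 1 : ℝ) + y * I)).re ≤
      (1 + ρ) * (kappa μ c K l r).re - ρ * (kappa μ c K l (r + 1 : ℝ)).re + C := by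
  set M : ℝ → ℝ := fun x => x ^ 2 * Real.exp (a' * x) + x ^ 2 * Real.exp (b' * x) with hM
  have iM : Integrable M K := (integrable_exp2 h ha).add (integrable_exp2 h hb)
  have hM0 : ∀ x, 0 ≤ M x := fun x => by positivity
  have hIM : 0 ≤ ∫ x, M x ∂K := integral_nonneg hM0
  refine ⟨4 * (4 * ρ0 ^ 2 + |ρ0|) * ∫ x, M x ∂K, fun l h1 h2 ρ hρ y => ?_⟩
  have h0 : 0 ≤ ρ0 := (abs_nonneg _).trans hρ
  rw [abs_of_nonneg h0]
  have hsub : Icc a' b' ⊆ Ioo a b := fun s hs => ⟨ha.1.trans_le hs.1, hs.2.trans_lt hb.2⟩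
  have hle : ∀ s ∈ Icc a' b', ∀ x, x ^ 2 * Real.exp (s * x) ≤ M x := by
    intro s hs x
    simp only [hM]
    rw [← mul_add]
    refine mul_le_mul_of_nonneg_left ?_ (sq_nonneg x)
    rcases le_total 0 x with h | h
    · linarith [Real.exp_le_exp.2 (mul_le_mul_of_nonneg_right hs.2 h), Real.exp_pos (a' * x)]
    · linarith [Real.exp_le_exp.2 (mul_le_mul_of_nonpos_right hs.1 h), Real.exp_pos (b' * x)]
  by_cases hl : l = 0
  · subst hl
    rw [re_kappa0, re_kappa0]
    have : 0 ≤ ∫ x, x ^ 2 ∂K := integral_nonneg fun x => sq_nonneg x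
    have : 0 ≤ (c + ∫ x, x ^ 2 ∂K) / 2 * y ^ 2 := by positivity
    have : 0 ≤ 4 * (4 * ρ0 ^ 2 + ρ0) * ∫ x, M x ∂K := by positivity
    linarith
  · obtain ⟨i1, k1⟩ := re_kappa h μ c l r hl (hsub h1) y
    obtain ⟨i2, k2⟩ := re_kappa h μ c l (r + 1) hl (hsub h2) y
    rw [k1, k2]
    have key : ρ * (∫ x, Real.exp (l * (r + 1) * x) * (1 - Real.cos (l * y * x)) ∂K) -
        (1 + ρ) * (∫ x, Real.exp (l * r * x) * (1 - Real.cos (l * y * x)) ∂K) ≤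
        l ^ 2 * (4 * (4 * ρ0 ^ 2 + ρ0) * ∫ x, M x ∂K) := by
      rw [← integral_const_mul, ← integral_const_mul, ← integral_const_mul, ← integral_const_mul,
        ← integral_sub (i2.const_mul _) (i1.const_mul _)]
      refine integral_mono ((i2.const_mul _).sub (i1.const_mul _))
        ((iM.const_mul _).const_mul _) fun x => ?_
      simp only
      have e1 : Real.exp (l * (r + 1) * x) = Real.exp (l * r * x) * Real.exp (l * x) := by
        rw [← Real.exp_add]; ring_nf
      have p1 := pos_part_bound ρ ρ0 (l * x) hρ
      have q1 := hle _ h1 x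
      have q2 := hle _ h2 x
      rw [e1] at q2
      have c1 : 0 ≤ 1 - Real.cos (l * y * x) := by linarith [Real.cos_le_one (l * y * x)]
      have c2 : 1 - Real.cos (l * y * x) ≤ 2 := by linarith [Real.neg_one_le_cos (l * y * x)]
      have E := Real.exp_pos (l * r * x)
      calc ρ * (Real.exp (l * (r + 1) * x) * (1 - Real.cos (l * y * x))) -
            (1 + ρ) * (Real.exp (l * r * x) * (1 - Real.cos (l * y * x)))
          = (Real.exp (l * r * x) * (1 - Real.cos (l * y * x))) *
            (ρ * (Real.exp (l * x) - 1) - 1) := by rw [e1]; ring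
        _ ≤ (Real.exp (l * r * x) * (1 - Real.cos (l * y * x))) *
            ((4 * ρ0 ^ 2 + ρ0) * ((l * x) ^ 2 * (1 + Real.exp (l * x)))) := by gcongr
        _ ≤ (Real.exp (l * r * x) * 2) *
            ((4 * ρ0 ^ 2 + ρ0) * ((l * x) ^ 2 * (1 + Real.exp (l * x)))) := by gcongr
        _ = l ^ 2 * (2 * (4 * ρ0 ^ 2 + ρ0) * (x ^ 2 * Real.exp (l * r * x) +
            x ^ 2 * (Real.exp (l * r * x) * Real.exp (l * x)))) := by ring
        _ ≤ l ^ 2 * (2 * (4 * ρ0 ^ 2 + ρ0) * (M x + M x)) := by gcongr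
        _ = _ := by ring
    have l2 : 0 < l ^ 2 := by positivity
    have key2 := mul_le_mul_of_nonneg_left key (inv_pos.2 l2).le
    rw [inv_mul_cancel_left₀ l2.ne'] at key2
    have : 0 ≤ c / 2 * y ^ 2 := by positivity
    linarith

lemma kappa_real (K : Measure ℝ) (μ c l r : ℝ) : (kappa μ c K l r).im = 0 := by
  unfold kappa
  split_ifs with h
  · have e4 : (((c + ∫ x, x ^ 2 ∂K : ℝ)):ℂ) / 2 = (((c + ∫ x, x ^ 2 ∂K)/2 : ℝ) : ℂ) := by
      push_cast; rfl
    rw [e4]; norm_cast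
  · have e : ∀ x : ℝ, Complex.exp ((l:ℂ) * r * x) - 1 - (l:ℂ) * r * x =
      ((Real.exp (l * r * x) - 1 - l * r * x : ℝ) : ℂ) := fun x => by push_cast; rfl
    simp_rw [e]
    rw [integral_complex_ofReal]
    have : (μ:ℂ) * r + c / 2 * r ^ 2 + ((l:ℂ) ^ 2)⁻¹ *
      ((∫ x, (Real.exp (l * r * x) - 1 - l * r * x) ∂K : ℝ) : ℂ) =
      ((μ * r + c / 2 * r ^ 2 + (l ^ 2)⁻¹ *
      (∫ x, (Real.exp (l * r * x) - 1 - l * r * x) ∂K) : ℝ) : ℂ) := by push_cast; rfl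
    rw [this, Complex.ofReal_im]

lemma kbar11_pos {K : Measure ℝ} {a b : ℝ} (h : LK K a b) (μ c l : ℝ) (hc : 0 ≤ c)
    (h1 : l * 1 ∈ Ioo a b) (h2 : l * 2 ∈ Ioo a b) (hs : 0 < c + ∫ x, x ^ 2 ∂K) :
    0 < (kbar μ c K l 1 1).re := by
  unfold kbar
  by_cases hl : l = 0
  · subst hl
    have : kappa μ c K 0 (1 + 1) - kappa μ c K 0 1 - kappa μ c K 0 1 =
        ((c + ∫ x, x ^ 2 ∂K : ℝ) : ℂ) := by
      unfold kappa; simp only [if_true]; ring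
    rw [this]; simpa using hs
  · have i1 := integrable_levy h (w := (l:ℂ) * 1) (by simpa using h1)
    have i2 := integrable_levy h (w := (l:ℂ) * (1 + 1)) (by
      rw [Complex.re_ofReal_mul]; norm_num; exact h2)
    have iq : Integrable (fun x : ℝ => (Real.exp (l * x) - 1) ^ 2) K := by
      have := ((i2.sub i1).sub i1).re
      refine this.congr ?_
      filter_upwards with x
      have e : (Complex.exp (↑l * (1 + 1) * ↑x) - 1 - ↑l * (1 + 1) * ↑x) -
         (Complex.exp (↑l * 1 * ↑x) - 1 - ↑l * 1 * ↑x) - (Complex.exp (↑l * 1 * ↑x) - 1 - ↑l * 1 * ↑x)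
         = (((Real.exp (l * x) - 1) ^ 2 : ℝ) : ℂ) := by
        have : Complex.exp (↑l * (1 + 1) * ↑x) = Complex.exp (l * x) * Complex.exp (l * x) := by
          rw [← Complex.exp_add]; ring_nf
        rw [this]; push_cast; ring_nf
      have e' := congrArg Complex.re e
      rw [Complex.ofReal_re] at e'
      exact e'
    have E : kappa μ c K l (1 + 1) - kappa μ c K l 1 - kappa μ c K l 1 =
        ((c + (l ^ 2)⁻¹ * ∫ x, (Real.exp (l * x) - 1) ^ 2 ∂K : ℝ) : ℂ) := by
      have e5 : ((∫ x, (Real.exp (l * x) - 1) ^ 2 ∂K : ℝ) : ℂ) =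
          (∫ x : ℝ, (Complex.exp (↑l * (1 + 1) * ↑x) - 1 - ↑l * (1 + 1) * ↑x) ∂K) -
          (∫ x : ℝ, (Complex.exp (↑l * 1 * ↑x) - 1 - ↑l * 1 * ↑x) ∂K) -
          (∫ x : ℝ, (Complex.exp (↑l * 1 * ↑x) - 1 - ↑l * 1 * ↑x) ∂K) := by
        have i3 : Integrable (fun x : ℝ => (Complex.exp (↑l * (1 + 1) * ↑x) - 1 - ↑l * (1 + 1) * ↑x) -
          (Complex.exp (↑l * 1 * ↑x) - 1 - ↑l * 1 * ↑x)) K := i2.sub i1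
        rw [← integral_sub i2 i1, ← integral_sub i3 i1, ← integral_complex_ofReal]
        congr 1; ext x
        have : Complex.exp (↑l * (1 + 1) * ↑x) = Complex.exp (l * x) * Complex.exp (l * x) := by
          rw [← Complex.exp_add]; ring_nf
        rw [this]; push_cast; ring_nf
      rw [Complex.ofReal_add, Complex.ofReal_mul, e5]
      unfold kappa
      rw [if_neg hl, if_neg hl]
      push_cast; ring
    rw [E, Complex.ofReal_re]
    have hi : 0 ≤ ∫ x, (Real.exp (l * x) - 1) ^ 2 ∂K := integral_nonneg fun x => sq_nonneg _
    rcases hi.eq_or_lt with h0 | h0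
    · have h3 := (integral_eq_zero_iff_of_nonneg (fun x => sq_nonneg _) iq).1 h0.symm
      have h4 : ∫ x, x ^ 2 ∂K = 0 := by
        refine integral_eq_zero_of_ae ?_
        filter_upwards [h3] with x hx
        have h5 : Real.exp (l * x) - 1 = 0 := by simpa using hx
        have h6 : l * x = 0 := by
          rw [← Real.exp_eq_one_iff]; linarith
        have : x = 0 := (mul_eq_zero.1 h6).resolve_left hl
        simp [this]
      rw [h4] at hs
      rw [← h0]; linarith
    · positivity

end PHE

open MeasureTheory ProbabilityTheory Complex Set

namespace PHE
open scoped Topology FourierTransform ContDiff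

lemma iteratedDeriv_ofReal {l : ℝ → ℝ} (hl : ContDiff ℝ ∞ l) (n : ℕ) :
    iteratedDeriv n (fun x => (l x : ℂ)) = fun x => ((iteratedDeriv n l x : ℝ) : ℂ) := by
  induction n with
  | zero => simp
  | succ n ih =>
    rw [iteratedDeriv_succ, ih]
    ext x
    have hd : DifferentiableAt ℝ (iteratedDeriv n l) x :=
      (hl.differentiable_iteratedDeriv n (by exact_mod_cast WithTop.coe_lt_top _)) x
    rw [iteratedDeriv_succ]
    exact hd.hasDerivAt.ofReal_comp.deriv

lemma lhat_eq (l : ℝ → ℝ) (y : ℝ) : lhat l y = 𝓕 (fun x => (l x : ℂ)) (y / (2 * Real.pi)) := by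
  rw [Real.fourier_real_eq_integral_exp_smul]
  unfold lhat
  congr 1; ext x
  rw [smul_eq_mul, mul_comm]
  congr 2
  have : (Real.pi : ℂ) ≠ 0 := by exact_mod_cast Real.pi_ne_zero
  push_cast; field_simp

lemma lhat_bound {l : ℝ → ℝ} (hl : ContDiff ℝ ∞ l)
    (hlint : ∀ n : ℕ, Integrable (iteratedDeriv n l)) (n : ℕ) (y : ℝ) :
    |y| ^ n * ‖lhat l y‖ ≤ ∫ x, |iteratedDeriv n l x| := by
  have hL : ContDiff ℝ ∞ (fun x => (l x : ℂ)) := Complex.ofRealCLM.contDiff.comp hl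
  have hi : ∀ n : ℕ, Integrable (iteratedDeriv n (fun x => (l x : ℂ))) := fun n => by
    rw [iteratedDeriv_ofReal hl]; exact (hlint n).ofReal
  have h1 := Real.fourier_iteratedDeriv (N := ⊤) (n := n) hL (fun n _ => hi n) le_top
  have h2 := congrFun h1 (y / (2 * Real.pi))
  rw [← lhat_eq] at h2
  have h3 := congrArg norm h2
  have e : (2 * (Real.pi:ℂ) * I * ((y / (2 * Real.pi) : ℝ) : ℂ)) = I * y := by
    have : (Real.pi : ℂ) ≠ 0 := by exact_mod_cast Real.pi_ne_zero
    push_cast; field_simp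
  rw [e, norm_smul, norm_pow, norm_mul, Complex.norm_I, one_mul, Complex.norm_real,
    Real.norm_eq_abs] at h3
  rw [← h3]
  rw [Real.fourier_real_eq_integral_exp_smul]
  refine (norm_integral_le_integral_norm _).trans (le_of_eq ?_)
  congr 1; ext x
  rw [norm_smul, Complex.norm_exp_ofReal_mul_I, iteratedDeriv_ofReal hl, one_mul,
    Complex.norm_real, Real.norm_eq_abs]

lemma continuous_lhat {l : ℝ → ℝ} (hl : Integrable l) : Continuous (lhat l) := by
  unfold lhat
  refine continuous_of_dominated (bound := fun x => |l x|) ?_ ?_ hl.abs ?_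
  · intro y
    exact hl.ofReal.aestronglyMeasurable.mul (by fun_prop)
  · intro y
    filter_upwards with x
    have : (-(I * (x:ℂ) * (y:ℂ))) = ((-(x * y) : ℝ) : ℂ) * I := by push_cast; ring
    rw [norm_mul, this, Complex.norm_exp_ofReal_mul_I]
    simp
  · filter_upwards with x
    fun_prop

lemma pCoef_integrable {l : ℝ → ℝ} (hl : ContDiff ℝ ∞ l)
    (hlint : ∀ n : ℕ, Integrable (iteratedDeriv n l)) (N : ℕ) :
    Measurable (pCoef l) ∧ Integrable (fun u : ℝ => (1 + |u|) ^ N * ‖pCoef l u‖) := by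
  have hm : Measurable (pCoef l) := by
    have h0 : Integrable l := by simpa using hlint 0
    have := (continuous_lhat h0).measurable
    unfold pCoef; fun_prop
  refine ⟨hm, ?_⟩
  set A := ∫ x, |iteratedDeriv 0 l x|
  set B := ∫ x, |iteratedDeriv (N + 2) l x|
  refine (integrable_inv_one_add_sq.const_mul (2 ^ (N + 2) * (A + B))).mono' (by fun_prop) ?_
  filter_upwards with u
  have hA := lhat_bound hl hlint 0 u
  have hB := lhat_bound hl hlint (N + 2) u
  rw [pow_zero, one_mul] at hA
  have h1 : ‖pCoef l u‖ ≤ ‖lhat l u‖ := by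
    unfold pCoef
    rw [norm_div]
    apply div_le_self (norm_nonneg _)
    have : ‖(2 * (Real.pi : ℂ))‖ = 2 * Real.pi := by
      rw [norm_mul, Complex.norm_real, Real.norm_of_nonneg Real.pi_pos.le]; simp
    rw [this]; linarith [Real.pi_gt_three]
  rw [Real.norm_of_nonneg (by positivity), ← div_eq_mul_inv, le_div_iff₀ (by positivity)]
  have h2 : 1 + u ^ 2 ≤ (1 + |u|) ^ 2 := by rw [← sq_abs]; nlinarith [abs_nonneg u]
  have h3 : (1 + |u|) ^ (N + 2) ≤ 2 ^ (N + 2) * (1 + |u| ^ (N + 2)) := by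
    rcases le_total |u| 1 with h | h
    · calc (1 + |u|) ^ (N + 2) ≤ 2 ^ (N + 2) := by gcongr; linarith
        _ ≤ _ := by
          have : 0 ≤ (2:ℝ) ^ (N + 2) * |u| ^ (N + 2) := by positivity
          linarith
    · calc (1 + |u|) ^ (N + 2) ≤ (2 * |u|) ^ (N + 2) := by gcongr; linarith
        _ = 2 ^ (N + 2) * |u| ^ (N + 2) := mul_pow _ _ _
        _ ≤ _ := by gcongr; linarith
  calc (1 + |u|) ^ N * ‖pCoef l u‖ * (1 + u ^ 2)
      ≤ (1 + |u|) ^ N * ‖lhat l u‖ * (1 + |u|) ^ 2 := by gcongr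
    _ = (1 + |u|) ^ (N + 2) * ‖lhat l u‖ := by ring
    _ ≤ 2 ^ (N + 2) * (1 + |u| ^ (N + 2)) * ‖lhat l u‖ := by gcongr
    _ = 2 ^ (N + 2) * (‖lhat l u‖ + |u| ^ (N + 2) * ‖lhat l u‖) := by ring
    _ ≤ 2 ^ (N + 2) * (A + B) := by gcongr

lemma l_smooth {f : ℝ → ℝ} (hf : ContDiffOn ℝ (⊤ : ℕ∞) f (Set.Ioi 0)) (R : ℝ) :
    ContDiff ℝ ∞ (fun x => f (Real.exp x) * Real.exp (-R * x)) := by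
  have h1 : ContDiff ℝ ∞ (fun x => f (Real.exp x)) :=
    hf.comp_contDiff Real.contDiff_exp (fun x => Real.exp_pos x)
  have h2 : ContDiff ℝ ∞ (fun x => Real.exp (-R * x)) := by fun_prop
  exact h1.mul h2

/-- the space of triples (u,v,t) -/
noncomputable def MX (T : ℝ) : Measure ((ℝ × ℝ) × ℝ) :=
  ((volume : Measure ℝ).prod volume).prod (volume.restrict (Ioc 0 T))

def wX (q : (ℝ × ℝ) × ℝ) : ℝ := (1 + |q.1.1|) * (1 + |q.1.2|)

lemma one_le_wX (q : (ℝ × ℝ) × ℝ) : 1 ≤ wX q := by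
  unfold wX; nlinarith [abs_nonneg q.1.1, abs_nonneg q.1.2, mul_nonneg (abs_nonneg q.1.1) (abs_nonneg q.1.2)]

lemma integrable_MX {l : ℝ → ℝ} (hl : ContDiff ℝ ∞ l)
    (hlint : ∀ n : ℕ, Integrable (iteratedDeriv n l)) (T : ℝ) (N : ℕ) :
    Integrable (fun q => wX q ^ N * ‖pCoef l q.1.1 * pCoef l q.1.2‖) (MX T) := by
  have h1 := (pCoef_integrable hl hlint N).2
  have h2 := (h1.mul_prod h1).comp_fst (ν := volume.restrict (Ioc (0:ℝ) T))
  refine h2.congr ?_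
  filter_upwards with q
  unfold wX
  rw [norm_mul, mul_pow]; ring

end PHE

open MeasureTheory ProbabilityTheory Complex Set

namespace PHE
open scoped Topology ContDiff

lemma measurable_zLine (R : ℝ) : Measurable (zLine R) := by unfold zLine; fun_prop

lemma zLine_re (R y : ℝ) : (zLine R y).re = R := by simp [zLine]

lemma norm_zLine (R y : ℝ) : ‖zLine R y‖ ≤ |R| + |y| := by
  unfold zLine
  refine (norm_add_le _ _).trans ?_
  simp

lemma kappa_zero {K : Measure ℝ} {σ2 c : ℝ} (μ : ℝ) (hσ2 : σ2 = c + ∫ x : ℝ, x ^ 2 ∂K) (z : ℂ) :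
    kappa μ c K 0 z = μ * z + σ2 / 2 * z ^ 2 := by
  unfold kappa; rw [if_pos rfl, ← hσ2]

lemma eta_zero {K : Measure ℝ} {σ2 c : ℝ} (μ : ℝ) (hσ2 : σ2 = c + ∫ x : ℝ, x ^ 2 ∂K)
    (hpos : 0 < σ2) (z : ℂ) :
    etaLK μ c K 0 z = σ2 / 2 * z * (z - 1) := by
  have : (σ2 : ℂ) ≠ 0 := by exact_mod_cast hpos.ne'
  unfold etaLK gamLK kbar
  simp only [kappa_zero μ hσ2]
  have e : (μ * (1 + 1) + σ2 / 2 * (1 + 1) ^ 2 - (μ * 1 + σ2 / 2 * 1 ^ 2) -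
    (μ * 1 + σ2 / 2 * 1 ^ 2) : ℂ) = σ2 := by ring
  rw [e]
  field_simp
  ring

lemma cpowR_exp {S₀ : ℝ} (hS : 0 < S₀) (y : ℝ) (z : ℂ) :
    cpowR (S₀ * Real.exp y) z = Complex.exp (z * (Real.log S₀ + y)) := by
  unfold cpowR
  rw [Real.log_mul hS.ne' (Real.exp_pos _).ne', Real.log_exp]
  push_cast; rfl

/-- Gaussian side for a fixed time -/
lemma gauss_side {l : ℝ → ℝ} (hl : ContDiff ℝ ∞ l)
    (hlint : ∀ n : ℕ, Integrable (iteratedDeriv n l)) {K : Measure ℝ} {σ2 c : ℝ} (μ R : ℝ)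
    (hσ2 : σ2 = c + ∫ x : ℝ, x ^ 2 ∂K) (hpos : 0 < σ2) {T S₀ t : ℝ} (hS : 0 < S₀)
    (ht : t ∈ Icc 0 T) :
    ∫ x : ℝ, (cashGreek σ2 T R l 2 t (S₀ * Real.exp (μ * t + x))) ^ 2
            ∂(gaussianReal 0 (Real.toNNReal (σ2 * t))) =
    ∫ q : ℝ × ℝ, cpowR S₀ (zLine R q.1 + zLine R q.2) *
      (zLine R q.1 * (zLine R q.1 - 1) * (zLine R q.2 * (zLine R q.2 - 1))) *
      Complex.exp (kappa μ c K 0 (zLine R q.1 + zLine R q.2) * (t : ℂ) +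
            (etaLK μ c K 0 (zLine R q.1) + etaLK μ c K 0 (zLine R q.2)) *
              ((T : ℂ) - (t : ℂ))) * (pCoef l q.1 * pCoef l q.2) := by
  set g : ℝ → ℂ := fun u => zLine R u * (zLine R u - 1) *
    Complex.exp (zLine R u * (Real.log S₀ + μ * t)) *
    Complex.exp (((σ2 : ℂ) / 2) * zLine R u * (zLine R u - 1) * ((T : ℂ) - (t : ℂ))) * pCoef l u
    with hg
  have mz := measurable_zLine R
  have mp := (pCoef_integrable hl hlint 0).1
  have mg : Measurable g := by rw [hg]; fun_prop
  have ig : Integrable g := by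
    have i2 := (pCoef_integrable hl hlint 2).2
    refine (i2.const_mul ((|R| + 2) ^ 2 * Real.exp (R * (Real.log S₀ + μ * t)) *
      Real.exp (σ2 / 2 * (R ^ 2 - R) * (T - t)))).mono' mg.aestronglyMeasurable ?_
    filter_upwards with u
    have n1 : ‖zLine R u‖ ≤ (|R| + 2) * (1 + |u|) := by
      refine (norm_zLine R u).trans ?_
      nlinarith [abs_nonneg u, abs_nonneg R, mul_nonneg (abs_nonneg u) (abs_nonneg R)]
    have n2 : ‖zLine R u - 1‖ ≤ (|R| + 2) * (1 + |u|) := by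
      refine (norm_sub_le _ _).trans ?_
      rw [norm_one]
      have := norm_zLine R u
      nlinarith [abs_nonneg u, abs_nonneg R, mul_nonneg (abs_nonneg u) (abs_nonneg R)]
    have n3 : ‖Complex.exp (zLine R u * (Real.log S₀ + μ * t))‖ ≤
        Real.exp (R * (Real.log S₀ + μ * t)) := by
      rw [Complex.norm_exp]
      have : (zLine R u * (Real.log S₀ + μ * t)).re = R * (Real.log S₀ + μ * t) := by
        have e : ((Real.log S₀ : ℂ) + μ * t) = ((Real.log S₀ + μ * t : ℝ) : ℂ) := by push_cast; rfl
        rw [e, Complex.re_mul_ofReal, zLine_re]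
      rw [this]
    have n4 : ‖Complex.exp (((σ2 : ℂ) / 2) * zLine R u * (zLine R u - 1) * ((T : ℂ) - (t : ℂ)))‖ ≤
        Real.exp (σ2 / 2 * (R ^ 2 - R) * (T - t)) := by
      rw [Complex.norm_exp]
      apply Real.exp_le_exp.2
      have e : ((σ2 : ℂ) / 2) * zLine R u * (zLine R u - 1) * ((T : ℂ) - (t : ℂ)) =
        ((σ2 / 2 * (T - t) : ℝ) : ℂ) * (zLine R u * (zLine R u - 1)) := by push_cast; ring
      rw [e, Complex.re_ofReal_mul]
      have e2 : (zLine R u * (zLine R u - 1)).re = R ^ 2 - R - u ^ 2 := by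
        simp [zLine]; ring
      rw [e2]
      have : 0 ≤ σ2 / 2 * (T - t) := mul_nonneg (by positivity) (by linarith [ht.2])
      nlinarith [sq_nonneg u]
    rw [hg]
    simp only [norm_mul]
    calc _ ≤ ((|R| + 2) * (1 + |u|)) * ((|R| + 2) * (1 + |u|)) *
          Real.exp (R * (Real.log S₀ + μ * t)) * Real.exp (σ2 / 2 * (R ^ 2 - R) * (T - t)) *
          ‖pCoef l u‖ := by gcongr
      _ = _ := by ring
  have hD : ∀ x : ℝ, (cashGreek σ2 T R l 2 t (S₀ * Real.exp (μ * t + x))) ^ 2 =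
      ∫ q : ℝ × ℝ, (g q.1 * g q.2) * Complex.exp ((zLine R q.1 + zLine R q.2) * x) := by
    intro x
    have e1 : cashGreek σ2 T R l 2 t (S₀ * Real.exp (μ * t + x)) =
        ∫ u, g u * Complex.exp (zLine R u * x) := by
      unfold cashGreek
      congr 1; ext u
      rw [cpowR_exp hS, hg]
      simp only [Finset.prod_range_succ, Finset.prod_range_zero]
      have : Complex.exp (zLine R u * (Real.log S₀ + ((μ * t + x : ℝ) : ℂ))) =
        Complex.exp (zLine R u * (Real.log S₀ + μ * t)) * Complex.exp (zLine R u * x) := by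
        rw [← Complex.exp_add]; push_cast; ring_nf
      rw [this]; push_cast; ring
    rw [e1, sq, ← integral_prod_mul]
    congr 1; ext q
    rw [add_mul, Complex.exp_add]; ring
  simp_rw [hD]
  set γ := gaussianReal 0 (Real.toNNReal (σ2 * t))
  have iex : Integrable (fun x : ℝ => Real.exp (2 * R * x)) γ := integrable_exp_mul_gaussianReal _
  rw [integral_integral_swap]
  · congr 1; ext q
    have e0 : ∫ x : ℝ, Complex.exp ((zLine R q.1 + zLine R q.2) * x) ∂γ =
        Complex.exp (σ2 * t * (zLine R q.1 + zLine R q.2) ^ 2 / 2) := by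
      have := complexMGF_id_gaussianReal (μ := 0) (v := Real.toNNReal (σ2 * t))
        (zLine R q.1 + zLine R q.2)
      rw [complexMGF] at this
      simp only [id] at this
      rw [this]
      have h1 : (((Real.toNNReal (σ2 * t) : NNReal) : ℝ) : ℂ) = σ2 * t := by
        rw [Real.coe_toNNReal _ (mul_nonneg hpos.le ht.1)]; push_cast; rfl
      rw [h1]; simp
    rw [integral_const_mul, e0, kappa_zero μ hσ2, eta_zero μ hσ2 hpos, eta_zero μ hσ2 hpos, hg]
    unfold cpowR
    simp only
    set y := zLine R q.1
    set z := zLine R q.2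
    have e2 : Complex.exp (y * (Real.log S₀ + μ * t)) *
        Complex.exp (((σ2 : ℂ) / 2) * y * (y - 1) * ((T : ℂ) - (t : ℂ))) *
        (Complex.exp (z * (Real.log S₀ + μ * t)) *
        Complex.exp (((σ2 : ℂ) / 2) * z * (z - 1) * ((T : ℂ) - (t : ℂ)))) *
        Complex.exp (σ2 * t * (y + z) ^ 2 / 2) =
        Complex.exp ((y + z) * Real.log S₀) * Complex.exp ((μ * (y + z) + σ2 / 2 * (y + z) ^ 2) * t +
        (σ2 / 2 * y * (y - 1) + σ2 / 2 * z * (z - 1)) * (T - t)) := by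
      simp only [← Complex.exp_add]
      congr 1; ring
    linear_combination (y * (y - 1) * (z * (z - 1)) * (pCoef l q.1 * pCoef l q.2)) * e2
  · have := (iex.mul_prod (ig.norm.mul_prod ig.norm))
    refine this.mono' ?_ ?_
    · apply Measurable.aestronglyMeasurable
      simp only [Function.uncurry_def]
      fun_prop
    · filter_upwards with p
      simp only [Function.uncurry_def, norm_mul]
      have : ‖Complex.exp ((zLine R p.2.1 + zLine R p.2.2) * p.1)‖ = Real.exp (2 * R * p.1) := by
        rw [Complex.norm_exp, Complex.re_mul_ofReal, Complex.add_re, zLine_re, zLine_re]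
        ring_nf
      rw [this]
      exact le_of_eq (mul_comm _ _)

end PHE

open MeasureTheory ProbabilityTheory Complex Set

namespace PHE

lemma setup0 {a b lo hi : ℝ} (ha : a < lo) (hb : hi < b) (hlo : lo ≤ 0) (hhi : 0 < hi) :
    ∃ a' b' : ℝ, ∃ I : Set ℝ, a' ∈ Ioo a b ∧ b' ∈ Ioo a b ∧ IsOpen I ∧ Icc (0:ℝ) 1 ⊆ I ∧
      ∀ r ∈ Icc lo hi, ∀ l ∈ I, l * r ∈ Icc a' b' := by
  obtain ⟨d, hd, hd1, hd2⟩ : ∃ d : ℝ, 0 < d ∧ a < lo - d ∧ hi + d < b := by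
    refine ⟨min (lo - a) (b - hi) / 2, ?_, ?_, ?_⟩
    · have : 0 < min (lo - a) (b - hi) := lt_min (by linarith) (by linarith)
      linarith
    · have := min_le_left (lo - a) (b - hi); linarith
    · have := min_le_right (lo - a) (b - hi); linarith
  have hD : 0 < hi - lo := by linarith
  have hδ : 0 < d / (hi - lo) := by positivity
  have hδe : d / (hi - lo) * (hi - lo) = d := by field_simp
  set δ := d / (hi - lo)
  refine ⟨lo - d, hi + d, Ioo (-δ) (1 + δ), ⟨hd1, by linarith⟩, ⟨by linarith, hd2⟩, isOpen_Ioo,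
    fun x hx => ⟨by linarith [hx.1], by linarith [hx.2]⟩, ?_⟩
  rintro r ⟨hr1, hr2⟩ l ⟨hl1, hl2⟩
  have A : |r| ≤ hi - lo := abs_le.2 ⟨by linarith, by linarith⟩
  have key : ∀ s : ℝ, |s| ≤ δ → |s * r| ≤ d := fun s hs => by
    rw [abs_mul, ← hδe]
    exact mul_le_mul hs A (abs_nonneg _) hδ.le
  rcases lt_or_ge l 0 with h | h
  · have := abs_le.1 (key l (abs_le.2 ⟨by linarith, by linarith⟩))
    exact ⟨by linarith, by linarith⟩
  · rcases lt_or_ge 1 l with h' | h'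
    · have := abs_le.1 (key (l - 1) (abs_le.2 ⟨by linarith, by linarith⟩))
      exact ⟨by linarith, by linarith⟩
    · constructor
      · nlinarith [mul_nonneg h (sub_nonneg.2 hr1), mul_nonneg (sub_nonneg.2 h') (neg_nonneg.2 hlo)]
      · nlinarith [mul_nonneg h (sub_nonneg.2 hr2), mul_nonneg (sub_nonneg.2 h') hhi.le]

/-- tame kappa at a real point -/
lemma tame_kappa_real {K : Measure ℝ} {a b : ℝ} (h : LK K a b)
    (μ c : ℝ) {I : Set ℝ} (hI : IsOpen I) {a' b' : ℝ}
    (ha : a' ∈ Ioo a b) (hb : b' ∈ Ioo a b) {r : ℝ} (hr : ∀ l ∈ I, l * r ∈ Icc a' b') :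
    ∃ C : ℝ, ContinuousOn (fun l => kappa μ c K l (r:ℂ)) I ∧ ∀ l ∈ I, ‖kappa μ c K l (r:ℂ)‖ ≤ C := by
  have t := tame_kappa (X := Unit) h μ c hI (w := fun _ => 1) (fun _ => le_rfl) ha hb hr
    (z := fun _ => (r:ℂ)) measurable_const (by simp) (D := |r|) (abs_nonneg _) (by simp)
  obtain ⟨C, N, _, hC⟩ := t.b0
  refine ⟨C, t.c0 (), fun l hl => ?_⟩
  simpa using hC l hl ()

structure Good (μ c : ℝ) (K : Measure ℝ) (a' b' R : ℝ) (I : Set ℝ) (m : ℝ) : Prop where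
  hI : IsOpen I
  h01 : Icc (0:ℝ) 1 ⊆ I
  hr : ∀ r ∈ Icc (min 0 (2 * R)) (max 2 (2 * R)), ∀ l ∈ I, l * r ∈ Icc a' b'
  hm : 0 < m
  hk : ∀ l ∈ I, m < (kbar μ c K l 1 1).re

lemma setup {K : Measure ℝ} {a b : ℝ} (h : LK K a b) (μ c R : ℝ) (hc : 0 ≤ c)
    (h2 : (2 : ℝ) ∈ Ioo a b) (h2R : 2 * R ∈ Ioo a b) (hs : 0 < c + ∫ x, x ^ 2 ∂K) :
    ∃ a' b' m : ℝ, ∃ I : Set ℝ, a' ∈ Ioo a b ∧ b' ∈ Ioo a b ∧ Good μ c K a' b' R I m := by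
  obtain ⟨a', b', I, ha, hb, hI, h01, hr⟩ := setup0 (a := a) (b := b) (lo := min 0 (2 * R))
    (hi := max 2 (2 * R)) (lt_min h.h0.1 h2R.1) (max_lt h2.2 h2R.2) (min_le_left _ _)
    (lt_max_of_lt_left two_pos)
  have m0 : min 0 (2 * R) ≤ 0 := min_le_left _ _
  have M2 : 2 ≤ max 2 (2 * R) := le_max_left _ _
  have r1 : ∀ l ∈ I, l * 1 ∈ Icc a' b' := hr 1 ⟨by linarith, by linarith⟩
  have r2 : ∀ l ∈ I, l * 2 ∈ Icc a' b' := hr 2 ⟨by linarith, by linarith⟩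
  obtain ⟨_, c1, _⟩ := tame_kappa_real h μ c hI ha hb r1
  obtain ⟨_, c2, _⟩ := tame_kappa_real h μ c hI ha hb r2
  have hcont : ContinuousOn (fun l => (kbar μ c K l 1 1).re) I := by
    have : ContinuousOn (fun l => (kappa μ c K l ((2:ℝ):ℂ) - kappa μ c K l ((1:ℝ):ℂ) -
      kappa μ c K l ((1:ℝ):ℂ)).re) I :=
      Complex.continuous_re.comp_continuousOn ((c2.sub c1).sub c1)
    refine this.congr fun l _ => ?_
    simp only [kbar]; norm_num
  have sub : Icc a' b' ⊆ Ioo a b := fun x hx => ⟨ha.1.trans_le hx.1, hx.2.trans_lt hb.2⟩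
  have hpos : ∀ l ∈ I, 0 < (kbar μ c K l 1 1).re := fun l hl =>
    kbar11_pos h μ c l hc (sub (r1 l hl)) (sub (r2 l hl)) hs
  obtain ⟨x, hx, hmin⟩ := isCompact_Icc.exists_isMinOn (nonempty_Icc.2 (zero_le_one' ℝ))
    (hcont.mono h01)
  have hx0 := hpos x (h01 hx)
  refine ⟨a', b', (kbar μ c K x 1 1).re / 2, I ∩ {l | (kbar μ c K x 1 1).re / 2 < (kbar μ c K l 1 1).re},
    ha, hb, ?_, ?_, ?_, by positivity, fun l hl => hl.2⟩
  · exact hcont.isOpen_inter_preimage hI isOpen_Ioi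
  · intro l hl
    refine ⟨h01 hl, ?_⟩
    have : (kbar μ c K x 1 1).re ≤ (kbar μ c K l 1 1).re := hmin hl
    simp only [mem_ofPred_eq]; linarith
  · intro r hr' l hl; exact hr r hr' l hl.1

lemma real_of_im {z : ℂ} (h : z.im = 0) : z = (z.re : ℂ) := by
  apply Complex.ext <;> simp [h]

lemma eta_re_bound {K : Measure ℝ} {a b : ℝ} (h : LK K a b) (μ c R : ℝ) (hc : 0 ≤ c)
    {a' b' m : ℝ} {I : Set ℝ} (ha : a' ∈ Ioo a b) (hb : b' ∈ Ioo a b)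
    (g : Good μ c K a' b' R I m) :
    ∃ B, 0 ≤ B ∧ (∀ l ∈ I, ∀ y, (etaLK μ c K l (zLine R y)).re ≤ B) ∧
      (∀ l ∈ I, ∀ y : ℝ, (kappa μ c K l ((2 * R : ℝ) + y * Complex.I)).re ≤ B) := by
  have m0 : min 0 (2 * R) ≤ 0 := min_le_left _ _
  have m0' : min 0 (2 * R) ≤ 2 * R := min_le_right _ _
  have M2 : 2 ≤ max 2 (2 * R) := le_max_left _ _
  have M2' : 2 * R ≤ max 2 (2 * R) := le_max_right _ _
  have r1 := g.hr 1 ⟨by linarith, by linarith⟩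
  have r2 := g.hr 2 ⟨by linarith, by linarith⟩
  have rR := g.hr R ⟨by linarith, by linarith⟩
  have rR1 := g.hr (R + 1) ⟨by linarith, by linarith⟩
  have r2R := g.hr (2 * R) ⟨by linarith, by linarith⟩
  obtain ⟨C1, _, k1⟩ := tame_kappa_real h μ c g.hI ha hb r1
  obtain ⟨CR, _, kR⟩ := tame_kappa_real h μ c g.hI ha hb rR
  obtain ⟨CR1, _, kR1⟩ := tame_kappa_real h μ c g.hI ha hb rR1
  obtain ⟨C2R, _, k2R⟩ := tame_kappa_real h μ c g.hI ha hb r2R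
  have sub : Icc a' b' ⊆ Ioo a b := fun x hx => ⟨ha.1.trans_le hx.1, hx.2.trans_lt hb.2⟩
  have z0 : (0:ℝ) ∈ I := g.h01 (by simp)
  have C1n := (norm_nonneg _).trans (k1 0 z0)
  have CRn := (norm_nonneg _).trans (kR 0 z0)
  have CR1n := (norm_nonneg _).trans (kR1 0 z0)
  have hm := g.hm
  set ρ0 := C1 / m with hρ0
  have hρ0n : 0 ≤ ρ0 := by positivity
  obtain ⟨C, hC⟩ := eta_bound h μ c R hc ha hb ρ0
  refine ⟨max 0 (max ((1 + ρ0) * CR + ρ0 * CR1 + C + ρ0 * C1) C2R), le_max_left _ _, ?_, ?_⟩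
  · intro l hl y
    refine le_trans ?_ ((le_max_left _ _).trans (le_max_right _ _))
    obtain ⟨κ1, hκ1⟩ : ∃ k : ℝ, kappa μ c K l 1 = (k:ℂ) :=
      ⟨_, real_of_im (by simpa using kappa_real K μ c l 1)⟩
    obtain ⟨κ2, hκ2⟩ : ∃ k : ℝ, kappa μ c K l (1 + 1) = (k:ℂ) :=
      ⟨_, real_of_im (by
        have := kappa_real K μ c l 2
        norm_num at this ⊢; exact this)⟩
    have hk := g.hk l hl
    have hkb : kbar μ c K l 1 1 = ((κ2 - κ1 - κ1 : ℝ) : ℂ) := by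
      unfold kbar; rw [hκ1, hκ2]; push_cast; ring
    rw [hkb, Complex.ofReal_re] at hk
    set k := κ2 - κ1 - κ1
    have hk0 : 0 < k := hm.trans hk
    have hκ1C : |κ1| ≤ C1 := by
      have := k1 l hl
      rw [Complex.ofReal_one, hκ1, Complex.norm_real] at this
      exact this
    have hρ : |κ1 / k| ≤ ρ0 := by
      rw [abs_div, abs_of_pos hk0]
      exact div_le_div₀ C1n hκ1C hm hk.le
    have e : etaLK μ c K l (zLine R y) = ((1 + κ1 / k : ℝ):ℂ) * kappa μ c K l (R + y * Complex.I)
        - ((κ1 / k : ℝ):ℂ) * kappa μ c K l ((R + 1 : ℝ) + y * Complex.I)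
        + ((κ1 / k * κ1 : ℝ) : ℂ) := by
      unfold etaLK gamLK
      rw [hkb, hκ1]
      unfold kbar
      rw [hκ1]
      unfold zLine
      have e1 : (R + y * Complex.I + 1 : ℂ) = ((R + 1 : ℝ) + y * Complex.I) := by push_cast; ring
      rw [e1]
      have : (k:ℂ) ≠ 0 := by exact_mod_cast hk0.ne'
      push_cast
      field_simp
      ring
    rw [e]
    simp only [Complex.add_re, Complex.sub_re, Complex.re_ofReal_mul, Complex.ofReal_re]
    have hb := hC l (rR l hl) (rR1 l hl) _ hρ y
    have i1 : (1 + κ1 / k) * (kappa μ c K l R).re ≤ (1 + ρ0) * CR := by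
      refine (le_abs_self _).trans ?_
      rw [abs_mul]
      refine mul_le_mul ?_ ((Complex.abs_re_le_norm _).trans (kR l hl)) (abs_nonneg _) (by positivity)
      refine (abs_add_le _ _).trans ?_
      simpa using hρ
    have i2 : -(κ1 / k * (kappa μ c K l (R + 1 : ℝ)).re) ≤ ρ0 * CR1 := by
      refine (neg_le_abs _).trans ?_
      rw [abs_mul]
      exact mul_le_mul hρ ((Complex.abs_re_le_norm _).trans (kR1 l hl)) (abs_nonneg _) (by positivity)
    have i3 : κ1 / k * κ1 ≤ ρ0 * C1 := by
      refine (le_abs_self _).trans ?_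
      rw [abs_mul]
      exact mul_le_mul hρ hκ1C (abs_nonneg _) (by positivity)
    linarith
  · intro l hl y
    refine le_trans ?_ ((le_max_right _ _).trans (le_max_right _ _))
    refine (re_kappa_le h μ c l (2 * R) hc (sub (r2R l hl)) y).trans ?_
    exact (Complex.re_le_norm _).trans (k2R l hl)

end PHE

open MeasureTheory ProbabilityTheory Complex Set

namespace PHE

abbrev XX := (ℝ × ℝ) × ℝ

lemma norm_zu (R : ℝ) (q : XX) : ‖zLine R q.1.1‖ ≤ (|R| + 1) * wX q := by
  refine (norm_zLine _ _).trans ?_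
  unfold wX
  nlinarith [abs_nonneg q.1.1, abs_nonneg q.1.2, mul_nonneg (abs_nonneg q.1.1) (abs_nonneg q.1.2),
    mul_nonneg (abs_nonneg R) (abs_nonneg q.1.1), mul_nonneg (abs_nonneg R) (abs_nonneg q.1.2),
    mul_nonneg (abs_nonneg R) (mul_nonneg (abs_nonneg q.1.1) (abs_nonneg q.1.2))]

lemma norm_zv (R : ℝ) (q : XX) : ‖zLine R q.1.2‖ ≤ (|R| + 1) * wX q := by
  refine (norm_zLine _ _).trans ?_
  unfold wX
  nlinarith [abs_nonneg q.1.1, abs_nonneg q.1.2, mul_nonneg (abs_nonneg q.1.1) (abs_nonneg q.1.2),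
    mul_nonneg (abs_nonneg R) (abs_nonneg q.1.1), mul_nonneg (abs_nonneg R) (abs_nonneg q.1.2),
    mul_nonneg (abs_nonneg R) (mul_nonneg (abs_nonneg q.1.1) (abs_nonneg q.1.2))]

lemma meas_zu (R : ℝ) : Measurable (fun q : XX => zLine R q.1.1) := by unfold zLine; fun_prop
lemma meas_zv (R : ℝ) : Measurable (fun q : XX => zLine R q.1.2) := by unfold zLine; fun_prop

lemma tames {K : Measure ℝ} {a b : ℝ} (h : LK K a b) (μ c R : ℝ) 
    {a' b' m : ℝ} {I : Set ℝ} (ha : a' ∈ Ioo a b) (hb : b' ∈ Ioo a b)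
    (g : Good μ c K a' b' R I m) {z : XX → ℂ} (hz : Measurable z) {r : ℝ}
    (hr : r ∈ Icc (min 0 (2 * R)) (max 2 (2 * R))) (hzr : ∀ x, (z x).re = r) {D : ℝ} (hD : 0 ≤ D)
    (hzD : ∀ x, ‖z x‖ ≤ D * wX x) :
    Tame I wX (fun l x => kappa μ c K l (z x)) (fun l x => z x ^ 3 * G K 1 (l * z x))
      (fun l x => z x ^ 4 * G K 2 (l * z x)) :=
  tame_kappa h μ c g.hI one_le_wX ha hb (g.hr r hr) hz hzr hD hzD

lemma tame_all {K : Measure ℝ} {a b : ℝ} (h : LK K a b) (μ c R : ℝ)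
    {a' b' m : ℝ} {I : Set ℝ} (ha : a' ∈ Ioo a b) (hb : b' ∈ Ioo a b)
    (g : Good μ c K a' b' R I m) {σ2 : ℝ} (hσ2 : σ2 = c + ∫ x : ℝ, x ^ 2 ∂K) (hpos : 0 < σ2) :
    (∃ A1 A2 : ℝ → XX → ℂ, Tame I wX (fun l q => kbar μ c K l (zLine R q.1.1) (zLine R q.1.2) -
            kbar μ c K l (zLine R q.1.1) 1 * kbar μ c K l (zLine R q.1.2) 1 /
              kbar μ c K l 1 1) A1 A2 ∧ (∀ q, A1 0 q = 0) ∧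
        ∀ q, A2 0 q = (6 * G K 2 0 - 18 * G K 1 0 ^ 2 / σ2) *
          (zLine R q.1.1 * (zLine R q.1.1 - 1) * (zLine R q.1.2 * (zLine R q.1.2 - 1)))) ∧
    (∃ A1 A2 : ℝ → XX → ℂ, Tame I wX (fun l q => etaLK μ c K l (zLine R q.1.1)) A1 A2) ∧
    (∃ A1 A2 : ℝ → XX → ℂ, Tame I wX (fun l q => etaLK μ c K l (zLine R q.1.2)) A1 A2) ∧
    (∃ A1 A2 : ℝ → XX → ℂ, Tame I wX (fun l q => kappa μ c K l (zLine R q.1.1 + zLine R q.1.2)) A1 A2)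
    := by
  have m0 : min 0 (2 * R) ≤ 0 := min_le_left _ _
  have m0' : min 0 (2 * R) ≤ 2 * R := min_le_right _ _
  have M2 : 2 ≤ max 2 (2 * R) := le_max_left _ _
  have M2' : 2 * R ≤ max 2 (2 * R) := le_max_right _ _
  have hw := one_le_wX
  have hRp : 0 ≤ |R| + 1 := by positivity
  have n1 : ∀ q : XX, ‖(1:ℂ)‖ ≤ 1 * wX q := fun q => by simpa using one_le_wX q
  have n2 : ∀ q : XX, ‖(1 + 1:ℂ)‖ ≤ 2 * wX q := fun q => by
    have := one_le_wX q
    norm_num; linarith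
  have k1 := tames h μ c R ha hb g (z := fun _ => 1) (r := 1) measurable_const
    ⟨by linarith, by linarith⟩ (by simp) (D := 1) zero_le_one n1
  have k2 := tames h μ c R ha hb g (z := fun _ => 1 + 1) (r := 2) measurable_const
    ⟨by linarith, by linarith⟩ (by norm_num) (D := 2) zero_le_two n2
  have ku := tames h μ c R ha hb g (r := R) (meas_zu R)
    ⟨by linarith, by linarith⟩ (fun q => zLine_re _ _) (D := |R| + 1) hRp (norm_zu R)
  have kv := tames h μ c R ha hb g (r := R) (meas_zv R)
    ⟨by linarith, by linarith⟩ (fun q => zLine_re _ _) (D := |R| + 1) hRp (norm_zv R)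
  have ku1 := tames h μ c R ha hb g (z := fun q => zLine R q.1.1 + 1) (r := R + 1) ((meas_zu R).add measurable_const)
    ⟨by linarith, by linarith⟩ (fun q => by simp [zLine_re]) (D := |R| + 1 + 1) (by positivity)
    (fun q => (norm_add_le _ _).trans (by linarith [norm_zu R q, n1 q] : _ ≤ (|R| + 1 + 1) * wX q))
  have kv1 := tames h μ c R ha hb g (z := fun q => zLine R q.1.2 + 1) (r := R + 1) ((meas_zv R).add measurable_const)
    ⟨by linarith, by linarith⟩ (fun q => by simp [zLine_re]) (D := |R| + 1 + 1) (by positivity)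
    (fun q => (norm_add_le _ _).trans (by linarith [norm_zv R q, n1 q] : _ ≤ (|R| + 1 + 1) * wX q))
  have kuv := tames h μ c R ha hb g (z := fun q => zLine R q.1.1 + zLine R q.1.2) (r := 2 * R) ((meas_zu R).add (meas_zv R))
    ⟨by linarith, by linarith⟩ (fun q => by simp [zLine_re]; ring) (D := |R| + 1 + (|R| + 1))
    (by positivity)
    (fun q => (norm_add_le _ _).trans
      (by linarith [norm_zu R q, norm_zv R q] : _ ≤ (|R| + 1 + (|R| + 1)) * wX q))
  have b11 := (k2.sub g.hI hw k1).sub g.hI hw k1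
  have bu := (ku1.sub g.hI hw ku).sub g.hI hw k1
  have bv := (kv1.sub g.hI hw kv).sub g.hI hw k1
  have buv := (kuv.sub g.hI hw ku).sub g.hI hw kv
  have i11 := b11.inv hw g.hm (fun l hl x => (g.hk l hl).le.trans
    (by simpa [kbar] using Complex.re_le_norm (kbar μ c K l 1 1)))
  refine ⟨?_, ?_, ?_, ⟨_, _, kuv⟩⟩
  · have t := buv.sub g.hI hw ((bu.mul hw bv).mul hw i11)
    have t' := t.congr g.hI (g := fun l q => kbar μ c K l (zLine R q.1.1) (zLine R q.1.2) -
            kbar μ c K l (zLine R q.1.1) 1 * kbar μ c K l (zLine R q.1.2) 1 /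
              kbar μ c K l 1 1) (fun l _ x => by simp only [kbar, div_eq_mul_inv])
    have s0 : (σ2:ℂ) ≠ 0 := by exact_mod_cast hpos.ne'
    have e11 : (μ * (1 + 1) + σ2 / 2 * (1 + 1) ^ 2 - (μ * 1 + σ2 / 2 * 1 ^ 2) -
      (μ * 1 + σ2 / 2 * 1 ^ 2) : ℂ) = σ2 := by ring
    have eu : ∀ z : ℂ, (μ * (z + 1) + σ2 / 2 * (z + 1) ^ 2 - (μ * z + σ2 / 2 * z ^ 2) -
      (μ * 1 + σ2 / 2 * 1 ^ 2) : ℂ) = σ2 * z := fun z => by ring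
    refine ⟨_, _, t', ?_, ?_⟩
    · intro q
      simp only [Complex.ofReal_zero, zero_mul, kappa_zero μ hσ2]
      rw [e11, eu, eu]
      generalize zLine R q.1.1 = u
      generalize zLine R q.1.2 = v
      generalize G K 1 0 = x
      field_simp
      ring
    · intro q
      simp only [Complex.ofReal_zero, zero_mul, kappa_zero μ hσ2]
      rw [e11, eu, eu]
      generalize zLine R q.1.1 = u
      generalize zLine R q.1.2 = v
      generalize G K 1 0 = x
      generalize G K 2 0 = y
      field_simp
      ring
  · have t := ku.sub g.hI hw (k1.mul hw (bu.mul hw i11))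
    exact ⟨_, _, t.congr g.hI (fun l _ x => by
      simp only [etaLK, gamLK, kbar, div_eq_mul_inv])⟩
  · have t := kv.sub g.hI hw (k1.mul hw (bv.mul hw i11))
    exact ⟨_, _, t.congr g.hI (fun l _ x => by
      simp only [etaLK, gamLK, kbar, div_eq_mul_inv])⟩

end PHE

open MeasureTheory ProbabilityTheory Complex Set

namespace PHE

noncomputable def tau (T t : ℝ) : ℝ := max 0 (min t T)

lemma tau_mem {T : ℝ} (hT : 0 < T) (t : ℝ) : 0 ≤ tau T t ∧ tau T t ≤ T :=
  ⟨le_max_left _ _, max_le hT.le (min_le_right _ _)⟩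

lemma tau_eq {T t : ℝ} (ht : t ∈ Ioc 0 T) : tau T t = t := by
  unfold tau; rw [min_eq_left ht.2, max_eq_right ht.1.le]

noncomputable def AA (μ c : ℝ) (K : Measure ℝ) (R l : ℝ) (q : XX) : ℂ :=
  kbar μ c K l (zLine R q.1.1) (zLine R q.1.2) -
            kbar μ c K l (zLine R q.1.1) 1 * kbar μ c K l (zLine R q.1.2) 1 /
              kbar μ c K l 1 1

noncomputable def EE (μ c : ℝ) (K : Measure ℝ) (R T l : ℝ) (q : XX) : ℂ :=
  Complex.exp (kappa μ c K l (zLine R q.1.1 + zLine R q.1.2) * ((tau T q.2 : ℝ) : ℂ) +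
    (etaLK μ c K l (zLine R q.1.1) + etaLK μ c K l (zLine R q.1.2)) *
      ((T - tau T q.2 : ℝ) : ℂ))

noncomputable def FF (μ c : ℝ) (K : Measure ℝ) (R T S₀ l : ℝ) (q : XX) : ℂ :=
  cpowR S₀ (zLine R q.1.1 + zLine R q.1.2) * AA μ c K R l q * EE μ c K R T l q

lemma AA_zero {K : Measure ℝ} (μ c R : ℝ) {σ2 : ℝ} (hσ2 : σ2 = c + ∫ x : ℝ, x ^ 2 ∂K)
    (hpos : 0 < σ2) (q : XX) : AA μ c K R 0 q = 0 := by
  have s0 : (σ2:ℂ) ≠ 0 := by exact_mod_cast hpos.ne'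
  unfold AA kbar
  simp only [kappa_zero μ hσ2]
  have e11 : (μ * (1 + 1) + σ2 / 2 * (1 + 1) ^ 2 - (μ * 1 + σ2 / 2 * 1 ^ 2) -
      (μ * 1 + σ2 / 2 * 1 ^ 2) : ℂ) = σ2 := by ring
  rw [e11]
  field_simp
  ring

lemma measurable_tau (T : ℝ) : Measurable (tau T) := by unfold tau; fun_prop

lemma tame_F {K : Measure ℝ} {a b : ℝ} (h : LK K a b) (μ c R : ℝ) (hc : 0 ≤ c)
    {a' b' m : ℝ} {I : Set ℝ} (ha : a' ∈ Ioo a b) (hb : b' ∈ Ioo a b)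
    (g : Good μ c K a' b' R I m) {σ2 : ℝ} (hσ2 : σ2 = c + ∫ x : ℝ, x ^ 2 ∂K) (hpos : 0 < σ2)
    {T : ℝ} (hT : 0 < T) (S₀ : ℝ) :
    ∃ F1 F2 : ℝ → XX → ℂ, Tame I wX (FF μ c K R T S₀) F1 F2 ∧ (∀ q, F1 0 q = 0) ∧
      ∀ q, F2 0 q = (6 * G K 2 0 - 18 * G K 1 0 ^ 2 / σ2) *
        (cpowR S₀ (zLine R q.1.1 + zLine R q.1.2) *
          (zLine R q.1.1 * (zLine R q.1.1 - 1) * (zLine R q.1.2 * (zLine R q.1.2 - 1))) *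
          EE μ c K R T 0 q) := by
  obtain ⟨⟨A1, A2, tA, hA1, hA2⟩, ⟨_, _, tu⟩, ⟨_, _, tv⟩, ⟨_, _, tk⟩⟩ :=
    tame_all h μ c R ha hb g hσ2 hpos
  obtain ⟨B, hB0, hBe, hBk⟩ := eta_re_bound h μ c R hc ha hb g
  have hw := one_le_wX
  have tcp : Tame I wX (fun _ (q : XX) => cpowR S₀ (zLine R q.1.1 + zLine R q.1.2))
      (fun _ _ => 0) (fun _ _ => 0) := by
    refine Tame.const ?_ (Bd.const (C := Real.exp (2 * R * Real.log S₀)) ?_)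
    · unfold cpowR zLine; fun_prop
    · intro l _ q
      unfold cpowR
      rw [Complex.norm_exp]
      apply Real.exp_le_exp.2
      rw [Complex.re_mul_ofReal, Complex.add_re, zLine_re, zLine_re]
      linarith
  have tt : Tame I wX (fun _ (q : XX) => ((tau T q.2 : ℝ) : ℂ)) (fun _ _ => 0) (fun _ _ => 0) := by
    refine Tame.const ?_ (Bd.const (C := T) ?_)
    · exact Complex.measurable_ofReal.comp ((measurable_tau T).comp measurable_snd)
    · intro l _ q
      rw [Complex.norm_real, Real.norm_of_nonneg (tau_mem hT _).1]
      exact (tau_mem hT _).2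
  have tt' : Tame I wX (fun _ (q : XX) => ((T - tau T q.2 : ℝ) : ℂ)) (fun _ _ => 0)
      (fun _ _ => 0) := by
    refine Tame.const ?_ (Bd.const (C := T) ?_)
    · exact Complex.measurable_ofReal.comp
        (measurable_const.sub ((measurable_tau T).comp measurable_snd))
    · intro l _ q
      rw [Complex.norm_real, Real.norm_of_nonneg (by linarith [(tau_mem hT q.2).2])]
      linarith [(tau_mem hT q.2).1]
  have tE := ((tk.mul hw tt).add hw ((tu.add hw tv).mul hw tt')).exp hw (B := B * T + 2 * B * T)
    (by
      intro l hl q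
      rw [Complex.add_re, Complex.re_mul_ofReal, Complex.re_mul_ofReal, Complex.add_re]
      have e : zLine R q.1.1 + zLine R q.1.2 = ((2 * R : ℝ) + ((q.1.1 + q.1.2 : ℝ):ℂ) * Complex.I) := by
        unfold zLine; push_cast; ring
      have i1 := hBk l hl (q.1.1 + q.1.2)
      rw [← e] at i1
      have i2 := hBe l hl q.1.1
      have i3 := hBe l hl q.1.2
      obtain ⟨j1, j2⟩ := tau_mem hT q.2
      have j3 : 0 ≤ T - tau T q.2 := by linarith
      have p1 := mul_le_mul_of_nonneg_right i1 j1
      have p2 := mul_le_mul_of_nonneg_right (add_le_add i2 i3) j3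
      have p3 := mul_le_mul_of_nonneg_left j2 hB0
      have p4 := mul_nonneg hB0 j1
      nlinarith)
  have t := (tcp.mul hw tA).mul hw tE
  refine ⟨_, _, t, ?_, ?_⟩
  · intro q
    have := AA_zero (K := K) μ c R hσ2 hpos q
    unfold AA at this
    simp only [this, hA1]
    ring
  · intro q
    have := AA_zero (K := K) μ c R hσ2 hpos q
    unfold AA at this
    simp only [this, hA1, hA2]
    unfold EE
    ring

lemma swap_int {T : ℝ} {H : XX → ℂ} (hH : Integrable H (MX T)) :
    ∫ q, H q ∂(MX T) = ∫ u : ℝ, ∫ v : ℝ, ∫ t in Ioc 0 T, H ((u, v), t) := by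
  have h1 : Integrable H (((volume : Measure ℝ).prod volume).prod (volume.restrict (Ioc 0 T))) := hH
  unfold MX
  rw [integral_prod _ h1, integral_prod _ h1.integral_prod_left]

lemma swap_int' {T : ℝ} {H : XX → ℂ} (hH : Integrable H (MX T)) :
    ∫ q, H q ∂(MX T) = ∫ t in Ioc 0 T, ∫ p : ℝ × ℝ, H (p, t) := by
  have h1 : Integrable H (((volume : Measure ℝ).prod volume).prod (volume.restrict (Ioc 0 T))) := hH
  unfold MX
  rw [integral_prod_symm _ h1]
  rfl

end PHE
open PHE
/-- second-order expansion of the mean squared hedging error of the pure hedge (Theorem `errPureapprox`). -/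
theorem pure_hedge_error_expansion
    (μ c : ℝ) (hc : 0 ≤ c) (K : MeasureTheory.Measure ℝ)
    (hK0 : K {0} = 0)
    (hKmin : ∫⁻ x : ℝ, ENNReal.ofReal (min 1 (x ^ 2)) ∂K ≠ ⊤)
    (R : ℝ) (hR : R ≠ 0) (a b : ℝ)
    (h0 : (0 : ℝ) ∈ Set.Ioo a b) (h2 : (2 : ℝ) ∈ Set.Ioo a b)
    (h2R : 2 * R ∈ Set.Ioo a b)
    (hK5 : ∫⁻ x in {x : ℝ | 1 ≤ |x|}, ENNReal.ofReal (|x| ^ 5) ∂K ≠ ⊤)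
    (hKexp : ∀ s ∈ Set.Ioo a b,
      ∫⁻ x in {x : ℝ | 1 ≤ |x|}, ENNReal.ofReal (Real.exp (s * x)) ∂K ≠ ⊤)
    (σ2 : ℝ) (hσ2 : σ2 = c + ∫ x : ℝ, x ^ 2 ∂K) (hσ2pos : 0 < σ2)
    (σ m s3 s4 : ℝ) (hσ : σ = Real.sqrt σ2) (hm : m = (μ + σ2 / 2) / σ2)
    (hs3 : s3 = (∫ x : ℝ, x ^ 3 ∂K) / σ ^ 3) (hs4 : s4 = (∫ x : ℝ, x ^ 4 ∂K) / σ ^ 4)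
    (f : ℝ → ℝ) (hf : ContDiffOn ℝ (⊤ : ℕ∞) f (Set.Ioi 0))
    (l : ℝ → ℝ) (hl : l = fun x => f (Real.exp x) * Real.exp (-R * x))
    (hlint : ∀ n : ℕ, Integrable (iteratedDeriv n l))
    (T S₀ : ℝ) (hT : 0 < T) (hS₀ : 0 < S₀)
    (eps2 : ℝ → ℂ)
    (heps2 : ∀ lam : ℝ, eps2 lam =
      ∫ u : ℝ, ∫ v : ℝ, ∫ t in (0 : ℝ)..T,
        cpowR S₀ (zLine R u + zLine R v) *
          (kbar μ c K lam (zLine R u) (zLine R v) -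
            kbar μ c K lam (zLine R u) 1 * kbar μ c K lam (zLine R v) 1 /
              kbar μ c K lam 1 1) *
          Complex.exp (kappa μ c K lam (zLine R u + zLine R v) * (t : ℂ) +
            (etaLK μ c K lam (zLine R u) + etaLK μ c K lam (zLine R v)) *
              ((T : ℂ) - (t : ℂ))) *
          pCoef l u * pCoef l v) :
    ContDiffOn ℝ 2 eps2 (Set.Icc 0 1) ∧
    eps2 0 = 0 ∧
    iteratedDerivWithin 1 eps2 (Set.Icc 0 1) 0 = 0 ∧
    (1 / 2 : ℂ) * iteratedDerivWithin 2 eps2 (Set.Icc 0 1) 0 =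
      (1 / 4 : ℂ) * (σ : ℂ) ^ 4 * ((s4 : ℂ) - (s3 : ℂ) ^ 2) *
        ∫ t in (0 : ℝ)..T,
          ∫ x : ℝ, (cashGreek σ2 T R l 2 t (S₀ * Real.exp (μ * t + x))) ^ 2
            ∂(gaussianReal 0 (Real.toNNReal (σ2 * t))) := by
  have h : LK K a b := ⟨hKmin, h0, hKexp⟩
  have hsm : ContDiff ℝ (⊤ : ℕ∞) l := by rw [hl]; exact l_smooth hf R
  obtain ⟨a', b', m', I, ha, hb, g⟩ := setup h μ c R hc h2 h2R (hσ2 ▸ hσ2pos)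
  obtain ⟨F1, F2, tF, hF1, hF2⟩ := tame_F h μ c R hc ha hb g hσ2 hσ2pos hT S₀
  have hpm := (pCoef_integrable hsm hlint 0).1
  have hP : Measurable (fun q : XX => pCoef l q.1.1 * pCoef l q.1.2) :=
    (hpm.comp (measurable_fst.comp measurable_fst)).mul
      (hpm.comp (measurable_snd.comp measurable_fst))
  have hPint := integrable_MX hsm hlint T
  have z0 : (0:ℝ) ∈ I := g.h01 (by simp)
  have heps : ∀ k ∈ I, eps2 k =
      ∫ q, FF μ c K R T S₀ k q * (pCoef l q.1.1 * pCoef l q.1.2) ∂(MX T) := by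
    intro k hk
    rw [heps2, swap_int (tF.b0.integrable hP hPint hk (tF.m0 k hk))]
    congr 1; ext u; congr 1; ext v
    rw [intervalIntegral.integral_of_le hT.le]
    refine setIntegral_congr_fun measurableSet_Ioc fun t ht => ?_
    simp only [FF, AA, EE, tau_eq ht, Complex.ofReal_sub]
    ring
  obtain ⟨r1, r2, r3⟩ := c2_final g.hI g.h01 (e := eps2)
    (e1 := fun k => ∫ q, F1 k q * (pCoef l q.1.1 * pCoef l q.1.2) ∂(MX T))
    (e2 := fun k => ∫ q, F2 k q * (pCoef l q.1.1 * pCoef l q.1.2) ∂(MX T))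
    (fun k hk => (deriv_under g.hI hP hPint tF.d1 tF.m0 tF.m1 tF.b0 tF.b1 hk).congr_of_eventuallyEq
      (by filter_upwards [g.hI.mem_nhds hk] with j hj using heps j hj))
    (fun k hk => deriv_under g.hI hP hPint tF.d2 tF.m1 tF.m2 tF.b1 tF.b2 hk)
    (cont_under g.hI hP hPint tF.c2 tF.m2 tF.b2)
  refine ⟨r1, ?_, ?_, ?_⟩
  · rw [heps 0 z0]
    simp [FF, AA_zero μ c R hσ2 hσ2pos]
  · rw [r2]; simp [hF1]
  · rw [r3]
    have hi := tF.b2.integrable hP hPint z0 (tF.m2 0 z0)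
    rw [swap_int' hi, intervalIntegral.integral_of_le hT.le]
    rw [← integral_const_mul, ← integral_const_mul]
    refine setIntegral_congr_fun measurableSet_Ioc fun t ht => ?_
    rw [gauss_side hsm hlint μ R hσ2 hσ2pos hS₀ (Ioc_subset_Icc_self ht), ← integral_const_mul,
      ← integral_const_mul]
    congr 1; ext p
    simp only [hF2, EE, tau_eq ht, Complex.ofReal_sub]
    have s0 : (σ2:ℂ) ≠ 0 := by exact_mod_cast hσ2pos.ne'
    have hσp : 0 < σ := by rw [hσ]; exact Real.sqrt_pos.2 hσ2pos
    have hσs : σ ^ 2 = σ2 := by rw [hσ]; exact Real.sq_sqrt hσ2pos.le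
    have hσ0 : (σ:ℂ) ≠ 0 := by exact_mod_cast hσp.ne'
    have hσc : (σ2:ℂ) = (σ:ℂ) ^ 2 := by rw [← hσs]; push_cast; rfl
    have coef : (1/2 : ℂ) * (6 * G K 2 0 - 18 * G K 1 0 ^ 2 / σ2) =
        (1 / 4 : ℂ) * (σ : ℂ) ^ 4 * ((s4 : ℂ) - (s3 : ℂ) ^ 2) := by
      rw [G_at_zero h, G_at_zero h, wt_moment, wt_moment, hs3, hs4, hσc]
      push_cast
      norm_num
      field_simp
      ring
    rw [← coef]
    ring
end
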